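/- arXiv:1302.3751 — 7 statements merged into one kernel-verified Lean document; each statement's English description precedes it below -/
import Mathlib

section
/- Let n∈ℕ, s∈ℝ, 0<p≤∞, K≥0 and 0<L<N for some N∈ℕ. Let k:ℝⁿ→ℂ be a smooth compactly supported function with ∫_{ℝⁿ} x^β k(x) dx = 0 for every multi-index β with |β|<N, and set k_j(x)=2^{jn}k(2^{j}x) for j∈ℕ₀. Then there exist constants d>1 and C>0, independent of j, such that for every j∈ℕ₀ the function 2^{−j(s+n(1−1/p))}·k_j is an (s,p)_{K,L}-atom located at Q_{j,0}; in particular |∫_{ℝⁿ} ψ(x) k_j(x) dx| ≤ C·2^{−jL}·‖ψ|𝒞^L(ℝⁿ)‖ for all ψ∈𝒞^L(ℝⁿ) and all j∈ℕ₀. -/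
/-!
Undoing the dilation turns `2^{-j(s+n(1-1/p))} k_j` into `2^{-j(s-n/p)} k`, so the support and
smoothness conditions of an atom only say that `k` has bounded support and finite Hölder norm
(`holderNorm_lt_top`, `holderNorm_const_smul_le`).

For the moment condition let `m = ⌈L⌉ - 1`, so that `m < L ≤ m + 1` and `m < N`. After the change of
variables `y = 2^j x`, one has `∫ ψ k_j = ∫ ψ(2^{-j} y) k(y) dy`. The Taylor polynomial of `ψ` of
degree `m` at the origin integrates to zero against `k` (`moment_multilinear`), and the remainder is
at most `‖ψ‖ (2^{-j}|y|)^L` because the `m`-th derivative is Hölder of exponent `L - m`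
(`taylor_holder`). Hence `|∫ ψ k_j| ≤ 2^{-jL} ‖ψ‖ ∫ |y|^L |k(y)| dy`, which is `moment_bound`.
-/

open MeasureTheory ENNReal
open scoped Classical ENNReal NNReal

noncomputable section

/-- `ℝⁿ` as Euclidean space. -/
abbrev Euc (n : ℕ) := EuclideanSpace ℝ (Fin n)

/-- The Hölder norm `‖f | 𝒞ˢ(ℝⁿ)‖`, valued in `ℝ≥0∞`, with the convention
`s = ⌊s⌋ + {s}`, `⌊s⌋ ∈ ℤ`, `{s} ∈ (0,1]` (so `⌊s⌋ = ⌈s⌉ - 1`).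
For `s = 0` it is the sup-norm. -/
noncomputable def holderNorm (n : ℕ) {F : Type*} [NormedAddCommGroup F] [NormedSpace ℝ F]
    (s : ℝ) (f : Euc n → F) : ℝ≥0∞ :=
  if s = 0 then ⨆ x : Euc n, (‖f x‖₊ : ℝ≥0∞)
  else
    (∑ k ∈ Finset.range ⌈s⌉₊, ⨆ x : Euc n, (‖iteratedFDeriv ℝ k f x‖₊ : ℝ≥0∞)) +
      ⨆ q : Euc n × Euc n,
        if q.1 = q.2 then 0
        else (‖iteratedFDeriv ℝ (⌈s⌉₊ - 1) f q.1 - iteratedFDeriv ℝ (⌈s⌉₊ - 1) f q.2‖₊ : ℝ≥0∞) /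
          ENNReal.ofReal (‖q.1 - q.2‖ ^ (s - ((⌈s⌉₊ : ℝ) - 1)))

/-- The differentiability requirement for membership in `𝒞ˢ(ℝⁿ)`:
`⌊s⌋ = ⌈s⌉ - 1` times continuously differentiable for `s > 0`, continuous for `s = 0`. -/
def holderSmooth (n : ℕ) {F : Type*} [NormedAddCommGroup F] [NormedSpace ℝ F]
    (s : ℝ) (f : Euc n → F) : Prop :=
  (s = 0 → Continuous f) ∧ (s ≠ 0 → ContDiff ℝ ((⌈s⌉₊ - 1 : ℕ) : ℕ∞) f)

/-- Membership in the Hölder space `𝒞ˢ(ℝⁿ)` (bounded continuous functions for `s = 0`). -/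
def MemHolderSpace (n : ℕ) {F : Type*} [NormedAddCommGroup F] [NormedSpace ℝ F]
    (s : ℝ) (f : Euc n → F) : Prop :=
  holderSmooth n s f ∧ holderNorm n s f < ⊤

/-- Axis-parallel closed cube with a given center and side length. -/
def cube (n : ℕ) (center : Fin n → ℝ) (side : ℝ) : Set (Euc n) :=
  {x | ∀ i, |x i - center i| ≤ side / 2}

/-- `d·Q_{ν,m}`: the cube with center `2^{-ν} m` and side length `d·2^{-ν}`. -/
def cubeQ (n : ℕ) (ν : ℕ) (m : Fin n → ℤ) (d : ℝ) : Set (Euc n) :=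
  cube n (fun i => (2:ℝ) ^ (-(ν:ℤ)) * (m i : ℝ)) (d * (2:ℝ) ^ (-(ν:ℤ)))

/-- `a` is an `(s,p)_{K,L}`-atom located at `Q_{ν,m}`, with constants `d > 1`, `C > 0`.
Here `p ∈ (0,∞]` is encoded as an element of `ℝ≥0∞`, so that `1/p = (p⁻¹).toReal`. -/
def IsSpAtom (n : ℕ) (s : ℝ) (p : ℝ≥0∞) (K L d C : ℝ) (ν : ℕ) (m : Fin n → ℤ)
    (a : Euc n → ℂ) : Prop :=
  Function.support a ⊆ cubeQ n ν m d ∧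
  holderSmooth n K (fun x => a ((2:ℝ) ^ (-(ν:ℤ)) • x)) ∧
  holderNorm n K (fun x => a ((2:ℝ) ^ (-(ν:ℤ)) • x)) ≤
    ENNReal.ofReal (C * (2:ℝ) ^ (-(ν:ℝ) * (s - n * (p⁻¹).toReal))) ∧
  ∀ ψ : Euc n → ℂ, MemHolderSpace n L ψ →
    ‖∫ x, ψ x * a x‖ ≤
      C * (2:ℝ) ^ (-(ν:ℝ) * (s + L + n * (1 - (p⁻¹).toReal))) * (holderNorm n L ψ).toReal

/-! ### Taylor expansion with Hölder remainder -/

/-- One-dimensional Taylor estimate: if the `m`-th derivative deviates from its value at `0` by at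
most `B` on `[0,1]`, the degree-`m` Taylor polynomial at `0` approximates the function up to `B`. -/
lemma taylor_one_dim (B : ℝ) (m : ℕ) : ∀ g : ℝ → ℂ, ContDiff ℝ m g →
    (∀ t ∈ Set.Icc (0:ℝ) 1, ‖iteratedDeriv m g t - iteratedDeriv m g 0‖ ≤ B) →
    ∀ t ∈ Set.Icc (0:ℝ) 1,
      ‖g t - ∑ i ∈ Finset.range (m + 1), ((t ^ i / (i.factorial : ℝ) : ℝ) : ℂ) *
        iteratedDeriv i g 0‖ ≤ B := by
  induction m with
  | zero =>
    intro g _ h t ht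
    simpa using h t ht
  | succ m ih =>
    intro g hg h t ht
    have hg' : ContDiff ℝ m (deriv g) := ((contDiff_succ_iff_deriv (n := (m : ℕ∞))).1
      (by exact_mod_cast hg)).2.2
    have hgd : Differentiable ℝ g := hg.differentiable (by simp)
    have key := ih (deriv g) hg' (by
      intro t ht
      simpa [iteratedDeriv_succ'] using h t ht)
    have hB : 0 ≤ B := (norm_nonneg _).trans (h 0 (by simp))
    set F : ℝ → ℂ := fun t => g t - ∑ i ∈ Finset.range (m + 1 + 1),
      ((t ^ i / (i.factorial : ℝ) : ℝ) : ℂ) * iteratedDeriv i g 0 with hF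
    have hF0 : F 0 = 0 := by
      simp [hF, Finset.sum_range_succ']
    have hFd : ∀ x : ℝ, HasDerivAt F (deriv g x - ∑ i ∈ Finset.range (m + 1),
        ((x ^ i / (i.factorial : ℝ) : ℝ) : ℂ) * iteratedDeriv i (deriv g) 0) x := by
      intro x
      refine (hgd x).hasDerivAt.sub ?_
      have : ∀ i : ℕ, HasDerivAt (fun t : ℝ => ((t ^ (i+1) / ((i+1).factorial : ℝ) : ℝ) : ℂ) *
          iteratedDeriv (i+1) g 0)
          (((x ^ i / (i.factorial : ℝ) : ℝ) : ℂ) * iteratedDeriv i (deriv g) 0) x := by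
        intro i
        rw [← iteratedDeriv_succ']
        refine HasDerivAt.mul_const ?_ _
        refine HasDerivAt.ofReal_comp ?_
        have h1 := (hasDerivAt_pow (i+1) x).div_const ((i+1).factorial : ℝ)
        refine h1.congr_deriv ?_
        rw [Nat.factorial_succ]
        have := Nat.factorial_ne_zero i
        push_cast
        field_simp
      simp_rw [Finset.sum_range_succ' _ (m+1)]
      simpa using (HasDerivAt.fun_sum (fun i (_ : i ∈ Finset.range (m+1)) => this i)).add_const
        (((0:ℝ) : ℂ) + g 0)
    have h2 := (convex_Icc (0:ℝ) 1).norm_image_sub_le_of_norm_hasDerivWithin_le (f := F)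
      (fun x _ => (hFd x).hasDerivWithinAt) (fun x hx => key x hx)
      (show (0:ℝ) ∈ Set.Icc (0:ℝ) 1 by simp) ht
    rw [hF0, sub_zero, sub_zero] at h2
    refine h2.trans ?_
    rw [Real.norm_of_nonneg ht.1]
    nlinarith [ht.2]

lemma iteratedDeriv_line {n m : ℕ} (ψ : Euc n → ℂ) (hψ : ContDiff ℝ m ψ) (x : Euc n) (i : ℕ)
    (hi : i ≤ m) (t : ℝ) :
    iteratedDeriv i (fun t : ℝ => ψ (t • x)) t = iteratedFDeriv ℝ i ψ (t • x) (fun _ => x) := by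
  have h := ContinuousLinearMap.iteratedFDeriv_comp_right
    (ContinuousLinearMap.toSpanSingleton ℝ x) hψ t (i := i) (by exact_mod_cast hi)
  have : (fun t : ℝ => ψ (t • x)) = ψ ∘ (ContinuousLinearMap.toSpanSingleton ℝ x) := by
    ext t; simp
  rw [iteratedDeriv_eq_iteratedFDeriv, this, h]
  simp

/-- Taylor's theorem with a Hölder bound on the top derivative. -/
lemma taylor_holder {n m : ℕ} (ψ : Euc n → ℂ) (hψ : ContDiff ℝ m ψ) (H θ : ℝ) (hH : 0 ≤ H)
    (hθ : 0 ≤ θ)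
    (hh : ∀ x, ‖iteratedFDeriv ℝ m ψ x - iteratedFDeriv ℝ m ψ 0‖ ≤ H * ‖x‖ ^ θ) (x : Euc n) :
    ‖ψ x - ∑ i ∈ Finset.range (m + 1), (((i.factorial : ℝ)⁻¹ : ℝ) : ℂ) *
        iteratedFDeriv ℝ i ψ 0 (fun _ => x)‖ ≤ H * ‖x‖ ^ θ * ‖x‖ ^ m := by
  have h := taylor_one_dim (H * ‖x‖ ^ θ * ‖x‖ ^ m) m (fun t : ℝ => ψ (t • x))
    (hψ.comp (by fun_prop)) (by
      intro t ht
      rw [iteratedDeriv_line ψ hψ x m le_rfl, iteratedDeriv_line ψ hψ x m le_rfl, zero_smul,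
        ← sub_apply]
      refine (ContinuousMultilinearMap.le_opNorm _ _).trans ?_
      simp only [Finset.prod_const, Finset.card_univ, Fintype.card_fin]
      gcongr
      refine (hh _).trans ?_
      gcongr
      rw [norm_smul, Real.norm_of_nonneg ht.1]
      nlinarith [ht.2, norm_nonneg x]) 1 (by simp)
  convert h using 3
  · simp
  · refine Finset.sum_congr rfl fun i hi => ?_
    rw [iteratedDeriv_line ψ hψ x i (by simp at hi; omega)]
    simp

/-! ### Vanishing moments and the moment condition -/

/-- A homogeneous polynomial of degree `i < N`, given as the diagonal of a multilinear map, is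
annihilated by `k`; the map is expanded in the coordinate basis into monomials. -/
lemma moment_multilinear {n N : ℕ} (k : Euc n → ℂ) (hk : Continuous k) (hks : HasCompactSupport k)
    (hmom : ∀ β : Fin n → ℕ, (∑ i, β i) < N →
      ∫ x : Euc n, (∏ i, ((x i : ℝ) : ℂ) ^ β i) * k x = 0)
    (i : ℕ) (hi : i < N) (D : ContinuousMultilinearMap ℝ (fun _ : Fin i => Euc n) ℂ) :
    ∫ x : Euc n, D (fun _ => x) * k x = 0 := by
  let e : Fin n → Euc n := fun c => EuclideanSpace.single c 1
  have hD : ∀ x : Euc n, D (fun _ => x) * k x = ∑ r : Fin i → Fin n,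
      D (fun l => e (r l)) *
        ((∏ c, ((x c : ℝ) : ℂ) ^ (Finset.univ.filter (fun l => r l = c)).card) * k x) := by
    intro x
    have hx : x = ∑ c, x c • e c := by
      have := (EuclideanSpace.basisFun (Fin n) ℝ).sum_repr x
      simpa [e] using this.symm
    have h1 : D (fun _ => x) = ∑ r : Fin i → Fin n, D (fun l => x (r l) • e (r l)) := by
      conv_lhs => rw [hx]
      exact D.map_sum (fun _ c => x c • e c)
    rw [h1, Finset.sum_mul]
    refine Finset.sum_congr rfl fun r _ => ?_
    rw [D.map_smul_univ (fun l => x (r l)) (fun l => e (r l))]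
    have h2 : ∏ l, x (r l) = ∏ c, x c ^ (Finset.univ.filter (fun l => r l = c)).card := by
      rw [← Finset.prod_fiberwise_of_maps_to (s := Finset.univ) (t := Finset.univ) (g := r)
        (fun _ _ => Finset.mem_univ _)]
      refine Finset.prod_congr rfl fun c _ => ?_
      rw [← Finset.prod_const]
      refine Finset.prod_congr rfl fun l hl => ?_
      rw [(Finset.mem_filter.1 hl).2]
    rw [h2, Complex.real_smul]
    push_cast
    ring
  simp_rw [hD]
  rw [integral_finsetSum]
  · refine Finset.sum_eq_zero fun r _ => ?_
    rw [integral_const_mul, hmom, mul_zero]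
    refine lt_of_eq_of_lt ?_ hi
    rw [← Finset.card_eq_sum_card_fiberwise (fun _ _ => Finset.mem_univ _)]
    simp
  · intro r _
    refine Continuous.integrable_of_hasCompactSupport (by fun_prop) ?_
    exact hks.mul_left.mul_left

/-- Membership in the Hölder space, read as a real-valued Hölder estimate at the origin for the top
derivative. -/
lemma holder_bound {n : ℕ} {L : ℝ} (hL : 0 < L) (ψ : Euc n → ℂ) (hf : holderNorm n L ψ < ⊤)
    (x : Euc n) :
    ‖iteratedFDeriv ℝ (⌈L⌉₊ - 1) ψ x - iteratedFDeriv ℝ (⌈L⌉₊ - 1) ψ 0‖ ≤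
      (holderNorm n L ψ).toReal * ‖x‖ ^ (L - ((⌈L⌉₊ : ℝ) - 1)) := by
  by_cases hx : x = 0
  · subst hx
    simp only [sub_self, norm_zero]
    positivity
  have hpos : 0 < ‖x‖ ^ (L - ((⌈L⌉₊ : ℝ) - 1)) := Real.rpow_pos_of_pos (norm_pos_iff.2 hx) _
  have h1 : (‖iteratedFDeriv ℝ (⌈L⌉₊ - 1) ψ x - iteratedFDeriv ℝ (⌈L⌉₊ - 1) ψ 0‖₊ : ℝ≥0∞) /
      ENNReal.ofReal (‖x‖ ^ (L - ((⌈L⌉₊ : ℝ) - 1))) ≤ holderNorm n L ψ := by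
    unfold holderNorm
    rw [if_neg hL.ne']
    refine le_trans ?_ le_add_self
    refine le_trans ?_ (le_iSup _ ((x, 0) : Euc n × Euc n))
    simp [hx]
  rw [ENNReal.div_le_iff (by simpa using hpos) ENNReal.ofReal_ne_top] at h1
  have h2 := ENNReal.toReal_mono (ENNReal.mul_ne_top hf.ne ENNReal.ofReal_ne_top) h1
  simpa [ENNReal.toReal_mul, ENNReal.toReal_ofReal hpos.le] using h2

/-- The moment condition for the undamped dilates `k_j`, with the explicit constant
`∫ |y|^L |k(y)| dy`. -/
lemma moment_bound {n N : ℕ} {L : ℝ} (hL0 : 0 < L) (hLN : L < N)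
    (k : Euc n → ℂ) (hk : Continuous k) (hks : HasCompactSupport k)
    (hmom : ∀ β : Fin n → ℕ, (∑ i, β i) < N →
      ∫ x : Euc n, (∏ i, ((x i : ℝ) : ℂ) ^ β i) * k x = 0)
    (ψ : Euc n → ℂ) (hψ : MemHolderSpace n L ψ) (j : ℕ) :
    ‖∫ x : Euc n, ψ x * ((2:ℝ) ^ (j * n) • k ((2:ℝ) ^ j • x))‖ ≤
      (∫ x : Euc n, ‖x‖ ^ L * ‖k x‖) * (2:ℝ) ^ (-(j:ℝ) * L) * (holderNorm n L ψ).toReal := by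
  set H := (holderNorm n L ψ).toReal with hHdef
  set m := ⌈L⌉₊ - 1 with hm
  have hceil : 0 < ⌈L⌉₊ := Nat.ceil_pos.2 hL0
  have hm1 : m + 1 = ⌈L⌉₊ := by omega
  have hmr : (⌈L⌉₊ : ℝ) - 1 = m := by rw [← hm1]; push_cast; ring
  have hmN : m < N := by
    have : ⌈L⌉₊ ≤ N := Nat.ceil_le.2 hLN.le
    omega
  have hmL : (m : ℝ) < L := by
    rw [← hmr]; linarith [Nat.ceil_lt_add_one hL0.le]
  have hψc : ContDiff ℝ m ψ := by exact_mod_cast hψ.1.2 hL0.ne'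
  have hH : 0 ≤ H := ENNReal.toReal_nonneg
  have hT := taylor_holder ψ hψc H (L - m) hH (by linarith) (by
    intro x
    have := holder_bound hL0 ψ hψ.2 x
    rwa [hmr] at this)
  have hpow : ∀ x : Euc n, ‖x‖ ^ (L - m) * ‖x‖ ^ m = ‖x‖ ^ L := by
    intro x
    rw [← Real.rpow_natCast, ← Real.rpow_add_of_nonneg (norm_nonneg _) (by linarith) (by simp)]
    congr 1; ring
  -- the dilation `x = 2^{-j} y` moves the scaling from `k` to `ψ`
  set c : ℝ := ((2:ℝ) ^ j)⁻¹ with hc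
  have hc0 : 0 < c := by positivity
  have hchange : ∫ x : Euc n, ψ x * ((2:ℝ) ^ (j * n) • k ((2:ℝ) ^ j • x)) =
      ∫ y : Euc n, ψ (c • y) * k y := by
    have h1 := Measure.integral_comp_smul (volume : Measure (Euc n))
      (fun y => ψ (c • y) * k y) ((2:ℝ) ^ j)
    have h2 : ∀ x : Euc n, ψ x * ((2:ℝ) ^ (j * n) • k ((2:ℝ) ^ j • x)) =
        (2:ℝ) ^ (j * n) • (ψ (c • (2:ℝ) ^ j • x) * k ((2:ℝ) ^ j • x)) := by
      intro x
      rw [smul_smul, hc, inv_mul_cancel₀ (by positivity), one_smul, mul_smul_comm]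
    simp_rw [h2]
    rw [integral_smul, h1, smul_smul, finrank_euclideanSpace_fin, abs_of_pos (by positivity),
      ← pow_mul, mul_inv_cancel₀ (by positivity), one_smul]
  set P : Euc n → ℂ := fun x => ∑ i ∈ Finset.range (m + 1), (((i.factorial : ℝ)⁻¹ : ℝ) : ℂ) *
        iteratedFDeriv ℝ i ψ 0 (fun _ => x) with hP
  have hPterm : ∀ i, Continuous (fun y : Euc n => (((i.factorial : ℝ)⁻¹ : ℝ) : ℂ) *
        iteratedFDeriv ℝ i ψ 0 (fun _ => c • y)) := by
    intro i
    exact continuous_const.mul ((iteratedFDeriv ℝ i ψ 0).cont.comp (by fun_prop))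
  have hPc : Continuous (fun y => P (c • y)) := continuous_finsetSum _ (fun i _ => hPterm i)
  have hPint : ∫ y : Euc n, P (c • y) * k y = 0 := by
    simp_rw [hP, Finset.sum_mul]
    rw [integral_finsetSum]
    · refine Finset.sum_eq_zero fun i hi => ?_
      have h1 : ∀ y : Euc n, (((i.factorial : ℝ)⁻¹ : ℝ) : ℂ) *
          iteratedFDeriv ℝ i ψ 0 (fun _ => c • y) * k y =
          ((((i.factorial : ℝ)⁻¹ : ℝ) : ℂ) * ((c ^ i : ℝ) : ℂ)) *
            (iteratedFDeriv ℝ i ψ 0 (fun _ => y) * k y) := by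
        intro y
        rw [(iteratedFDeriv ℝ i ψ 0).map_smul_univ (fun _ => c) (fun _ => y)]
        simp
        ring
      simp_rw [h1]
      rw [integral_const_mul, moment_multilinear k hk hks hmom i
        (by simp at hi; omega), mul_zero]
    · intro i _
      exact Continuous.integrable_of_hasCompactSupport ((hPterm i).mul hk) hks.mul_left
  have hsub : ∫ y : Euc n, ψ (c • y) * k y = ∫ y : Euc n, (ψ (c • y) - P (c • y)) * k y := by
    have hi1 : Integrable (fun y : Euc n => ψ (c • y) * k y) :=
      Continuous.integrable_of_hasCompactSupport
        ((hψc.continuous.comp (by fun_prop)).mul hk) hks.mul_left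
    have hi2 : Integrable (fun y : Euc n => P (c • y) * k y) :=
      Continuous.integrable_of_hasCompactSupport (hPc.mul hk) hks.mul_left
    simp_rw [sub_mul]
    rw [integral_sub hi1 hi2, hPint, sub_zero]
  have hcL : c ^ L = (2:ℝ) ^ (-(j:ℝ) * L) := by
    rw [hc, Real.rpow_mul (by norm_num), Real.rpow_neg (by norm_num), Real.rpow_natCast]
  rw [hchange, hsub]
  have hi3 : Integrable (fun y : Euc n => ‖y‖ ^ L * ‖k y‖) :=
    Continuous.integrable_of_hasCompactSupport
      ((continuous_norm.rpow_const (fun _ => Or.inr hL0.le)).mul hk.norm) hks.norm.mul_left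
  calc ‖∫ y : Euc n, (ψ (c • y) - P (c • y)) * k y‖
      ≤ ∫ y : Euc n, (H * c ^ L) * (‖y‖ ^ L * ‖k y‖) := by
        refine norm_integral_le_of_norm_le (hi3.const_mul _) (Filter.Eventually.of_forall ?_)
        intro y
        rw [norm_mul]
        have := hT (c • y)
        rw [mul_assoc H, hpow, norm_smul, Real.norm_of_nonneg hc0.le,
          Real.mul_rpow hc0.le (norm_nonneg _)] at this
        calc _ ≤ (H * (c ^ L * ‖y‖ ^ L)) * ‖k y‖ := by gcongr
          _ = _ := by ring
    _ = _ := by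
        rw [integral_const_mul, hcL]; ring

/-! ### Hölder norms of test functions -/

/-- Only `≤` is recorded, since it is all that is needed; `k` is smooth so that derivatives commute
with the scalar. -/
lemma holderNorm_const_smul_le {n : ℕ} (K c : ℝ) (k : Euc n → ℂ) (hk : ContDiff ℝ (⊤ : ℕ∞) k) :
    holderNorm n K (fun x => c • k x) ≤ (‖c‖₊ : ℝ≥0∞) * holderNorm n K k := by
  have hd : ∀ i x, iteratedFDeriv ℝ i (fun x => c • k x) x = c • iteratedFDeriv ℝ i k x := by
    intro i x
    exact iteratedFDeriv_const_smul_apply' (hk.of_le (by exact_mod_cast le_top)).contDiffAt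
  unfold holderNorm
  split_ifs with h
  · simp [ENNReal.mul_iSup]
  · rw [mul_add, Finset.mul_sum]
    simp_rw [hd, nnnorm_smul, ENNReal.mul_iSup, ← smul_sub, nnnorm_smul]
    refine add_le_add (by simp) ?_
    refine iSup_mono fun q => ?_
    split_ifs
    · simp
    · rw [ENNReal.coe_mul, mul_div_assoc]

lemma holderNorm_lt_top {n : ℕ} (K : ℝ) (hK : 0 ≤ K) (k : Euc n → ℂ)
    (hk : ContDiff ℝ (⊤ : ℕ∞) k) (hks : HasCompactSupport k) : holderNorm n K k < ⊤ := by
  have hb : ∀ i, ∃ M : ℝ≥0, ∀ x, ‖iteratedFDeriv ℝ i k x‖₊ ≤ M := by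
    intro i
    obtain ⟨M, hM⟩ := (hks.iteratedFDeriv i).exists_bound_of_continuous
      (hk.continuous_iteratedFDeriv (by exact_mod_cast le_top))
    refine ⟨M.toNNReal, fun x => ?_⟩
    rw [← NNReal.coe_le_coe]
    exact (hM x).trans (Real.le_coe_toNNReal M)
  unfold holderNorm
  split_ifs with h
  · obtain ⟨M, hM⟩ := hks.exists_bound_of_continuous hk.continuous
    refine lt_of_le_of_lt (iSup_le fun x => ?_) (ENNReal.ofReal_lt_top (r := M))
    rw [← enorm_eq_nnnorm, ← ofReal_norm]
    exact ENNReal.ofReal_le_ofReal (hM x)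
  · have hK0 : 0 < K := lt_of_le_of_ne hK (Ne.symm h)
    refine ENNReal.add_lt_top.2 ⟨ENNReal.sum_lt_top.2 fun i _ => ?_, ?_⟩
    · obtain ⟨M, hM⟩ := hb i
      exact lt_of_le_of_lt (iSup_le fun x => ENNReal.coe_le_coe.2 (hM x)) ENNReal.coe_lt_top
    · set m := ⌈K⌉₊ - 1
      have hθ0 : 0 < K - ((⌈K⌉₊ : ℝ) - 1) := by linarith [Nat.ceil_lt_add_one hK]
      have hθ1 : K - ((⌈K⌉₊ : ℝ) - 1) ≤ 1 := by linarith [Nat.le_ceil K]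
      set θ := K - ((⌈K⌉₊ : ℝ) - 1)
      obtain ⟨M, hM⟩ := hb m
      have hsm : ContDiff ℝ 1 (iteratedFDeriv ℝ m k) :=
        hk.iteratedFDeriv_right (by exact_mod_cast le_top)
      obtain ⟨A, hA⟩ := hsm.lipschitzWith_of_hasCompactSupport (hks.iteratedFDeriv m) (by simp)
      refine lt_of_le_of_lt (iSup_le fun q => ?_) (ENNReal.ofReal_lt_top (r := A + 2 * M))
      split_ifs with hq
      · simp
      have hr : 0 < ‖q.1 - q.2‖ := norm_pos_iff.2 (sub_ne_zero.2 hq)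
      set r := ‖q.1 - q.2‖
      have hpos : 0 < r ^ θ := Real.rpow_pos_of_pos hr _
      rw [ENNReal.div_le_iff (by simpa using hpos) ENNReal.ofReal_ne_top, ← enorm_eq_nnnorm,
        ← ofReal_norm, ← ENNReal.ofReal_mul (by positivity)]
      refine ENNReal.ofReal_le_ofReal ?_
      -- the Lipschitz bound is used at distance at most one, the sup bound beyond
      rcases le_total r 1 with h1 | h1
      · have h2 : r ≤ r ^ θ := by
          simpa using Real.rpow_le_rpow_of_exponent_ge hr h1 hθ1
        have h3 := hA.norm_sub_le q.1 q.2
        have : (A : ℝ) * r ≤ A * r ^ θ := by gcongr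
        have : 0 ≤ 2 * (M : ℝ) * r ^ θ := by positivity
        linarith
      · have h2 : 1 ≤ r ^ θ := Real.one_le_rpow h1 hθ0.le
        have h3 := norm_sub_le (iteratedFDeriv ℝ m k q.1) (iteratedFDeriv ℝ m k q.2)
        have h4 : ‖iteratedFDeriv ℝ m k q.1‖ ≤ M := hM q.1
        have h5 : ‖iteratedFDeriv ℝ m k q.2‖ ≤ M := hM q.2
        have h6 : 2 * (M : ℝ) * 1 ≤ 2 * M * r ^ θ := by gcongr
        have : 0 ≤ (A : ℝ) * r ^ θ := by positivity
        linarith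

/-! ### Dilated kernels are atoms -/

/-- Local means as atoms: if `k` is smooth, compactly supported, with vanishing moments up
to order `N`, then `2^{-j(s+n(1-1/p))}·k_j` (where `k_j = 2^{jn} k(2^j ·)`) is an
`(s,p)_{K,L}`-atom located at `Q_{j,0}`, with constants independent of `j`; in particular
`|∫ ψ k_j| ≤ C 2^{-jL} ‖ψ|𝒞^L‖`. -/
theorem statement_0 (n : ℕ) (s : ℝ) (p : ℝ≥0∞) (hp : 0 < p) (K L : ℝ) (hK : 0 ≤ K)
    (N : ℕ) (hL0 : 0 < L) (hLN : L < N)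
    (k : Euc n → ℂ) (hk : ContDiff ℝ (⊤ : ℕ∞) k) (hks : HasCompactSupport k)
    (hmom : ∀ β : Fin n → ℕ, (∑ i, β i) < N →
      ∫ x : Euc n, (∏ i, ((x i : ℝ) : ℂ) ^ β i) * k x = 0) :
    ∃ d > (1:ℝ), ∃ C > (0:ℝ), ∀ j : ℕ,
      IsSpAtom n s p K L d C j 0 (fun x =>
        ((2:ℝ) ^ (-(j:ℝ) * (s + n * (1 - (p⁻¹).toReal)))) •
          ((2:ℝ) ^ (j * n) • k ((2:ℝ) ^ j • x))) ∧
      ∀ ψ : Euc n → ℂ, MemHolderSpace n L ψ →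
        ‖∫ x : Euc n, ψ x * ((2:ℝ) ^ (j * n) • k ((2:ℝ) ^ j • x))‖ ≤
          C * (2:ℝ) ^ (-(j:ℝ) * L) * (holderNorm n L ψ).toReal := by
  set I : ℝ := ∫ x : Euc n, ‖x‖ ^ L * ‖k x‖ with hI
  have hI0 : 0 ≤ I := integral_nonneg fun x => by positivity
  have hKtop := holderNorm_lt_top K hK k hk hks
  set T : ℝ := (holderNorm n K k).toReal with hT
  have hT0 : 0 ≤ T := ENNReal.toReal_nonneg
  obtain ⟨R, hR⟩ := hks.isBounded.exists_norm_le
  have hbound : ∀ (j : ℕ) (ψ : Euc n → ℂ), MemHolderSpace n L ψ →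
      ‖∫ x : Euc n, ψ x * ((2:ℝ) ^ (j * n) • k ((2:ℝ) ^ j • x))‖ ≤
        (I + T + 1) * (2:ℝ) ^ (-(j:ℝ) * L) * (holderNorm n L ψ).toReal := by
    intro j ψ hψ
    refine (moment_bound hL0 hLN k hk.continuous hks hmom ψ hψ j).trans ?_
    gcongr
    linarith
  -- rescaling the atom to unit size leaves a constant multiple of `k`
  have hresc : ∀ j : ℕ, (fun x : Euc n => ((2:ℝ) ^ (-(j:ℝ) * (s + n * (1 - (p⁻¹).toReal)))) •
      ((2:ℝ) ^ (j * n) • k ((2:ℝ) ^ j • ((2:ℝ) ^ (-(j:ℤ)) • x)))) =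
      fun x => ((2:ℝ) ^ (-(j:ℝ) * (s - n * (p⁻¹).toReal))) • k x := by
    intro j
    ext x
    rw [smul_smul ((2:ℝ) ^ j), zpow_neg, zpow_natCast, mul_inv_cancel₀ (by positivity), one_smul,
      smul_smul]
    congr 1
    rw [← Real.rpow_natCast, ← Real.rpow_add (by norm_num)]
    congr 1
    push_cast
    ring
  refine ⟨2 * |R| + 2, by linarith [abs_nonneg R], I + T + 1, by positivity,
    fun j => ⟨⟨?_, ?_, ?_, ?_⟩, hbound j⟩⟩
  · intro x hx
    have hkx : k ((2:ℝ) ^ j • x) ≠ 0 := by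
      intro h0
      simp [h0] at hx
    have h1 := hR _ (subset_tsupport k hkx)
    intro i
    rw [norm_smul, Real.norm_of_nonneg (by positivity)] at h1
    have h2 : |x i| ≤ ‖x‖ := by simpa using PiLp.norm_apply_le x i
    have h3 : (2:ℝ) ^ j * |x i| ≤ |R| + 1 := by
      have : (2:ℝ) ^ j * |x i| ≤ (2:ℝ) ^ j * ‖x‖ := by gcongr
      linarith [le_abs_self R]
    have h4 : |x i| ≤ (|R| + 1) * ((2:ℝ) ^ j)⁻¹ := by
      rw [← div_eq_mul_inv, le_div_iff₀ (by positivity)]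
      linarith
    simp only [Pi.zero_apply, Int.cast_zero, mul_zero, sub_zero, zpow_neg, zpow_natCast]
    linarith
  · rw [hresc j]
    have h1 : ContDiff ℝ (⊤ : ℕ∞)
        (fun x => ((2:ℝ) ^ (-(j:ℝ) * (s - n * (p⁻¹).toReal))) • k x) := hk.const_smul _
    exact ⟨fun _ => h1.continuous, fun _ => h1.of_le (by exact_mod_cast le_top)⟩
  · rw [hresc j]
    refine (holderNorm_const_smul_le K _ k hk).trans ?_
    have hpos : 0 < (2:ℝ) ^ (-(j:ℝ) * (s - n * (p⁻¹).toReal)) := by positivity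
    rw [← ENNReal.ofReal_toReal hKtop.ne, ← hT, ← enorm_eq_nnnorm, ← ofReal_norm,
      Real.norm_of_nonneg hpos.le, ← ENNReal.ofReal_mul hpos.le]
    refine ENNReal.ofReal_le_ofReal ?_
    nlinarith
  · intro ψ hψ
    simp_rw [mul_smul_comm _ (ψ _) (_ • k _)]
    rw [integral_smul, norm_smul, Real.norm_of_nonneg (by positivity)]
    calc _ ≤ (2:ℝ) ^ (-(j:ℝ) * (s + n * (1 - (p⁻¹).toReal))) *
          ((I + T + 1) * (2:ℝ) ^ (-(j:ℝ) * L) * (holderNorm n L ψ).toReal) := by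
          gcongr
          exact hbound j ψ hψ
      _ = (I + T + 1) * ((2:ℝ) ^ (-(j:ℝ) * (s + n * (1 - (p⁻¹).toReal))) *
          (2:ℝ) ^ (-(j:ℝ) * L)) * (holderNorm n L ψ).toReal := by ring
      _ = _ := by
          rw [← Real.rpow_add (by norm_num)]
          congr 3
          ring
end
end

section
/- Let n∈ℕ, s∈ℝ, 0<p≤∞, d>1, C>0, and let L>0 satisfy L>σ_p−s, where σ_p=n·max(1/p−1,0); set κ=s+L+n(1−1/p). For every ν∈ℕ₀ and m∈ℤⁿ let a_{ν,m}:ℝⁿ→ℂ be a bounded measurable function with supp a_{ν,m} ⊂ d·Q_{ν,m} satisfying |∫_{ℝⁿ} ψ(x)a_{ν,m}(x)dx| ≤ C·2^{−νκ}·‖ψ|𝒞^L(ℝⁿ)‖ for every ψ∈𝒞^L(ℝⁿ). Then for every Schwartz function φ∈𝒮(ℝⁿ) there is a constant c_φ>0, independent of the coefficients, such that Σ_{ν=0}^{∞} Σ_{m∈ℤⁿ} |λ_{ν,m}|·|∫_{ℝⁿ} a_{ν,m}(x)φ(x)dx| ≤ c_φ · sup_{ν∈ℕ₀} (Σ_{m∈ℤⁿ}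 |λ_{ν,m}|^p)^{1/p} for every complex sequence λ=(λ_{ν,m})_{ν∈ℕ₀,m∈ℤⁿ}; consequently, whenever the right-hand side is finite, the series Σ_{ν,m} λ_{ν,m} a_{ν,m} converges unconditionally in the space of tempered distributions 𝒮'(ℝⁿ). -/
/-!
Since `d · Q_{ν,m}` has side at most `d`, it lies in a ball of fixed radius around `2^{-ν} m`.
Hence `φ` may be multiplied by a translate of a fixed bump function before pairing it with
`a_{ν,m}`. The product has all derivatives bounded by a multiple of
`(1 + |2^{-ν} m|)^{-2n}` (`localized_decay`), so the moment condition gives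
`|∫ a_{ν,m} φ| ≤ B 2^{-νκ} w_ν(m)` with the weight `w_ν(m) = ∏ i, 1 / (1 + (2^{-ν} m_i)²)`
(`pairing_bound`).

On a fixed level `ν`, if `p ≤ 1` then `w_ν ≤ 1` and `ℓ^p ⊂ ℓ^1` leave the factor `2^{-νκ}`, and
`κ > 0`. If `p ≥ 1`, Hölder's inequality and `∑_m w_ν(m) ≤ c 2^{νn}` (`tsum_gridWeight`) give the
factor `2^{-νκ} 2^{νn(1-1/p)} = 2^{-ν(s+L)}`, and `s + L > 0` (`level_bound`). In both cases the
sum over `ν` is a convergent geometric series. Unconditional convergence follows from absolute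
summability of the pairings.
-/

open MeasureTheory ENNReal
open scoped Classical ENNReal NNReal

noncomputable section

section Auxiliary

open scoped ContDiff

/-! ### Sums over the dyadic grid and sequence-space inequalities -/

theorem tsum_pi_prod (f : ℤ → ℝ≥0∞) (n : ℕ) :
    ∑' m : Fin n → ℤ, ∏ i, f (m i) = (∑' k, f k) ^ n := by
  induction n with
  | zero => simp
  | succ n ih =>
    rw [← (Fin.consEquiv fun _ : Fin (n + 1) => ℤ).tsum_eq,
      ENNReal.tsum_prod (f := fun (k : ℤ) (m : Fin n → ℤ) =>
        ∏ i, f (Fin.consEquiv (fun _ : Fin (n + 1) => ℤ) (k, m) i))]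
    simp only [Fin.consEquiv_apply, Fin.prod_univ_succ, Fin.cons_zero, Fin.cons_succ,
      ENNReal.tsum_mul_left, ih, ENNReal.tsum_mul_right]
    rw [pow_succ']

theorem tsum_inv_one_add_sq_ne_top :
    ∑' j : ℤ, ENNReal.ofReal (1 + (j : ℝ) ^ 2)⁻¹ ≠ ⊤ := by
  have h : Summable fun j : ℤ => (1 + (j : ℝ) ^ 2)⁻¹ := by
    have h1 : Summable fun j : ℤ => 1 / (j : ℝ) ^ 2 := Real.summable_one_div_int_pow.2 (by norm_num)
    refine Summable.of_norm_bounded_eventually (g := fun j : ℤ => 1 / (j : ℝ) ^ 2) h1 ?_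
    rw [Filter.eventually_cofinite]
    refine (Set.finite_singleton (0 : ℤ)).subset fun j hj => ?_
    by_contra h0
    apply hj
    have h0' : (j : ℝ) ≠ 0 := by exact_mod_cast h0
    have : 0 < (j : ℝ) ^ 2 := by positivity
    rw [Real.norm_of_nonneg (by positivity), one_div]
    exact inv_anti₀ this (by linarith)
  exact h.tsum_ofReal_ne_top

/-- A Riemann-sum bound: sampling `1/(1+t²)` on the grid `2^{-ν}ℤ` costs a factor `2^ν`. -/
theorem tsum_grid_le (ν : ℕ) :
    ∑' k : ℤ, ENNReal.ofReal (1 + ((2 : ℝ) ^ (-(ν : ℤ)) * (k : ℝ)) ^ 2)⁻¹ ≤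
      2 ^ ν * (3 * ∑' j : ℤ, ENNReal.ofReal (1 + (j : ℝ) ^ 2)⁻¹) := by
  -- Write `k = 2^ν j + r` with `0 ≤ r < 2^ν`.
  have : NeZero (2 ^ ν : ℕ) := ⟨by positivity⟩
  rw [← (Int.divModEquiv (2 ^ ν)).symm.tsum_eq,
    ENNReal.tsum_prod (f := fun (j : ℤ) (r : Fin (2 ^ ν)) =>
      ENNReal.ofReal (1 + ((2 : ℝ) ^ (-(ν : ℤ)) *
        (((Int.divModEquiv (2 ^ ν)).symm (j, r) : ℤ) : ℝ)) ^ 2)⁻¹),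
    ← ENNReal.tsum_mul_left, ← ENNReal.tsum_mul_left]
  refine ENNReal.tsum_le_tsum fun j => ?_
  have key : ∀ r : Fin (2 ^ ν),
      ENNReal.ofReal (1 + ((2 : ℝ) ^ (-(ν : ℤ)) *
        (((Int.divModEquiv (2 ^ ν)).symm (j, r) : ℤ) : ℝ)) ^ 2)⁻¹ ≤
      3 * ENNReal.ofReal (1 + (j : ℝ) ^ 2)⁻¹ := by
    intro r
    have h3 : (3 : ℝ≥0∞) = ENNReal.ofReal 3 := by simp
    rw [h3, ← ENNReal.ofReal_mul (by norm_num)]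
    apply ENNReal.ofReal_le_ofReal
    have hr0 : (0 : ℝ) ≤ (r : ℕ) := by positivity
    have hr1 : ((r : ℕ) : ℝ) ≤ 2 ^ ν := by exact_mod_cast r.2.le
    have hM : (0 : ℝ) < 2 ^ ν := by positivity
    obtain ⟨t, ht⟩ : ∃ t : ℝ, t = (2 ^ ν : ℝ)⁻¹ * (r : ℕ) := ⟨_, rfl⟩
    have ht0 : 0 ≤ t := by rw [ht]; positivity
    have ht1 : t ≤ 1 := by
      rw [ht, inv_mul_le_iff₀ hM]; linarith
    have e : (2 : ℝ) ^ (-(ν : ℤ)) * (((Int.divModEquiv (2 ^ ν)).symm (j, r) : ℤ) : ℝ) =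
        j + t := by
      rw [Int.divModEquiv_symm_apply, ht]
      push_cast
      rw [zpow_neg, zpow_natCast]
      field_simp
    rw [e, ← div_eq_mul_inv, inv_eq_one_div, div_le_div_iff₀ (by positivity) (by positivity)]
    nlinarith [sq_nonneg ((j : ℝ) + 2 * t)]
  calc _ ≤ ∑' _ : Fin (2 ^ ν), 3 * ENNReal.ofReal (1 + (j : ℝ) ^ 2)⁻¹ :=
        ENNReal.tsum_le_tsum key
    _ = _ := by
        rw [tsum_fintype, Finset.sum_const, Finset.card_univ, Fintype.card_fin, nsmul_eq_mul]
        push_cast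
        rfl

/-- For `p ≤ 1` the inclusion `ℓ^p ⊂ ℓ^1` has norm one. -/
theorem tsum_enorm_le_eLpNorm_count {ι : Type*} [MeasurableSpace ι] [MeasurableSingletonClass ι]
    (f : ι → ℂ) {p : ℝ≥0∞} (hp : 0 < p) (hp1 : p ≤ 1) :
    ∑' i, ‖f i‖ₑ ≤ eLpNorm f p Measure.count := by
  have hpt : p ≠ ⊤ := ne_top_of_le_ne_top one_ne_top hp1
  have hr0 : 0 < p.toReal := ENNReal.toReal_pos hp.ne' hpt
  have hr1 : p.toReal ≤ 1 := by simpa using ENNReal.toReal_mono one_ne_top hp1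
  set r := p.toReal
  have hE : eLpNorm f p Measure.count = (∑' i, ‖f i‖ₑ ^ r) ^ (1 / r) := by
    rw [eLpNorm_eq_lintegral_rpow_enorm_toReal hp.ne' hpt, lintegral_count]
  have hpt : ∀ i, ‖f i‖ₑ ≤ eLpNorm f p Measure.count := fun i =>
    enorm_le_eLpNorm_count f i hp.ne'
  have hS : ∑' i, ‖f i‖ₑ ^ r = eLpNorm f p Measure.count ^ r := by
    rw [hE, ← ENNReal.rpow_mul, one_div, inv_mul_cancel₀ hr0.ne', ENNReal.rpow_one]
  set E := eLpNorm f p Measure.count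
  calc ∑' i, ‖f i‖ₑ ≤ ∑' i, ‖f i‖ₑ ^ r * E ^ (1 - r) := by
        refine ENNReal.tsum_le_tsum fun i => ?_
        calc ‖f i‖ₑ = ‖f i‖ₑ ^ (r + (1 - r)) := by simp
          _ = ‖f i‖ₑ ^ r * ‖f i‖ₑ ^ (1 - r) :=
            ENNReal.rpow_add_of_nonneg _ _ hr0.le (by linarith)
          _ ≤ _ := by
            gcongr
            exact hpt i
    _ = E ^ r * E ^ (1 - r) := by rw [ENNReal.tsum_mul_right, hS]
    _ = E := by
        rw [← ENNReal.rpow_add_of_nonneg _ _ hr0.le (by linarith)]; simp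

/-- Hölder's inequality for `p ≥ 1` with a weight `w ≤ 1`, in the form
`∑ |f| w ≤ ‖f‖_p (∑ w)^{1 - 1/p}`; this is the comparison of `L¹` and `L^p` norms for the
finite measure with density `w`. -/
theorem tsum_enorm_mul_le {ι : Type*} [MeasurableSpace ι] [MeasurableSingletonClass ι]
    [DiscreteMeasurableSpace ι] [Countable ι]
    (f : ι → ℂ) (w : ι → ℝ≥0∞) (hw : ∀ i, w i ≤ 1) {p : ℝ≥0∞} (hp : 1 ≤ p) :
    ∑' i, ‖f i‖ₑ * w i ≤
      eLpNorm f p Measure.count * (∑' i, w i) ^ (1 - (p⁻¹).toReal) := by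
  set μ : Measure ι := Measure.count.withDensity w
  have hμ : μ ≤ Measure.count := by
    calc μ ≤ Measure.count.withDensity 1 :=
          withDensity_mono (Filter.Eventually.of_forall hw)
      _ = _ := withDensity_one
  have h1 : ∑' i, ‖f i‖ₑ * w i = eLpNorm f 1 μ := by
    rw [eLpNorm_one_eq_lintegral_enorm, lintegral_withDensity_eq_lintegral_mul _
      (measurable_of_countable w) (measurable_of_countable _), lintegral_count]
    simp [mul_comm]
  have h2 : μ Set.univ = ∑' i, w i := by
    rw [withDensity_apply _ MeasurableSet.univ, Measure.restrict_univ, lintegral_count]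
  have h3 := eLpNorm_le_eLpNorm_mul_rpow_measure_univ (μ := μ) (f := f) hp
    (measurable_of_countable f).aestronglyMeasurable
  rw [h1, ← h2]
  refine h3.trans ?_
  rw [ENNReal.toReal_one, ENNReal.toReal_inv, div_one, one_div]
  gcongr

/-! ### Testing the moment condition on localized Schwartz functions -/

/-- A smooth function whose derivatives of order `≤ ⌈L⌉` are bounded by `B` has Hölder norm of
order `L` at most a multiple of `B`. -/
theorem holder_of_bound (n : ℕ) (L : ℝ) (hL : 0 < L) (f : Euc n → ℂ) (hf : ContDiff ℝ ∞ f)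
    (B : ℝ) (hB : ∀ k ≤ ⌈L⌉₊, ∀ x, ‖iteratedFDeriv ℝ k f x‖ ≤ B) :
    MemHolderSpace n L f ∧ (holderNorm n L f).toReal ≤ (⌈L⌉₊ + 2) * B := by
  have hB0 : 0 ≤ B := (norm_nonneg _).trans (hB 0 (Nat.zero_le _) 0)
  obtain ⟨K, hK⟩ : ∃ K, ⌈L⌉₊ = K + 1 :=
    Nat.exists_eq_succ_of_ne_zero (Nat.ceil_pos.2 hL).ne'
  have hKL : (K : ℝ) < L := Nat.lt_ceil.1 (by omega)
  have hLK : L ≤ K + 1 := by simpa [hK] using Nat.le_ceil L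
  have hbound : holderNorm n L f ≤ ENNReal.ofReal ((⌈L⌉₊ + 2) * B) := by
    rw [holderNorm, if_neg hL.ne', hK]
    have e : ENNReal.ofReal (((K + 1 : ℕ) + 2) * B) =
        (∑ _k ∈ Finset.range (K + 1), ENNReal.ofReal B) + ENNReal.ofReal (2 * B) := by
      rw [Finset.sum_const, Finset.card_range, nsmul_eq_mul, add_mul,
        ENNReal.ofReal_add (by positivity) (by positivity), ENNReal.ofReal_mul (by positivity),
        ENNReal.ofReal_natCast]
    rw [e]
    gcongr with k hk
    · refine iSup_le fun x => ?_
      rw [← enorm_eq_nnnorm, ← ofReal_norm]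
      apply ENNReal.ofReal_le_ofReal
      exact hB k (by rw [hK]; exact (Finset.mem_range.1 hk).le) x
    · refine iSup_le fun q => ?_
      split_ifs with hq
      · simp
      have hpos : 0 < ‖q.1 - q.2‖ := norm_pos_iff.2 (sub_ne_zero.2 hq)
      have hθ : L - (((K + 1 : ℕ) : ℝ) - 1) = L - K := by push_cast; ring
      rw [hθ]
      have hθp : 0 < ‖q.1 - q.2‖ ^ (L - K) := Real.rpow_pos_of_pos hpos _
      rw [← enorm_eq_nnnorm, ← ofReal_norm, ← ENNReal.ofReal_div_of_pos hθp]
      apply ENNReal.ofReal_le_ofReal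
      rw [div_le_iff₀ hθp]
      rcases le_total 1 ‖q.1 - q.2‖ with h1 | h1
      · have h2 : 1 ≤ ‖q.1 - q.2‖ ^ (L - K) := Real.one_le_rpow h1 (by linarith)
        calc _ ≤ ‖iteratedFDeriv ℝ K f q.1‖ + ‖iteratedFDeriv ℝ K f q.2‖ := norm_sub_le _ _
          _ ≤ B + B := add_le_add (hB K (by omega) _) (hB K (by omega) _)
          _ = 2 * B * 1 := by ring
          _ ≤ _ := by gcongr
      · have h2 : ‖q.1 - q.2‖ ≤ ‖q.1 - q.2‖ ^ (L - K) := by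
          simpa using Real.rpow_le_rpow_of_exponent_ge hpos h1 (by linarith : L - K ≤ 1)
        have h3 := Convex.norm_image_sub_le_of_norm_fderiv_le (𝕜 := ℝ) (s := Set.univ)
          (f := iteratedFDeriv ℝ K f) (C := B) (x := q.2) (y := q.1)
          (fun x _ => (hf.differentiable_iteratedFDeriv (m := K)
            (by exact_mod_cast ENat.natCast_lt_top K)) x)
          (fun x _ => by rw [norm_fderiv_iteratedFDeriv]; exact hB (K + 1) hK.ge x)
          convex_univ trivial trivial
        calc _ ≤ B * ‖q.1 - q.2‖ := h3
          _ ≤ 2 * B * ‖q.1 - q.2‖ ^ (L - K) := by gcongr; linarith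
  refine ⟨⟨⟨fun h => absurd h hL.ne', fun _ => hf.of_le (by exact_mod_cast le_top)⟩,
    hbound.trans_lt ENNReal.ofReal_lt_top⟩, ?_⟩
  calc _ ≤ (ENNReal.ofReal ((⌈L⌉₊ + 2) * B)).toReal :=
        ENNReal.toReal_mono ENNReal.ofReal_ne_top hbound
    _ = _ := ENNReal.toReal_ofReal (by positivity)

/-- Localizing a Schwartz function near `y` by translates of a fixed Schwartz function makes all
derivatives decay rapidly in `y`, by Leibniz' rule and `1 + ‖y‖ ≤ (1 + ‖x‖) (1 + ‖x - y‖)`. -/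
theorem localized_decay (n : ℕ) (φ η : SchwartzMap (Euc n) ℂ) (N K : ℕ) :
    ∃ A : ℝ, 0 ≤ A ∧ ∀ y : Euc n, ∀ k ≤ K, ∀ x,
      ‖iteratedFDeriv ℝ k (fun x => φ x * η (x - y)) x‖ ≤ A * ((1 + ‖y‖) ^ N)⁻¹ := by
  have hS : ∀ f : SchwartzMap (Euc n) ℂ, ∃ A : ℝ, 0 ≤ A ∧ ∀ k ≤ K, ∀ x,
      (1 + ‖x‖) ^ N * ‖iteratedFDeriv ℝ k f x‖ ≤ A := fun f =>
    ⟨2 ^ N * (Finset.Iic (N, K)).sup (fun m => SchwartzMap.seminorm ℝ m.1 m.2) f,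
      by positivity, fun k hk x =>
        SchwartzMap.one_add_le_sup_seminorm_apply (𝕜 := ℝ) (m := (N, K)) le_rfl hk f x⟩
  obtain ⟨A₁, hA₁, h₁⟩ := hS φ
  obtain ⟨A₂, hA₂, h₂⟩ := hS η
  refine ⟨2 ^ K * (A₁ * A₂), by positivity, fun y k hk x => ?_⟩
  have hη : ContDiff ℝ ∞ fun x => η (x - y) := (η.smooth ⊤).comp (contDiff_id.sub contDiff_const)
  have hL := norm_iteratedFDeriv_mul_le (φ.smooth ⊤) hη x (n := k)
    (by exact_mod_cast (ENat.natCast_lt_top k).le)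
  rw [← div_eq_mul_inv, le_div_iff₀ (by positivity)]
  have hy : 1 + ‖y‖ ≤ (1 + ‖x‖) * (1 + ‖x - y‖) := by
    have : ‖y‖ ≤ ‖x‖ + ‖x - y‖ := by
      calc ‖y‖ = ‖x - (x - y)‖ := by congr 1; abel
        _ ≤ _ := norm_sub_le _ _
    nlinarith [norm_nonneg x, norm_nonneg (x - y), mul_nonneg (norm_nonneg x) (norm_nonneg (x - y))]
  calc _ ≤ (∑ i ∈ Finset.range (k + 1), (k.choose i : ℝ) * ‖iteratedFDeriv ℝ i φ x‖ *
          ‖iteratedFDeriv ℝ (k - i) (fun x => η (x - y)) x‖) *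
          ((1 + ‖x‖) * (1 + ‖x - y‖)) ^ N := by gcongr
    _ ≤ ∑ i ∈ Finset.range (k + 1), (k.choose i : ℝ) * (A₁ * A₂) := by
        rw [Finset.sum_mul]
        refine Finset.sum_le_sum fun i hi => ?_
        have hi' : i ≤ k := Nat.lt_succ_iff.1 (Finset.mem_range.1 hi)
        rw [iteratedFDeriv_comp_sub]
        calc _ = (k.choose i : ℝ) * (((1 + ‖x‖) ^ N * ‖iteratedFDeriv ℝ i φ x‖) *
              ((1 + ‖x - y‖) ^ N * ‖iteratedFDeriv ℝ (k - i) η (x - y)‖)) := by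
              rw [mul_pow]; ring
          _ ≤ _ := by
              gcongr
              · exact h₁ i (hi'.trans hk) x
              · exact h₂ (k - i) ((Nat.sub_le _ _).trans hk) (x - y)
    _ = 2 ^ k * (A₁ * A₂) := by
        rw [← Finset.sum_mul, ← Nat.cast_sum, Nat.sum_range_choose]; push_cast; rfl
    _ ≤ _ := by gcongr; norm_num

/-- The center `2^{-ν} m` of the cube `Q_{ν,m}`. -/
def gridPoint (n ν : ℕ) (m : Fin n → ℤ) : Euc n :=
  WithLp.toLp 2 fun i => (2 : ℝ) ^ (-(ν : ℤ)) * (m i : ℝ)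

/-- A weight of product type on the grid `2^{-ν} ℤⁿ`, decaying away from the origin. -/
def gridWeight (n ν : ℕ) (m : Fin n → ℤ) : ℝ :=
  ∏ i, (1 + ((2 : ℝ) ^ (-(ν : ℤ)) * (m i : ℝ)) ^ 2)⁻¹

theorem gridWeight_nonneg (n ν : ℕ) (m : Fin n → ℤ) : 0 ≤ gridWeight n ν m :=
  Finset.prod_nonneg fun _ _ => by positivity

theorem gridWeight_le_one (n ν : ℕ) (m : Fin n → ℤ) : gridWeight n ν m ≤ 1 := by
  refine Finset.prod_le_one (fun _ _ => by positivity) fun i _ => inv_le_one_of_one_le₀ ?_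
  nlinarith [sq_nonneg ((2 : ℝ) ^ (-(ν : ℤ)) * (m i : ℝ))]

theorem inv_pow_le_gridWeight (n ν : ℕ) (m : Fin n → ℤ) :
    ((1 + ‖gridPoint n ν m‖) ^ (2 * n))⁻¹ ≤ gridWeight n ν m := by
  unfold gridWeight
  rw [Finset.prod_inv_distrib]
  apply inv_anti₀ (Finset.prod_pos fun _ _ => by positivity)
  calc ∏ i, (1 + ((2 : ℝ) ^ (-(ν : ℤ)) * (m i : ℝ)) ^ 2)
      ≤ ∏ _i : Fin n, (1 + ‖gridPoint n ν m‖) ^ 2 := by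
        refine Finset.prod_le_prod (fun _ _ => by positivity) fun i _ => ?_
        have h := PiLp.norm_apply_le (gridPoint n ν m) i
        have h' : ‖gridPoint n ν m i‖ ^ 2 = ((2 : ℝ) ^ (-(ν : ℤ)) * (m i : ℝ)) ^ 2 := by
          rw [Real.norm_eq_abs, sq_abs]; rfl
        rw [← h']
        nlinarith [norm_nonneg (gridPoint n ν m i)]
    _ = _ := by simp [pow_mul]

theorem tsum_gridWeight (n ν : ℕ) :
    ∑' m : Fin n → ℤ, ENNReal.ofReal (gridWeight n ν m) ≤
      (2 ^ ν * (3 * ∑' j : ℤ, ENNReal.ofReal (1 + (j : ℝ) ^ 2)⁻¹)) ^ n := by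
  have : ∀ m : Fin n → ℤ, ENNReal.ofReal (gridWeight n ν m) =
      ∏ i, ENNReal.ofReal (1 + ((2 : ℝ) ^ (-(ν : ℤ)) * (m i : ℝ)) ^ 2)⁻¹ := fun m =>
    ENNReal.ofReal_prod_of_nonneg fun _ _ => by positivity
  simp_rw [this]
  rw [tsum_pi_prod fun k : ℤ => ENNReal.ofReal (1 + ((2 : ℝ) ^ (-(ν : ℤ)) * (k : ℝ)) ^ 2)⁻¹]
  gcongr
  exact tsum_grid_le ν

/-- Single-pairing estimate: the moment condition, tested on `φ` cut off near `Q_{ν,m}`, gives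
the factor `2^{-νκ}` together with decay in the position `2^{-ν} m`. -/
theorem pairing_bound (n : ℕ) (d C L κ : ℝ) (hd : 1 < d) (hC : 0 < C) (hL : 0 < L)
    (a : ℕ → (Fin n → ℤ) → Euc n → ℂ)
    (hsupp : ∀ ν m, Function.support (a ν m) ⊆ cubeQ n ν m d)
    (hmom : ∀ ν m, ∀ ψ : Euc n → ℂ, MemHolderSpace n L ψ →
      ‖∫ x, ψ x * a ν m x‖ ≤ C * (2:ℝ) ^ (-(ν:ℝ) * κ) * (holderNorm n L ψ).toReal)
    (φ : SchwartzMap (Euc n) ℂ) :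
    ∃ B : ℝ, 0 < B ∧ ∀ ν m, ‖∫ x, a ν m x * φ x‖ ≤
      B * (2:ℝ) ^ (-(ν:ℝ) * κ) * gridWeight n ν m := by
  -- `η` equals `1` on a ball containing every cube `d Q_{ν,m}` translated to the origin.
  let b : ContDiffBump (0 : Euc n) := ⟨n * d + 1, n * d + 2, by positivity, by linarith⟩
  have hcs : HasCompactSupport fun x => ((b x : ℝ) : ℂ) :=
    b.hasCompactSupport.comp_left (g := fun t : ℝ => (t : ℂ)) (by simp)
  have hsm : ContDiff ℝ ∞ fun x => ((b x : ℝ) : ℂ) :=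
    Complex.ofRealCLM.contDiff.comp b.contDiff
  let η : SchwartzMap (Euc n) ℂ := hcs.toSchwartzMap hsm
  have hη : ∀ x, η x = ((b x : ℝ) : ℂ) := fun x => rfl
  obtain ⟨A, hA, hdec⟩ := localized_decay n φ η (2 * n) ⌈L⌉₊
  refine ⟨C * ((⌈L⌉₊ + 2) * (A + 1)), by positivity, fun ν m => ?_⟩
  set y := gridPoint n ν m
  set ψ : Euc n → ℂ := fun x => φ x * η (x - y)
  have hψ : ContDiff ℝ ∞ ψ :=
    (φ.smooth ⊤).mul ((η.smooth ⊤).comp (contDiff_id.sub contDiff_const))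
  obtain ⟨hmem, hnorm⟩ := holder_of_bound n L hL ψ hψ _ (hdec y)
  have heq : ∫ x, a ν m x * φ x = ∫ x, ψ x * a ν m x := by
    congr 1
    funext x
    by_cases hx : a ν m x = 0
    · simp [hx]
    have hxc : x ∈ cubeQ n ν m d := hsupp ν m hx
    have h2 : (2 : ℝ) ^ (-(ν : ℤ)) ≤ 1 := zpow_le_one_of_nonpos₀ (by norm_num) (by simp)
    have h1 : η (x - y) = 1 := by
      rw [hη, b.one_of_mem_closedBall, Complex.ofReal_one]
      rw [mem_closedBall_zero_iff]
      change ‖x - y‖ ≤ n * d + 1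
      have hc : ∀ i, ‖(x - y) i‖ ≤ d := fun i => by
        have h3 : |x i - (2 : ℝ) ^ (-(ν : ℤ)) * (m i : ℝ)| ≤ d * (2 : ℝ) ^ (-(ν : ℤ)) / 2 := hxc i
        calc ‖(x - y) i‖ = |x i - (2 : ℝ) ^ (-(ν : ℤ)) * (m i : ℝ)| := rfl
          _ ≤ _ := h3
          _ ≤ d := by nlinarith
      have hsq : ‖x - y‖ ^ 2 ≤ n * d ^ 2 := by
        rw [EuclideanSpace.norm_sq_eq]
        calc _ ≤ ∑ _i : Fin n, d ^ 2 := by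
              refine Finset.sum_le_sum fun i _ => ?_
              gcongr
              exact hc i
          _ = _ := by simp
      have hn : (0 : ℝ) ≤ n * d := by positivity
      have hnn : (n : ℝ) * d ^ 2 ≤ (n * d) ^ 2 := by
        rw [mul_pow]
        gcongr
        exact_mod_cast Nat.le_self_pow two_ne_zero n
      have := abs_le_of_sq_le_sq (hsq.trans hnn) hn
      linarith [le_abs_self ‖x - y‖]
    simp only [ψ, h1]
    ring
  rw [heq]
  refine (hmom ν m ψ hmem).trans ?_
  have hw := inv_pow_le_gridWeight n ν m
  calc C * (2:ℝ) ^ (-(ν:ℝ) * κ) * (holderNorm n L ψ).toReal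
      ≤ C * (2:ℝ) ^ (-(ν:ℝ) * κ) * ((⌈L⌉₊ + 2) * ((A + 1) * gridWeight n ν m)) := by
        gcongr
        refine hnorm.trans ?_
        gcongr
        linarith
    _ = _ := by ring

/-! ### Summation over one level -/

/-- Summation over one level `ν`. For `p ≤ 1` the embedding `ℓ^p ⊂ ℓ^1` suffices and the decay
rate is `κ` itself; for `p ≥ 1` Hölder's inequality costs `2^{νn(1-1/p)}`, leaving `s + L`. Both
rates are positive because `L > σ_p - s`. -/
theorem level_bound (n : ℕ) (s : ℝ) (p : ℝ≥0∞) (hp : 0 < p) (L : ℝ)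
    (hLs : n * max ((p⁻¹).toReal - 1) 0 - s < L) :
    ∃ T : ℝ≥0∞, T ≠ ⊤ ∧ ∃ δ : ℝ, 0 < δ ∧ ∀ (ν : ℕ) (f : (Fin n → ℤ) → ℂ),
      ENNReal.ofReal ((2:ℝ) ^ (-(ν:ℝ) * (s + L + n * (1 - (p⁻¹).toReal)))) *
        ∑' m, ‖f m‖ₑ * ENNReal.ofReal (gridWeight n ν m) ≤
      T * ENNReal.ofReal ((2:ℝ) ^ (-δ)) ^ ν * eLpNorm f p Measure.count := by
  set q := (p⁻¹).toReal with hq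
  have hpow : ∀ (δ : ℝ) (ν : ℕ),
      ENNReal.ofReal ((2:ℝ) ^ (-δ)) ^ ν = ENNReal.ofReal ((2:ℝ) ^ (-(ν:ℝ) * δ)) := by
    intro δ ν
    rw [← ENNReal.ofReal_pow (by positivity), ← Real.rpow_natCast, ← Real.rpow_mul (by norm_num)]
    congr 2
    ring
  have hw : ∀ ν m, ENNReal.ofReal (gridWeight n ν m) ≤ 1 := fun ν m => by
    simpa using ENNReal.ofReal_le_ofReal (gridWeight_le_one n ν m)
  rcases le_total p 1 with hp1 | hp1
  · refine ⟨1, one_ne_top, s + L + n * (1 - q), ?_, fun ν f => ?_⟩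
    · have : (n : ℝ) * (q - 1) ≤ n * max (q - 1) 0 := by gcongr; exact le_max_left _ _
      linarith
    · rw [one_mul, hpow]
      gcongr
      refine le_trans ?_ (tsum_enorm_le_eLpNorm_count f hp hp1)
      exact ENNReal.tsum_le_tsum fun m => mul_le_of_le_one_right' (hw ν m)
  · set S : ℝ≥0∞ := ∑' j : ℤ, ENNReal.ofReal (1 + (j : ℝ) ^ 2)⁻¹
    have hq1 : 0 ≤ 1 - q := by
      have : q ≤ 1 := by
        simpa [hq] using ENNReal.toReal_mono one_ne_top (ENNReal.inv_le_one.2 hp1)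
      linarith
    refine ⟨((3 * S) ^ n) ^ (1 - q), ?_, s + L, ?_, fun ν f => ?_⟩
    · exact ENNReal.rpow_ne_top_of_nonneg hq1
        (ENNReal.pow_ne_top (ENNReal.mul_ne_top (by simp) tsum_inv_one_add_sq_ne_top))
    · have : (0 : ℝ) ≤ n * max (q - 1) 0 := by positivity
      linarith
    · have h1 := tsum_enorm_mul_le f (fun m => ENNReal.ofReal (gridWeight n ν m)) (hw ν) hp1
      rw [← hq] at h1
      have h2 : (∑' m : Fin n → ℤ, ENNReal.ofReal (gridWeight n ν m)) ^ (1 - q) ≤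
          ((2 ^ ν * (3 * S)) ^ n) ^ (1 - q) :=
        ENNReal.rpow_le_rpow (tsum_gridWeight n ν) hq1
      have h3 : ENNReal.ofReal ((2:ℝ) ^ (-(ν:ℝ) * (s + L + n * (1 - q)))) *
          ((2 ^ ν : ℝ≥0∞) ^ n) ^ (1 - q) = ENNReal.ofReal ((2:ℝ) ^ (-(ν:ℝ) * (s + L))) := by
        have e : ((2 ^ ν : ℝ≥0∞) ^ n) ^ (1 - q) =
            ENNReal.ofReal ((2:ℝ) ^ ((ν : ℝ) * n * (1 - q))) := by
          rw [Real.rpow_mul (by norm_num), Real.rpow_mul (by norm_num), Real.rpow_natCast,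
            Real.rpow_natCast, ← ENNReal.ofReal_rpow_of_pos (by positivity),
            ENNReal.ofReal_pow (by positivity), ENNReal.ofReal_pow (by positivity)]
          simp
        rw [e, ← ENNReal.ofReal_mul (by positivity), ← Real.rpow_add (by norm_num)]
        congr 2
        ring
      rw [hpow, ← h3]
      calc _ ≤ ENNReal.ofReal ((2:ℝ) ^ (-(ν:ℝ) * (s + L + n * (1 - q)))) *
            (eLpNorm f p Measure.count * ((2 ^ ν * (3 * S)) ^ n) ^ (1 - q)) := by
            gcongr
            exact h1.trans (by gcongr)
        _ = _ := by
            rw [mul_pow, ENNReal.mul_rpow_of_nonneg _ _ hq1]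
            ring

end Auxiliary

/-- Convergence of atomic series in `𝒮'(ℝⁿ)`: for atoms (only support, boundedness and the
general moment condition are used) and coefficients `λ` with finite `b_{p,∞}`-norm
`sup_ν (Σ_m |λ_{ν,m}|^p)^{1/p}`, the pairings with any Schwartz function are absolutely
bounded by that norm, and the atomic series converges unconditionally in `𝒮'(ℝⁿ)`
(i.e. the family of pairings is summable for every test function). -/
theorem statement_2 (n : ℕ) (s : ℝ) (p : ℝ≥0∞) (hp : 0 < p) (d C L : ℝ)
    (hd : 1 < d) (hC : 0 < C) (hL : 0 < L)
    (hLs : n * max ((p⁻¹).toReal - 1) 0 - s < L)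
    (a : ℕ → (Fin n → ℤ) → Euc n → ℂ)
    (hmeas : ∀ ν m, Measurable (a ν m))
    (hbdd : ∀ ν m, ∃ M : ℝ, ∀ x, ‖a ν m x‖ ≤ M)
    (hsupp : ∀ ν m, Function.support (a ν m) ⊆ cubeQ n ν m d)
    (hmom : ∀ ν m, ∀ ψ : Euc n → ℂ, MemHolderSpace n L ψ →
      ‖∫ x, ψ x * a ν m x‖ ≤
        C * (2:ℝ) ^ (-(ν:ℝ) * (s + L + n * (1 - (p⁻¹).toReal))) * (holderNorm n L ψ).toReal) :
    (∀ φ : SchwartzMap (Euc n) ℂ, ∃ c > (0:ℝ),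
      ∀ lam : ℕ → (Fin n → ℤ) → ℂ,
        ∑' (ν : ℕ) (m : Fin n → ℤ),
            (‖lam ν m‖₊ : ℝ≥0∞) * ENNReal.ofReal ‖∫ x, a ν m x * φ x‖ ≤
          ENNReal.ofReal c *
            ⨆ ν : ℕ, eLpNorm (fun m : Fin n → ℤ => lam ν m) p Measure.count) ∧
    ∀ lam : ℕ → (Fin n → ℤ) → ℂ,
      (⨆ ν : ℕ, eLpNorm (fun m : Fin n → ℤ => lam ν m) p Measure.count) < ⊤ →
      ∀ φ : SchwartzMap (Euc n) ℂ,
        Summable (fun q : ℕ × (Fin n → ℤ) => lam q.1 q.2 * ∫ x, a q.1 q.2 x * φ x) := by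
  have main : ∀ φ : SchwartzMap (Euc n) ℂ, ∃ c > (0:ℝ),
      ∀ lam : ℕ → (Fin n → ℤ) → ℂ,
        ∑' (ν : ℕ) (m : Fin n → ℤ),
            (‖lam ν m‖₊ : ℝ≥0∞) * ENNReal.ofReal ‖∫ x, a ν m x * φ x‖ ≤
          ENNReal.ofReal c *
            ⨆ ν : ℕ, eLpNorm (fun m : Fin n → ℤ => lam ν m) p Measure.count := by
    intro φ
    obtain ⟨B, hB, hpair⟩ := pairing_bound n d C L _ hd hC hL a hsupp hmom φ
    obtain ⟨T, hT, δ, hδ, hlev⟩ := level_bound n s p hp L hLs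
    set ρ : ℝ≥0∞ := ENNReal.ofReal ((2:ℝ) ^ (-δ)) with hρ
    have hρ1 : ρ < 1 := by
      rw [hρ, ENNReal.ofReal_lt_one]
      exact Real.rpow_lt_one_of_one_lt_of_neg (by norm_num) (by linarith)
    set G : ℝ≥0∞ := ENNReal.ofReal B * (T * (1 - ρ)⁻¹) with hG
    have hGt : G ≠ ⊤ := by
      refine ENNReal.mul_ne_top ENNReal.ofReal_ne_top (ENNReal.mul_ne_top hT ?_)
      exact ENNReal.inv_ne_top.2 (tsub_pos_of_lt hρ1).ne'
    refine ⟨G.toReal + 1, by positivity, fun lam => ?_⟩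
    set Λ := ⨆ ν : ℕ, eLpNorm (fun m : Fin n → ℤ => lam ν m) p Measure.count with hΛ
    have hν : ∀ ν, ∑' m : Fin n → ℤ,
        (‖lam ν m‖₊ : ℝ≥0∞) * ENNReal.ofReal ‖∫ x, a ν m x * φ x‖ ≤
        ENNReal.ofReal B * (T * ρ ^ ν * Λ) := by
      intro ν
      calc _ ≤ ∑' m : Fin n → ℤ, ENNReal.ofReal B *
            (ENNReal.ofReal ((2:ℝ) ^ (-(ν:ℝ) * (s + L + n * (1 - (p⁻¹).toReal)))) *
            (‖lam ν m‖ₑ * ENNReal.ofReal (gridWeight n ν m))) := by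
            refine ENNReal.tsum_le_tsum fun m => ?_
            have h := ENNReal.ofReal_le_ofReal (hpair ν m)
            rw [ENNReal.ofReal_mul (by positivity), ENNReal.ofReal_mul hB.le] at h
            rw [← enorm_eq_nnnorm]
            calc _ ≤ ‖lam ν m‖ₑ * _ := mul_le_mul_right h _
              _ = _ := by ring
        _ ≤ _ := by
            rw [ENNReal.tsum_mul_left, ENNReal.tsum_mul_left]
            refine mul_le_mul_right ((hlev ν (lam ν)).trans (mul_le_mul_right ?_ _)) _
            exact le_iSup (fun ν : ℕ => eLpNorm (fun m => lam ν m) p Measure.count) ν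
    calc _ ≤ ∑' ν : ℕ, ENNReal.ofReal B * (T * ρ ^ ν * Λ) := ENNReal.tsum_le_tsum hν
      _ = G * Λ := by
          rw [ENNReal.tsum_mul_left, ENNReal.tsum_mul_right, ENNReal.tsum_mul_left,
            ENNReal.tsum_geometric, hG]
          ring
      _ ≤ _ := by
          gcongr
          rw [← ENNReal.ofReal_toReal hGt]
          exact ENNReal.ofReal_le_ofReal (by simp)
  refine ⟨main, fun lam hlam φ => ?_⟩
  obtain ⟨c, -, hc⟩ := main φ
  have hfin := (hc lam).trans_lt (ENNReal.mul_lt_top ENNReal.ofReal_lt_top hlam)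
  rw [← ENNReal.tsum_prod] at hfin
  refine Summable.of_norm ?_
  refine (ENNReal.summable_toReal hfin.ne).congr fun q => ?_
  simp
end
end

section
/- Let n∈ℕ, s>0 and ρ>1 with max(1,s)≤ρ. For every M>0 there exists a constant C>0 such that for every ρ-diffeomorphism φ:ℝⁿ→ℝⁿ with Σ_{i=1}^{n} Σ_{j=1}^{n} ‖∂φ_i/∂x_j|𝒞^{ρ−1}(ℝⁿ)‖ ≤ M and every f∈𝒞^s(ℝⁿ), the composition f∘φ belongs to 𝒞^s(ℝⁿ) and ‖f∘φ|𝒞^s(ℝⁿ)‖ ≤ C·‖f|𝒞^s(ℝⁿ)‖. -/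
/-!
Quantitative Hölder regularity is encoded by the recursive predicate `HolderBd k σ f A`: the
function `f` is `k` times differentiable, `f` and its derivatives up to order `k` are bounded by
`A`, and the `k`-th derivative is `σ`-Hölder with constant `A`. Up to a factor depending only on
`k`, the best such `A` is the norm of `𝒞^(k+σ)`.

The theorem follows by induction on `k` from the chain rule `D(f ∘ φ) = (Df ∘ φ) · Dφ`. For
`k = 0` it is enough that `φ` is Lipschitz. In the inductive step `Df ∘ φ` is controlled by the
induction hypothesis and the product with `Dφ` by the Leibniz rule (`HolderBd.bilin`); lower order
terms are handled by the elementary embedding `𝒞^s ⊆ 𝒞^t` for `t ≤ s` (`HolderBd.embed`), which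
also gives the required regularity of `Dφ` from `s - 1 ≤ ρ - 1`.
-/

open MeasureTheory ENNReal
open scoped Classical ENNReal NNReal

noncomputable section

/-- `φ : ℝⁿ → ℝⁿ` is a `ρ`-diffeomorphism for `ρ > 1`: it is one-to-one, continuously
differentiable, the partial derivatives `∂φᵢ/∂xⱼ` belong to `𝒞^{ρ-1}(ℝⁿ)` (which
encodes existence of classical derivatives up to order `⌊ρ⌋`),
and `|det J(φ)(x)| ≥ c > 0` uniformly in `x`. -/
def IsRhoDiffeo (n : ℕ) (ρ : ℝ) (φ : Euc n → Euc n) : Prop :=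
  Function.Injective φ ∧ ContDiff ℝ 1 φ ∧
  (∀ i j : Fin n,
    MemHolderSpace n (ρ - 1) (fun x => fderiv ℝ φ x (EuclideanSpace.single j 1) i)) ∧
  ∃ c > (0:ℝ), ∀ x, c ≤ |LinearMap.det (fderiv ℝ φ x).toLinearMap|

/-! ### A recursive form of Hölder regularity -/

/-- `HolderBd k σ f A`: `f` has `k` derivatives, all of them (including `f`) bounded by `A`, and
the `k`-th one is `σ`-Hölder with constant `A`. -/
def HolderBd {E : Type} [NormedAddCommGroup E] [NormedSpace ℝ E] (k : ℕ) (σ : ℝ) :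
    ∀ {F : Type} [NormedAddCommGroup F] [NormedSpace ℝ F], (E → F) → ℝ → Prop :=
  Nat.rec (motive := fun _ => ∀ {F : Type} [NormedAddCommGroup F] [NormedSpace ℝ F],
      (E → F) → ℝ → Prop)
    (fun f A => (∀ x, ‖f x‖ ≤ A) ∧ ∀ x y, ‖f x - f y‖ ≤ A * ‖x - y‖ ^ σ)
    (fun _ ih _ _ _ f A => Differentiable ℝ f ∧ (∀ x, ‖f x‖ ≤ A) ∧ ih (fderiv ℝ f) A) k

section HolderBd

variable {E F G H : Type} [NormedAddCommGroup E] [NormedSpace ℝ E]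
  [NormedAddCommGroup F] [NormedSpace ℝ F] [NormedAddCommGroup G] [NormedSpace ℝ G]
  [NormedAddCommGroup H] [NormedSpace ℝ H]

theorem holderBd_zero {σ : ℝ} {f : E → F} {A : ℝ} : HolderBd 0 σ f A ↔
    (∀ x, ‖f x‖ ≤ A) ∧ ∀ x y, ‖f x - f y‖ ≤ A * ‖x - y‖ ^ σ := Iff.rfl

theorem holderBd_succ {k : ℕ} {σ : ℝ} {f : E → F} {A : ℝ} : HolderBd (k + 1) σ f A ↔
    Differentiable ℝ f ∧ (∀ x, ‖f x‖ ≤ A) ∧ HolderBd k σ (fderiv ℝ f) A := Iff.rfl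

theorem HolderBd.bound {k : ℕ} {σ : ℝ} {f : E → F} {A : ℝ} (h : HolderBd k σ f A) (x : E) :
    ‖f x‖ ≤ A := by
  cases k with
  | zero => exact h.1 x
  | succ k => exact h.2.1 x

theorem HolderBd.nonneg {k : ℕ} {σ : ℝ} {f : E → F} {A : ℝ} (h : HolderBd k σ f A) : 0 ≤ A :=
  (norm_nonneg _).trans (h.bound 0)

theorem HolderBd.mono {k : ℕ} {σ : ℝ} {f : E → F} {A B : ℝ} (h : HolderBd k σ f A)
    (hAB : A ≤ B) : HolderBd k σ f B := by
  induction k generalizing F with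
  | zero =>
    refine ⟨fun x => (h.1 x).trans hAB, fun x y => (h.2 x y).trans ?_⟩
    gcongr
  | succ k ih => exact ⟨h.1, fun x => (h.2.1 x).trans hAB, ih h.2.2⟩

/-- Interpolation between boundedness and a Hölder (or Lipschitz, if `τ = 1`) estimate. -/
theorem holder_interp {σ τ A d t : ℝ} (hA : 0 ≤ A) (hσ : 0 ≤ σ) (hστ : σ ≤ τ) (hσ' : 0 < σ)
    (hd : 0 ≤ d) (h1 : t ≤ 2 * A) (h2 : t ≤ A * d ^ τ) : t ≤ 2 * A * d ^ σ := by
  rcases hd.eq_or_lt with rfl | hd0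
  · rw [Real.zero_rpow (by linarith)] at h2
    rw [Real.zero_rpow hσ'.ne']
    linarith
  rcases le_total d 1 with h | h
  · have := Real.rpow_le_rpow_of_exponent_ge hd0 h hστ
    have h3 : 0 ≤ d ^ σ := by positivity
    nlinarith [mul_le_mul_of_nonneg_left this hA, mul_nonneg hA h3]
  · have := Real.one_le_rpow h hσ
    nlinarith

/-- The embedding of `𝒞^(k+τ)` into `𝒞^(j+σ)` for `j + σ ≤ k + τ`. -/
theorem HolderBd.embed {j k : ℕ} {σ τ : ℝ} {f : E → F} {A : ℝ} (h : HolderBd k τ f A)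
    (hσ : 0 < σ) (hσ1 : σ ≤ 1) (hjk : j ≤ k) (heq : j = k → σ ≤ τ) :
    HolderBd j σ f (2 * A) := by
  induction j generalizing k F with
  | zero =>
    have hA := h.nonneg
    refine ⟨fun x => (h.bound x).trans (by linarith), fun x y => ?_⟩
    have h1 : ‖f x - f y‖ ≤ 2 * A := by
      linarith [norm_sub_le (f x) (f y), h.bound x, h.bound y]
    cases k with
    | zero => exact holder_interp hA hσ.le (heq rfl) hσ (norm_nonneg _) h1 (h.2 x y)
    | succ k =>
      refine holder_interp hA hσ.le hσ1 hσ (norm_nonneg _) h1 ?_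
      rw [Real.rpow_one]
      exact convex_univ.norm_image_sub_le_of_norm_fderiv_le (𝕜 := ℝ) (f := f)
        (fun z _ => h.1 z) (fun z _ => HolderBd.bound (holderBd_succ.1 h).2.2 z) (Set.mem_univ y) (Set.mem_univ x)
  | succ j ih =>
    obtain ⟨k, rfl⟩ : ∃ m, k = m + 1 := ⟨k - 1, by omega⟩
    exact ⟨h.1, fun x => (h.2.1 x).trans (by linarith [h.nonneg]),
      ih h.2.2 (by omega) (fun e => heq (by omega))⟩

theorem HolderBd.add {k : ℕ} {σ : ℝ} {f g : E → F} {A B : ℝ} (hf : HolderBd k σ f A)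
    (hg : HolderBd k σ g B) : HolderBd k σ (fun x => f x + g x) (A + B) := by
  induction k generalizing F with
  | zero =>
    refine ⟨fun x => (norm_add_le _ _).trans (add_le_add (hf.1 x) (hg.1 x)), fun x y => ?_⟩
    rw [add_sub_add_comm, add_mul]
    exact (norm_add_le _ _).trans (add_le_add (hf.2 x y) (hg.2 x y))
  | succ k ih =>
    refine ⟨hf.1.add hg.1, fun x => (norm_add_le _ _).trans (add_le_add (hf.2.1 x) (hg.2.1 x)), ?_⟩
    have : fderiv ℝ (fun x => f x + g x) = fun x => fderiv ℝ f x + fderiv ℝ g x := by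
      ext1 x
      exact fderiv_fun_add (hf.1 x) (hg.1 x)
    rw [this]
    exact ih hf.2.2 hg.2.2

theorem HolderBd.zero_fun {k : ℕ} {σ : ℝ} : HolderBd k σ (fun _ : E => (0 : F)) 0 := by
  induction k generalizing F with
  | zero => exact ⟨fun x => by simp, fun x y => by simp⟩
  | succ k ih =>
    refine ⟨differentiable_const _, fun x => by simp, ?_⟩
    have : fderiv ℝ (fun _ : E => (0 : F)) = fun _ => 0 := by
      ext1 x
      simp
    rw [this]
    exact ih

theorem HolderBd.sum {ι : Type*} {k : ℕ} {σ : ℝ} {f : ι → E → F} {A : ι → ℝ} (t : Finset ι)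
    (h : ∀ i, HolderBd k σ (f i) (A i)) :
    HolderBd k σ (fun x => ∑ i ∈ t, f i x) (∑ i ∈ t, A i) := by
  classical
  induction t using Finset.induction_on with
  | empty => simpa using HolderBd.zero_fun
  | insert a t ha ih =>
    simp only [Finset.sum_insert ha]
    exact (h a).add ih

theorem HolderBd.clm {k : ℕ} {σ : ℝ} {f : E → F} {A c : ℝ} (hf : HolderBd k σ f A)
    (L : F →L[ℝ] G) (hL : ‖L‖ ≤ c) : HolderBd k σ (fun x => L (f x)) (c * A) := by
  have hb : ∀ x, ‖L (f x)‖ ≤ c * A := fun x => L.le_of_opNorm_le_of_le hL (hf.bound x)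
  induction k generalizing F G with
  | zero =>
    refine ⟨hb, fun x y => ?_⟩
    rw [← map_sub, mul_assoc]
    exact L.le_of_opNorm_le_of_le hL (hf.2 x y)
  | succ k ih =>
    refine ⟨L.differentiable.comp hf.1, hb, ?_⟩
    have : fderiv ℝ (fun x => L (f x)) =
        fun x => ContinuousLinearMap.compL ℝ E F G L (fderiv ℝ f x) := by
      ext1 x
      exact (L.hasFDerivAt.comp x (hf.1 x).hasFDerivAt).fderiv
    rw [this]
    have hn : ‖ContinuousLinearMap.compL ℝ E F G L‖ ≤ c :=
      (ContinuousLinearMap.le_of_opNorm_le _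
        (ContinuousLinearMap.norm_compL_le ℝ E F G) L).trans (by linarith)
    exact ih hf.2.2 _ hn fun x => ContinuousLinearMap.le_of_opNorm_le_of_le _ hn
      (HolderBd.bound (holderBd_succ.1 hf).2.2 x)

/-! ### Products and compositions -/

/-- Hölder spaces are stable under continuous bilinear products. The constant comes from the
Leibniz rule: each step has two terms and loses a factor `2` in the embedding. -/
theorem HolderBd.bilin {k : ℕ} {σ : ℝ} (hσ : 0 < σ) (hσ1 : σ ≤ 1) {f : E → F} {g : E → G}
    {A A' b : ℝ} (hf : HolderBd k σ f A) (hg : HolderBd k σ g A')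
    (B : F →L[ℝ] G →L[ℝ] H) (hB : ‖B‖ ≤ b) :
    HolderBd k σ (fun x => B (f x) (g x)) (2 * 4 ^ k * (b * A * A')) := by
  have hb0 : 0 ≤ b := (norm_nonneg B).trans hB
  have hA := hf.nonneg
  have hA' := hg.nonneg
  have hP : 0 ≤ b * A * A' := by positivity
  have hle : ∀ u v, ‖B u v‖ ≤ b * ‖u‖ * ‖v‖ := fun u v =>
    (B.le_opNorm₂ u v).trans (by gcongr)
  have hbd : ∀ x, ‖B (f x) (g x)‖ ≤ 2 * 4 ^ k * (b * A * A') := fun x => by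
    have h1 : ‖B (f x) (g x)‖ ≤ b * A * A' := by
      refine (hle _ _).trans ?_
      have := hf.bound x
      have := hg.bound x
      gcongr
    have h2 : (1 : ℝ) ≤ 4 ^ k := one_le_pow₀ (by norm_num)
    nlinarith
  induction k generalizing F G H A A' with
  | zero =>
    refine ⟨hbd, fun x y => ?_⟩
    have e : B (f x) (g x) - B (f y) (g y) = B (f x - f y) (g x) + B (f y) (g x - g y) := by
      simp
    rw [e]
    have h1 : ‖B (f x - f y) (g x)‖ ≤ b * (A * ‖x - y‖ ^ σ) * A' := by
      refine (hle _ _).trans ?_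
      have := hf.2 x y
      have := hg.bound x
      gcongr
    have h2 : ‖B (f y) (g x - g y)‖ ≤ b * A * (A' * ‖x - y‖ ^ σ) := by
      refine (hle _ _).trans ?_
      have := hg.2 x y
      have := hf.bound y
      gcongr
    refine (norm_add_le _ _).trans ((add_le_add h1 h2).trans (le_of_eq ?_))
    ring
  | succ k ih =>
    refine ⟨fun x => ?_, hbd, ?_⟩
    · exact (B.hasFDerivAt_of_bilinear (hf.1 x).hasFDerivAt
        (hg.1 x).hasFDerivAt).differentiableAt
    have hd : fderiv ℝ (fun x => B (f x) (g x)) = fun x =>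
        B.precompR E (f x) (fderiv ℝ g x) + B.precompL E (fderiv ℝ f x) (g x) := by
      ext1 x
      exact (B.hasFDerivAt_of_bilinear (hf.1 x).hasFDerivAt (hg.1 x).hasFDerivAt).fderiv
    rw [hd]
    have hf' : HolderBd k σ f (2 * A) := hf.embed hσ hσ1 (by omega) (by omega)
    have hg' : HolderBd k σ g (2 * A') := hg.embed hσ hσ1 (by omega) (by omega)
    have key : ∀ {F' G' H' : Type} [NormedAddCommGroup F'] [NormedSpace ℝ F']
        [NormedAddCommGroup G'] [NormedSpace ℝ G'] [NormedAddCommGroup H'] [NormedSpace ℝ H']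
        {u : E → F'} {v : E → G'} {a a' : ℝ} (_ : HolderBd k σ u a) (_ : HolderBd k σ v a')
        (B' : F' →L[ℝ] G' →L[ℝ] H') (_ : ‖B'‖ ≤ b),
        HolderBd k σ (fun x => B' (u x) (v x)) (2 * 4 ^ k * (b * a * a')) := by
      intro F' G' H' _ _ _ _ _ _ u v a a' hu hv B' hB'
      have ha := hu.nonneg
      have ha' := hv.nonneg
      have hP' : 0 ≤ b * a * a' := by positivity
      have hle' : ∀ u v, ‖B' u v‖ ≤ b * ‖u‖ * ‖v‖ := fun u v =>
        (B'.le_opNorm₂ u v).trans (by gcongr)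
      refine ih hu hv B' hB' ha ha' hP' hle' fun x => ?_
      have h1 : ‖B' (u x) (v x)‖ ≤ b * a * a' := by
        refine (hle' _ _).trans ?_
        have := hu.bound x
        have := hv.bound x
        gcongr
      have h2 : (1 : ℝ) ≤ 4 ^ k := one_le_pow₀ (by norm_num)
      nlinarith
    have h1 := key hf' hg.2.2 (B.precompR E) ((B.norm_precompR_le E).trans hB)
    have h2 := key hf.2.2 hg' (B.precompL E) ((B.norm_precompL_le E).trans hB)
    refine (h1.add h2).mono (le_of_eq ?_)
    ring

/-- Composition estimate. For `k = 0` only the bound on `Dφ` is used; for `k ≥ 1` the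
derivative `Dφ` has to be in `𝒞^(k-1+σ)`. -/
theorem HolderBd.comp_exists (E : Type) [NormedAddCommGroup E] [NormedSpace ℝ E] {σ : ℝ}
    (hσ : 0 < σ) (hσ1 : σ ≤ 1) (k : ℕ) (M : ℝ) (hM : 0 ≤ M) :
    ∃ C : ℝ, 0 ≤ C ∧ ∀ φ : E → E, Differentiable ℝ φ → (∀ x, ‖fderiv ℝ φ x‖ ≤ M) →
      (∀ j, j + 1 = k → HolderBd j σ (fderiv ℝ φ) M) →
      ∀ {F : Type} [NormedAddCommGroup F] [NormedSpace ℝ F] (f : E → F) (A : ℝ),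
        HolderBd k σ f A → HolderBd k σ (f ∘ φ) (C * A) := by
  induction k generalizing M with
  | zero =>
    refine ⟨1 + M ^ σ, by positivity, fun φ hφ hb _ F _ _ f A hf => ?_⟩
    have hA := hf.nonneg
    have hMσ : 0 ≤ M ^ σ := by positivity
    refine ⟨fun x => (hf.bound _).trans (by nlinarith), fun x y => (hf.2 _ _).trans ?_⟩
    have hl : ‖φ x - φ y‖ ≤ M * ‖x - y‖ :=
      convex_univ.norm_image_sub_le_of_norm_fderiv_le (𝕜 := ℝ) (f := φ)
        (fun z _ => hφ z) (fun z _ => hb z) (Set.mem_univ y) (Set.mem_univ x)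
    have h1 : ‖φ x - φ y‖ ^ σ ≤ M ^ σ * ‖x - y‖ ^ σ := by
      rw [← Real.mul_rpow hM (norm_nonneg _)]
      gcongr
    have h2 : 0 ≤ ‖x - y‖ ^ σ := by positivity
    nlinarith [mul_le_mul_of_nonneg_left h1 hA, mul_nonneg hA h2]
  | succ k ih =>
    obtain ⟨C, hC, H⟩ := ih (2 * M) (by positivity)
    refine ⟨1 + 2 * 4 ^ k * (1 * C * M), by positivity, fun φ hφ hb hφk F _ _ f A hf => ?_⟩
    have hA := hf.nonneg
    have hK : 0 ≤ 2 * 4 ^ k * (1 * C * M) := by positivity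
    refine ⟨hf.1.comp hφ, fun x => (hf.bound _).trans (by nlinarith), ?_⟩
    have hd : fderiv ℝ (f ∘ φ) = fun x =>
        ContinuousLinearMap.compL ℝ E E F ((fderiv ℝ f ∘ φ) x) (fderiv ℝ φ x) := by
      ext1 x
      exact fderiv_comp x (hf.1 _) (hφ x)
    rw [hd]
    have h1 : HolderBd k σ (fderiv ℝ f ∘ φ) (C * A) := by
      refine H φ hφ (fun x => (hb x).trans (by linarith)) ?_ _ _ hf.2.2
      intro j hj
      exact (hφk k rfl).embed hσ hσ1 (by omega) (by omega)
    refine (h1.bilin hσ hσ1 (hφk k rfl) _ (ContinuousLinearMap.norm_compL_le ℝ E E F)).mono ?_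
    nlinarith

/-! ### Comparison with iterated derivatives -/

theorem holderBd_iff {k : ℕ} {σ : ℝ} (hσ : 0 < σ) {f : E → F} {A : ℝ} :
    HolderBd k σ f A ↔ ContDiff ℝ k f ∧ (∀ j ≤ k, ∀ x, ‖iteratedFDeriv ℝ j f x‖ ≤ A) ∧
      ∀ x y, ‖iteratedFDeriv ℝ k f x - iteratedFDeriv ℝ k f y‖ ≤ A * ‖x - y‖ ^ σ := by
  induction k generalizing F with
  | zero =>
    have hsub : ∀ x y, ‖iteratedFDeriv ℝ 0 f x - iteratedFDeriv ℝ 0 f y‖ = ‖f x - f y‖ := by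
      intro x y
      simp only [iteratedFDeriv_zero_eq_comp, Function.comp_apply, ← map_sub,
        LinearIsometryEquiv.norm_map]
    simp only [hsub, Nat.le_zero, forall_eq, norm_iteratedFDeriv_zero, holderBd_zero]
    refine ⟨fun h => ⟨?_, h⟩, fun h => h.2⟩
    simp only [Nat.cast_zero, contDiff_zero]
    -- a function with a modulus of continuity `A * d ^ σ`, `σ > 0`, is continuous
    rw [continuous_iff_continuousAt]
    intro y
    rw [ContinuousAt, tendsto_iff_norm_sub_tendsto_zero]
    refine squeeze_zero (fun _ => norm_nonneg _) (fun x => h.2 x y) ?_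
    have hc : Continuous fun x : E => A * ‖x - y‖ ^ σ :=
      continuous_const.mul ((continuous_id.sub continuous_const).norm.rpow_const
        fun _ => Or.inr hσ.le)
    have := hc.tendsto y
    simpa [Real.zero_rpow hσ.ne'] using this
  | succ k ih =>
    have hsub : ∀ x y, ‖iteratedFDeriv ℝ (k + 1) f x - iteratedFDeriv ℝ (k + 1) f y‖ =
        ‖iteratedFDeriv ℝ k (fderiv ℝ f) x - iteratedFDeriv ℝ k (fderiv ℝ f) y‖ := by
      intro x y
      simp only [iteratedFDeriv_succ_eq_comp_right, Function.comp_apply, ← dist_eq_norm]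
      exact (continuousMultilinearCurryRightEquiv' ℝ k E F).symm.dist_map _ _
    have hcd : ContDiff ℝ ((k + 1 : ℕ) : WithTop ℕ∞) f ↔
        Differentiable ℝ f ∧ ContDiff ℝ k (fderiv ℝ f) := by
      push_cast
      rw [contDiff_succ_iff_fderiv]
      simp
    rw [holderBd_succ, ih, hcd]
    simp only [hsub]
    constructor
    · rintro ⟨h1, h2, h3, h4, h5⟩
      refine ⟨⟨h1, h3⟩, fun j hj x => ?_, h5⟩
      cases j with
      | zero => simpa using h2 x
      | succ j =>
        rw [← norm_iteratedFDeriv_fderiv]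
        exact h4 j (by omega) x
    · rintro ⟨⟨h1, h3⟩, h4, h5⟩
      refine ⟨h1, fun x => by simpa using h4 0 (by omega) x, h3, fun j hj x => ?_, h5⟩
      rw [norm_iteratedFDeriv_fderiv]
      exact h4 (j + 1) (by omega) x

end HolderBd

theorem MemHolderSpace.holderBd {n : ℕ} {F : Type} [NormedAddCommGroup F] [NormedSpace ℝ F]
    {s : ℝ} (hs : 0 < s) {f : Euc n → F} (h : MemHolderSpace n s f) :
    HolderBd (⌈s⌉₊ - 1) (s - ((⌈s⌉₊ : ℝ) - 1)) f (holderNorm n s f).toReal := by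
  have hc : 0 < ⌈s⌉₊ := Nat.ceil_pos.2 hs
  have hσ : 0 < s - ((⌈s⌉₊ : ℝ) - 1) := by linarith [Nat.ceil_lt_add_one hs.le]
  have htop := h.2.ne
  have key : ∀ {r : ℝ}, ENNReal.ofReal r ≤ holderNorm n s f → r ≤ (holderNorm n s f).toReal :=
    fun h => (ENNReal.ofReal_le_iff_le_toReal htop).1 h
  rw [holderBd_iff hσ]
  refine ⟨h.1.2 hs.ne', fun j hj x => key ?_, fun x y => ?_⟩
  · rw [holderNorm, if_neg hs.ne', ofReal_norm]
    refine le_trans ?_ (le_add_of_nonneg_right zero_le)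
    refine le_trans ?_ (Finset.single_le_sum (fun _ _ => zero_le)
      (Finset.mem_range.2 (by omega : j < ⌈s⌉₊)))
    exact le_iSup (fun x : Euc n => (‖iteratedFDeriv ℝ j f x‖₊ : ℝ≥0∞)) x
  · rcases eq_or_ne x y with rfl | hxy
    · simp [Real.zero_rpow hσ.ne']
    have hpos : 0 < ‖x - y‖ ^ (s - ((⌈s⌉₊ : ℝ) - 1)) :=
      Real.rpow_pos_of_pos (norm_pos_iff.2 (sub_ne_zero.2 hxy)) _
    rw [← div_le_iff₀ hpos]
    refine key ?_
    rw [ENNReal.ofReal_div_of_pos hpos, holderNorm, if_neg hs.ne', ofReal_norm]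
    refine le_trans ?_ (le_add_of_nonneg_left zero_le)
    refine le_iSup_of_le (x, y) ?_
    rw [if_neg hxy]
    exact le_rfl

theorem HolderBd.memHolderSpace {n : ℕ} {F : Type} [NormedAddCommGroup F] [NormedSpace ℝ F]
    {s : ℝ} (hs : 0 < s) {f : Euc n → F} {A : ℝ}
    (h : HolderBd (⌈s⌉₊ - 1) (s - ((⌈s⌉₊ : ℝ) - 1)) f A) :
    MemHolderSpace n s f ∧ holderNorm n s f ≤ ENNReal.ofReal ((⌈s⌉₊ + 1) * A) := by
  have hσ : 0 < s - ((⌈s⌉₊ : ℝ) - 1) := by linarith [Nat.ceil_lt_add_one hs.le]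
  have hA := h.nonneg
  obtain ⟨h1, h2, h3⟩ := (holderBd_iff hσ).1 h
  have hle : holderNorm n s f ≤ ENNReal.ofReal ((⌈s⌉₊ + 1) * A) := by
    rw [holderNorm, if_neg hs.ne', add_mul, one_mul, ENNReal.ofReal_add (by positivity) hA]
    refine add_le_add ?_ (iSup_le fun q => ?_)
    · rw [ENNReal.ofReal_mul (by positivity), ENNReal.ofReal_natCast, ← nsmul_eq_mul]
      conv_rhs => rw [← Finset.card_range ⌈s⌉₊]
      refine Finset.sum_le_card_nsmul _ _ _ fun j hj => iSup_le fun x => ?_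
      have := Finset.mem_range.1 hj
      have h4 := ENNReal.ofReal_le_ofReal (h2 j (by omega) x)
      rwa [ofReal_norm] at h4
    · split_ifs with hq
      · exact zero_le
      · have hpos : 0 < ‖q.1 - q.2‖ ^ (s - ((⌈s⌉₊ : ℝ) - 1)) :=
          Real.rpow_pos_of_pos (norm_pos_iff.2 (sub_ne_zero.2 hq)) _
        have h4 := ENNReal.ofReal_le_ofReal ((div_le_iff₀ hpos).2 (h3 q.1 q.2))
        rwa [ENNReal.ofReal_div_of_pos hpos, ofReal_norm] at h4
  exact ⟨⟨⟨fun h0 => absurd h0 hs.ne', fun _ => h1⟩, hle.trans_lt ENNReal.ofReal_lt_top⟩, hle⟩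

/-! ### The Jacobian matrix and the total derivative -/

/-- The linear embedding `c ↦ c • E_{ij}` of the scalars onto multiples of a matrix unit, where
`E_{ij} x = x_j e_i`. -/
def matUnit (n : ℕ) (i j : Fin n) : ℝ →L[ℝ] (Euc n →L[ℝ] Euc n) :=
  ContinuousLinearMap.toSpanSingleton ℝ
    ((EuclideanSpace.proj j : Euc n →L[ℝ] ℝ).smulRight (EuclideanSpace.single i (1 : ℝ)))

theorem eq_sum_matUnit {n : ℕ} (T : Euc n →L[ℝ] Euc n) :
    T = ∑ i, ∑ j, matUnit n i j (T (EuclideanSpace.single j 1) i) := by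
  ext x l
  have hx : x = ∑ j, x j • (EuclideanSpace.single j (1 : ℝ) : Euc n) := by
    ext m
    simp [Finset.sum_apply, Pi.single_apply]
  conv_lhs => rw [hx]
  simp [matUnit, Finset.sum_apply, Pi.single_apply, mul_comm]

/-- Composition with a `ρ`-diffeomorphism maps `𝒞^s(ℝⁿ)` into itself, with a constant
which is uniform over all `ρ`-diffeomorphisms whose partial derivatives have
`𝒞^{ρ-1}`-norms summing to at most `M`. -/
theorem statement_4 (n : ℕ) (s ρ : ℝ) (hs : 0 < s) (hρ : 1 < ρ) (hsρ : max 1 s ≤ ρ)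
    (M : ℝ) (hM : 0 < M) :
    ∃ C > (0:ℝ), ∀ φ : Euc n → Euc n, IsRhoDiffeo n ρ φ →
      (∑ i : Fin n, ∑ j : Fin n,
          holderNorm n (ρ - 1) (fun x => fderiv ℝ φ x (EuclideanSpace.single j 1) i))
        ≤ ENNReal.ofReal M →
      ∀ f : Euc n → ℂ, MemHolderSpace n s f →
        MemHolderSpace n s (f ∘ φ) ∧
        holderNorm n s (f ∘ φ) ≤ ENNReal.ofReal C * holderNorm n s f := by
  have hs1 : s ≤ ρ := (le_max_right _ _).trans hsρ
  have hρ1 : 0 < ρ - 1 := by linarith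
  have hcs : 0 < ⌈s⌉₊ := Nat.ceil_pos.2 hs
  have hcρ : 0 < ⌈ρ - 1⌉₊ := Nat.ceil_pos.2 hρ1
  have hσ : 0 < s - ((⌈s⌉₊ : ℝ) - 1) := by linarith [Nat.ceil_lt_add_one hs.le]
  have hσ1 : s - ((⌈s⌉₊ : ℝ) - 1) ≤ 1 := by linarith [Nat.le_ceil s]
  -- bound for the total derivative `Dφ` in `𝒞^(ρ-1)` in terms of the partial derivatives
  obtain ⟨M', hM'⟩ : ∃ M' : ℝ, M' = ∑ i : Fin n, ∑ j : Fin n, ‖matUnit n i j‖ * M := ⟨_, rfl⟩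
  have hM'0 : 0 ≤ M' := hM' ▸ by positivity
  obtain ⟨C, hC, H⟩ := HolderBd.comp_exists (Euc n) hσ hσ1 (⌈s⌉₊ - 1) (2 * M') (by positivity)
  refine ⟨(⌈s⌉₊ + 1) * C + 1, by positivity, fun φ hφ hφM f hf => ?_⟩
  obtain ⟨-, hφ1, hpart, -⟩ := hφ
  have hDφ : HolderBd (⌈ρ - 1⌉₊ - 1) (ρ - 1 - ((⌈ρ - 1⌉₊ : ℝ) - 1)) (fderiv ℝ φ) M' := by
    have e : fderiv ℝ φ = fun x => ∑ i, ∑ j,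
        matUnit n i j (fderiv ℝ φ x (EuclideanSpace.single j 1) i) :=
      funext fun x => eq_sum_matUnit _
    rw [e, hM']
    refine HolderBd.sum _ fun i => HolderBd.sum _ fun j => HolderBd.clm ?_ _ le_rfl
    refine ((hpart i j).holderBd hρ1).mono (ENNReal.toReal_le_of_le_ofReal hM.le ?_)
    refine le_trans ?_ hφM
    refine le_trans ?_ (Finset.single_le_sum (f := fun i => ∑ j : Fin n, holderNorm n (ρ - 1)
      (fun x => fderiv ℝ φ x (EuclideanSpace.single j 1) i)) (fun _ _ => zero_le)
      (Finset.mem_univ i))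
    exact Finset.single_le_sum (f := fun j => holderNorm n (ρ - 1)
      (fun x => fderiv ℝ φ x (EuclideanSpace.single j 1) i)) (fun _ _ => zero_le)
      (Finset.mem_univ j)
  have hcomp := H φ (hφ1.differentiable (by norm_num))
    (fun x => (hDφ.bound x).trans (by linarith)) (fun j hj => by
      -- `j + 1 = ⌈s⌉ - 1`, so `s - 1 ≤ ρ - 1` compares `j` with `⌈ρ - 1⌉ - 1`
      have hs2 : ⌈s⌉₊ ≤ ⌈ρ - 1⌉₊ + 1 := by
        rw [Nat.ceil_le]
        push_cast
        linarith [Nat.le_ceil (ρ - 1)]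
      refine hDφ.embed hσ hσ1 (by omega) fun e => ?_
      have e2 : (⌈s⌉₊ : ℝ) = ⌈ρ - 1⌉₊ + 1 := by
        exact_mod_cast (by omega : ⌈s⌉₊ = ⌈ρ - 1⌉₊ + 1)
      linarith) f _ (hf.holderBd hs)
  obtain ⟨h1, h2⟩ := hcomp.memHolderSpace hs
  refine ⟨h1, h2.trans ?_⟩
  rw [← mul_assoc, ENNReal.ofReal_mul (by positivity), ENNReal.ofReal_toReal hf.2.ne]
  gcongr
  linarith
end
end

section
/- Let n∈ℕ and let φ:ℝⁿ→ℝⁿ satisfy c₁·|x−y| ≤ |φ(x)−φ(y)| ≤ c₂·|x−y| for all x,y∈ℝⁿ and some constants 0<c₁≤c₂. Then φ is bijective, and its inverse φ⁻¹:ℝⁿ→ℝⁿ satisfies c₂⁻¹·|u−v| ≤ |φ⁻¹(u)−φ⁻¹(v)| ≤ c₁⁻¹·|u−v| for all u,v∈ℝⁿ. -/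
/-!
The substance is surjectivity, proved here without algebraic topology by using Rademacher's theorem
and the change of variables formula.

Suppose a bi-Lipschitz `φ` misses a point, say `0`. Its range is closed, so it misses a ball around
`0`. Let `G` be a Lipschitz extension of `φ⁻¹` to the whole space, and let `Φ` push the points of
norm less than `R` off that small ball radially onto the sphere of radius `R`. Then `F = G ∘ Φ ∘ φ` is Lipschitz, is the
identity off the bounded open set `V = {x | ‖φ x‖ < R}`, and maps `V` into the image under `G` of a
sphere, a compact null set. Hence `F` misses a ball around some `p ∈ V`, and a second radial push,
away from `p`, turns `F` into a Lipschitz retraction of a large ball onto its bounding sphere.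

Such a retraction `x ↦ x + h x` does not exist (`no_lipschitz_retraction`): the integral over the
ball of `det (1 + t Dh)` is a polynomial in `t`. For small `t` it equals the volume of the ball,
since `x ↦ x + t h x` is then a bijection of the ball, so it equals the volume at `t = 1` as well;
but at `t = 1` the integrand vanishes because the map takes values in a sphere. Polynomiality enters
through Lagrange interpolation at finitely many small values of `t`.
-/

noncomputable section

open MeasureTheory Metric Set Module
open scoped NNReal ENNReal

section LipschitzDegree

variable {E : Type*} [NormedAddCommGroup E] [InnerProductSpace ℝ E]

/-- Null sets are measured with the Hausdorff measure of the top dimension: it is a Haar measure, and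
it scales explicitly under Lipschitz maps. -/
lemma lipschitz_image_null [MeasurableSpace E] [BorelSpace E] {K : ℝ≥0} {f : E → E}
    (hf : LipschitzWith K f) {s : Set E} (hs : μH[finrank ℝ E] s = 0) :
    μH[finrank ℝ E] (f '' s) = 0 := by
  have := hf.hausdorffMeasure_image_le (Nat.cast_nonneg (finrank ℝ E)) s
  simpa [hs] using this

/-! ### The radial push onto a sphere -/

/-- The map fixing every `y` with `‖y‖ ≥ ρ` and moving `y` radially onto the sphere of radius `ρ`
when `δ ≤ ‖y‖ ≤ ρ`. On the ball of radius `δ`, where the radial direction is singular, `y / ‖y‖` is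
replaced by `y / δ`, which makes the map globally Lipschitz. -/
def radialPush (ρ δ : ℝ) (y : E) : E :=
  y + max (ρ - ‖y‖) 0 • (max ‖y‖ δ)⁻¹ • y

lemma radialPush_of_le {ρ δ : ℝ} {y : E} (hy : ρ ≤ ‖y‖) : radialPush ρ δ y = y := by
  simp [radialPush, max_eq_right (sub_nonpos.2 hy)]

lemma norm_radialPush {ρ δ : ℝ} (hδ : 0 < δ) {y : E} (h1 : δ ≤ ‖y‖) (h2 : ‖y‖ ≤ ρ) :
    ‖radialPush ρ δ y‖ = ρ := by
  have hy : 0 < ‖y‖ := hδ.trans_le h1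
  have : radialPush ρ δ y = (ρ * ‖y‖⁻¹) • y := by
    rw [radialPush, max_eq_left (sub_nonneg.2 h2), max_eq_left h1, smul_smul]
    nth_rewrite 1 [← one_smul ℝ y]
    rw [← add_smul]
    congr 1
    field_simp
    ring
  rw [this, norm_smul, norm_mul, norm_inv, norm_norm, Real.norm_of_nonneg (hy.le.trans h2)]
  field_simp

lemma lipschitz_radialPush {ρ δ : ℝ} (hρ : 0 ≤ ρ) (hδ : 0 < δ) :
    ∃ K : ℝ≥0, LipschitzWith K (radialPush ρ δ : E → E) := by
  have hunit : ∀ y z : E,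
      ‖(max ‖y‖ δ)⁻¹ • y - (max ‖z‖ δ)⁻¹ • z‖ ≤ 2 * δ⁻¹ * ‖y - z‖ := by
    intro y z
    set m := max ‖y‖ δ with hm
    set k := max ‖z‖ δ with hk
    have hmδ : δ ≤ m := le_max_right _ _
    have hm0 : 0 < m := hδ.trans_le hmδ
    have hk0 : 0 < k := hδ.trans_le (le_max_right _ _)
    have hmi : m⁻¹ ≤ δ⁻¹ := inv_anti₀ hδ hmδ
    have hzk : ‖z‖ * k⁻¹ ≤ 1 := by
      rw [← div_eq_mul_inv, div_le_one hk0]; exact le_max_left _ _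
    have hkm : |k - m| ≤ ‖y - z‖ := by
      refine (abs_max_sub_max_le_abs _ _ _).trans ?_
      rw [norm_sub_rev]
      exact abs_norm_sub_norm_le _ _
    have hsplit : m⁻¹ • y - k⁻¹ • z = m⁻¹ • (y - z) + (m⁻¹ * (k - m) * k⁻¹) • z := by
      have : m⁻¹ * (k - m) * k⁻¹ = m⁻¹ - k⁻¹ := by field_simp
      rw [this, smul_sub, sub_smul]; abel
    rw [hsplit]
    refine (norm_add_le _ _).trans ?_
    rw [norm_smul, norm_smul, norm_mul, norm_mul, Real.norm_of_nonneg (inv_pos.2 hm0).le,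
      Real.norm_of_nonneg (inv_pos.2 hk0).le, Real.norm_eq_abs]
    have h1 : m⁻¹ * ‖y - z‖ ≤ δ⁻¹ * ‖y - z‖ :=
      mul_le_mul_of_nonneg_right hmi (norm_nonneg _)
    have h2 : m⁻¹ * |k - m| * k⁻¹ * ‖z‖ ≤ δ⁻¹ * ‖y - z‖ * 1 := by
      rw [mul_assoc _ k⁻¹, mul_comm k⁻¹]
      gcongr
    linarith
  have hle : ∀ z : E, ‖(max ‖z‖ δ)⁻¹ • z‖ ≤ 1 := by
    intro z
    have hk0 : 0 < max ‖z‖ δ := hδ.trans_le (le_max_right _ _)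
    rw [norm_smul, Real.norm_of_nonneg (inv_pos.2 hk0).le, inv_mul_le_one₀ hk0]
    exact le_max_left _ _
  refine ⟨Real.toNNReal (2 + 2 * ρ * δ⁻¹), LipschitzWith.of_dist_le_mul fun y z => ?_⟩
  rw [Real.coe_toNNReal _ (by positivity), dist_eq_norm, dist_eq_norm, radialPush, radialPush]
  set a := max (ρ - ‖y‖) 0 with ha
  set b := max (ρ - ‖z‖) 0 with hb
  set u := (max ‖y‖ δ)⁻¹ • y with hu
  set w := (max ‖z‖ δ)⁻¹ • z with hw
  have hab : |a - b| ≤ ‖y - z‖ := by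
    refine (abs_max_sub_max_le_abs _ _ _).trans ?_
    rw [sub_sub_sub_cancel_left, norm_sub_rev]
    exact abs_norm_sub_norm_le _ _
  have hbρ : |b| ≤ ρ := by
    rw [abs_of_nonneg (le_max_right _ _)]
    exact max_le (by linarith [norm_nonneg z]) hρ
  have hsplit : y + a • u - (z + b • w) = (y - z) + ((a - b) • u + b • (u - w)) := by
    rw [sub_smul, smul_sub]; abel
  rw [hsplit]
  have h1 : ‖(a - b) • u‖ ≤ ‖y - z‖ * 1 := by
    rw [norm_smul]
    exact mul_le_mul hab (hle y) (norm_nonneg _) (norm_nonneg _)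
  have h2 : ‖b • (u - w)‖ ≤ ρ * (2 * δ⁻¹ * ‖y - z‖) := by
    rw [norm_smul]
    exact mul_le_mul hbρ (hunit y z) (norm_nonneg _) hρ
  have h3 := norm_add_le (y - z) ((a - b) • u + b • (u - w))
  have h4 := norm_add_le ((a - b) • u) (b • (u - w))
  linarith

/-! ### Determinants of `1 + tA` -/

variable [FiniteDimensional ℝ E]

/-- `t ↦ det (1 + tA)` is a polynomial of degree at most `dim E`, hence is recovered by Lagrange
interpolation from its values at more than `dim E` nodes, with weights not depending on `A`. -/
lemma det_one_add_smul_eq_interpolate (A : E →L[ℝ] E) {ι : Type*} [DecidableEq ι] (s : Finset ι)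
    (v : ι → ℝ) (hv : Set.InjOn v s) (hs : finrank ℝ E < s.card) (t : ℝ) :
    (1 + t • A).det =
      ∑ i ∈ s, (1 + v i • A).det * (Lagrange.basis s v i).eval t := by
  classical
  let b := finBasis ℝ E
  let M := LinearMap.toMatrix b b (A : E →ₗ[ℝ] E)
  let p : Polynomial ℝ := ((Polynomial.X : Polynomial ℝ) • M.map Polynomial.C
    + (1 : Matrix (Fin (finrank ℝ E)) (Fin (finrank ℝ E)) ℝ).map Polynomial.C).det
  have hp : ∀ r : ℝ, p.eval r = (1 + r • A).det := by
    intro r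
    have h1 : p.eval r = (r • M + 1).det := by
      rw [← Polynomial.coe_evalRingHom, RingHom.map_det]
      congr 1
      ext i j
      rcases eq_or_ne i j with rfl | hij
      · simp
        ring
      · simp [hij]
        ring
    rw [h1, ContinuousLinearMap.det, ← LinearMap.det_toMatrix b]
    congr 1
    simp [M, add_comm]
  have hdeg : p.degree < s.card := by
    have h1 : p.natDegree ≤ finrank ℝ E := by
      simpa [p] using Polynomial.natDegree_det_X_add_C_le M 1
    exact lt_of_le_of_lt Polynomial.degree_le_natDegree (by exact_mod_cast h1.trans_lt hs)
  have := congrArg (Polynomial.eval t) (Lagrange.eq_interpolate hv hdeg)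
  rw [Lagrange.interpolate_apply, Polynomial.eval_finsetSum] at this
  simpa [hp] using this

/-- The determinant does not vanish along the segment from `1` to `1 + A`, and it equals `1` at the
start. -/
lemma det_one_add_pos (A : E →L[ℝ] E) (hA : ‖A‖ < 1) : 0 < (1 + A).det := by
  have hne : ∀ s ∈ Icc (0 : ℝ) 1, (1 + s • A).det ≠ 0 := by
    intro s hs
    have h1 : ‖-(s • A)‖ < 1 := by
      rw [norm_neg, norm_smul, Real.norm_of_nonneg hs.1]
      nlinarith [norm_nonneg A, hs.1, hs.2]
    have h2 := isUnit_one_sub_of_norm_lt_one h1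
    rw [sub_neg_eq_add] at h2
    have h3 : IsUnit ((1 + s • A : E →L[ℝ] E) : E →ₗ[ℝ] E) :=
      h2.map (ContinuousLinearMap.toLinearMapRingHom : (E →L[ℝ] E) →+* (E →ₗ[ℝ] E))
    exact ((LinearMap.isUnit_iff_isUnit_det _).1 h3).ne_zero
  by_contra hcon
  push Not at hcon
  have hcont : ContinuousOn (fun s : ℝ => (1 + s • A).det) (Icc 0 1) := by
    have := ContinuousLinearMap.continuous_det (𝕜 := ℝ) (E := E)
    exact (this.comp (by fun_prop : Continuous fun s : ℝ => 1 + s • A)).continuousOn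
  have h0 : (1 + (0 : ℝ) • A).det = 1 := by
    simp [ContinuousLinearMap.det]
  obtain ⟨s, hs, hs0⟩ := intermediate_value_Icc' zero_le_one hcont
    (show (0 : ℝ) ∈ _ from ⟨by simpa using hcon, by simp only [h0]; exact zero_le_one⟩)
  exact hne s hs hs0

/-! ### No Lipschitz retraction onto a sphere -/

variable [MeasurableSpace E] [BorelSpace E]

/-- If `h` is Lipschitz and vanishes off the ball `B` of radius `ρ`, then for small `t` the map
`x ↦ x + t h(x)` is a bijection of `B` with positive Jacobian, so its Jacobian integrates to the
volume of `B`. The integral runs over the points of differentiability of `h`, which by Rademacher's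
theorem fill `B` up to a null set. -/
lemma perturb_id_volume {L : ℝ≥0} {h : E → E} (hL : LipschitzWith L h) {ρ : ℝ}
    (h0 : ∀ x, ρ ≤ ‖x‖ → h x = 0) {t : ℝ} (ht : |t| * L < 1) :
    IntegrableOn (fun x => (1 + t • fderiv ℝ h x).det)
      (ball 0 ρ ∩ {x | DifferentiableAt ℝ h x}) μH[finrank ℝ E] ∧
    ∫ x in ball 0 ρ ∩ {x | DifferentiableAt ℝ h x}, (1 + t • fderiv ℝ h x).det ∂μH[finrank ℝ E]
      = (μH[finrank ℝ E] : Measure E).real (ball 0 ρ) := by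
  set μ : Measure E := μH[finrank ℝ E] with hμ
  set S := ball (0 : E) ρ ∩ {x | DifferentiableAt ℝ h x} with hS
  set f : E → E := fun x => x + t • h x with hf
  have hSm : MeasurableSet S := measurableSet_ball.inter (measurableSet_of_differentiableAt ℝ h)
  have htL : LipschitzWith (‖t‖₊ * L) (fun x => t • h x) :=
    (lipschitzWith_smul t).comp hL
  have hlt : (‖t‖₊ * L : ℝ≥0) < 1 := by
    rw [← NNReal.coe_lt_coe]; simpa using ht
  have hfL : LipschitzWith (1 + ‖t‖₊ * L) f := LipschitzWith.id.add htL
  have hinj : Function.Injective f := by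
    intro x y hxy
    have h1 : x - y = t • h y - t • h x := by
      simp only [hf] at hxy
      rw [sub_eq_sub_iff_add_eq_add, hxy, add_comm]
    have h2 := htL.dist_le_mul y x
    rw [dist_eq_norm, dist_eq_norm, ← h1, norm_sub_rev y x] at h2
    have h3 : ((‖t‖₊ * L : ℝ≥0) : ℝ) < 1 := by exact_mod_cast hlt
    have h4 : ‖x - y‖ = 0 := by nlinarith [norm_nonneg (x - y)]
    exact sub_eq_zero.1 (norm_eq_zero.1 h4)
  have hsurj : Function.Surjective f := by
    intro y
    have hc : ContractingWith (‖t‖₊ * L) (fun x => y - t • h x) := by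
      refine ⟨hlt, ?_⟩
      have := (LipschitzWith.const y).sub htL
      simpa using this
    refine ⟨hc.fixedPoint, ?_⟩
    have := hc.fixedPoint_isFixedPt
    have h1 : y - t • h hc.fixedPoint = hc.fixedPoint := this
    simp only [hf]
    nth_rewrite 1 [← h1]
    abel
  have hfix : ∀ x, ρ ≤ ‖x‖ → f x = x := fun x hx => by simp [hf, h0 x hx]
  have himB : f '' ball 0 ρ = ball 0 ρ := by
    ext y
    constructor
    · rintro ⟨x, hx, rfl⟩
      by_contra hy
      have hy' : ρ ≤ ‖f x‖ := by simpa using hy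
      have := hinj (hfix _ hy')
      rw [this] at hy
      exact hy hx
    · intro hy
      obtain ⟨x, rfl⟩ := hsurj y
      refine ⟨x, ?_, rfl⟩
      by_contra hx
      have hx' : ρ ≤ ‖x‖ := by simpa using hx
      rw [hfix x hx'] at hy
      exact hx hy
  have hnull : μ (ball 0 ρ \ S) = 0 := by
    refine measure_mono_null ?_ (ae_iff.1 (hL.ae_differentiableAt (μ := μ)))
    rintro x ⟨hx, hx'⟩ hd
    exact hx' ⟨hx, hd⟩
  have himS : f '' S =ᵐ[μ] ball (0 : E) ρ := by
    rw [ae_eq_set]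
    constructor
    · have : f '' S \ ball 0 ρ = ∅ := by
        rw [sdiff_eq_empty, ← himB]
        exact image_mono inter_subset_left
      simp [this]
    · refine measure_mono_null ?_ (lipschitz_image_null hfL hnull)
      rw [image_sdiff hinj, himB]
  have hder : ∀ x ∈ S, HasFDerivWithinAt f (1 + t • fderiv ℝ h x) S x := by
    intro x hx
    have h1 : HasFDerivAt h (fderiv ℝ h x) x := hx.2.hasFDerivAt
    exact ((hasFDerivAt_id x).add (h1.const_smul t)).hasFDerivWithinAt
  have hpos : ∀ x, |(1 + t • fderiv ℝ h x).det| = (1 + t • fderiv ℝ h x).det := by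
    intro x
    refine abs_of_pos (det_one_add_pos _ ?_)
    rw [norm_smul]
    exact lt_of_le_of_lt (mul_le_mul_of_nonneg_left (norm_fderiv_le_of_lipschitz ℝ hL)
      (norm_nonneg _)) ht
  have hI := integrableOn_image_iff_integrableOn_abs_det_fderiv_smul μ hSm hder hinj.injOn
    (fun _ => (1 : ℝ))
  have hE := integral_image_eq_integral_abs_det_fderiv_smul μ hSm hder hinj.injOn
    (fun _ => (1 : ℝ))
  simp only [hpos, smul_eq_mul, mul_one] at hI hE
  refine ⟨hI.1 ?_, ?_⟩
  · refine integrableOn_const ?_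
    rw [measure_congr himS]
    exact measure_ball_lt_top.ne
  · rw [← hE, setIntegral_congr_set himS]
    simp

/-- No Lipschitz self-map `x ↦ x + h(x)` of `E` is the identity off the ball of radius `ρ` and maps that
ball into its bounding sphere. -/
lemma no_lipschitz_retraction {L : ℝ≥0} {h : E → E} (hL : LipschitzWith L h) {ρ : ℝ} (hρ : 0 < ρ)
    (h0 : ∀ x, ρ ≤ ‖x‖ → h x = 0) (h1 : ∀ x, ‖x‖ ≤ ρ → ‖x + h x‖ = ρ) : False := by
  set μ : Measure E := μH[finrank ℝ E] with hμ
  set S := ball (0 : E) ρ ∩ {x | DifferentiableAt ℝ h x} with hS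
  have hSm : MeasurableSet S := measurableSet_ball.inter (measurableSet_of_differentiableAt ℝ h)
  -- `‖x + h x‖²` is constant on the ball, so the image of the derivative at `x` is orthogonal to the
  -- nonzero vector `x + h x`.
  have hdet : ∀ x ∈ S, (1 + (1 : ℝ) • fderiv ℝ h x).det = 0 := by
    intro x hx
    have hd : HasFDerivAt (fun y => y + h y) (1 + (1 : ℝ) • fderiv ℝ h x) x := by
      have h2 : HasFDerivAt h (fderiv ℝ h x) x := hx.2.hasFDerivAt
      rw [one_smul]
      exact (hasFDerivAt_id x).add h2
    have hq := hd.norm_sq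
    have hc : HasFDerivAt (fun y => ‖y + h y‖ ^ 2) (0 : E →L[ℝ] ℝ) x := by
      refine (hasFDerivAt_const (ρ ^ 2) x).congr_of_eventuallyEq ?_
      filter_upwards [isOpen_ball.mem_nhds hx.1] with y hy
      rw [h1 y (by simpa using (mem_ball_zero_iff.1 hy).le)]
    have he := hq.unique hc
    by_contra hne
    have hsurj := (LinearMap.equivOfDetNeZero _ hne).surjective
    obtain ⟨w, hw⟩ := hsurj (x + h x)
    have hw' : (1 + (1 : ℝ) • fderiv ℝ h x) w = x + h x := hw
    have := congrArg (fun T : E →L[ℝ] ℝ => T w) he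
    have h2 : 2 * inner ℝ (x + h x) ((1 + (1 : ℝ) • fderiv ℝ h x) w) = 0 := by
      simpa [inner_add_left, inner_add_right, mul_add] using this
    have h3 : ‖x + h x‖ = 0 := by
      rw [hw', real_inner_self_eq_norm_sq] at h2
      simpa using h2
    rw [h1 x (by simpa using (mem_ball_zero_iff.1 hx.1).le)] at h3
    exact hρ.ne' h3
  let d := finrank ℝ E
  let s := Finset.range (d + 1)
  -- Nodes so small that `perturb_id_volume` applies to each of them.
  let v : ℕ → ℝ := fun i => 1 / ((L + 1) * (i + 1))
  have hv : Set.InjOn v s := by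
    intro i _ j _ hij
    have hL0 : (L : ℝ) + 1 ≠ 0 := by positivity
    have hi : (i : ℝ) + 1 ≠ 0 := by positivity
    have hj : (j : ℝ) + 1 ≠ 0 := by positivity
    simp only [v] at hij
    field_simp at hij
    have : (j : ℝ) = i := by linarith
    exact_mod_cast this.symm
  have hvL : ∀ i, |v i| * L < 1 := by
    intro i
    have hL0 : (0 : ℝ) ≤ L := L.2
    have hi : (0 : ℝ) ≤ i := by positivity
    rw [abs_of_nonneg (by positivity)]
    simp only [v]
    rw [div_mul_eq_mul_div, div_lt_one (by positivity)]
    nlinarith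
  have hvol := fun i => perturb_id_volume hL h0 (hvL i)
  -- The integral of the Jacobian equals the volume at every node, hence also at `t = 1`, because the
  -- Lagrange weights sum to `1`.
  have key : ∫ x in S, (1 + (1 : ℝ) • fderiv ℝ h x).det ∂μ = μ.real (ball 0 ρ) := by
    simp_rw [fun x => det_one_add_smul_eq_interpolate (fderiv ℝ h x) s v hv (by simp [s, d]) 1]
    rw [integral_finsetSum _ (fun i _ => (hvol i).1.mul_const _)]
    simp_rw [integral_mul_const]
    have : ∑ i ∈ s, (Lagrange.basis s v i).eval 1 = 1 := by
      rw [← Polynomial.eval_finsetSum, Lagrange.sum_basis hv ⟨0, by simp [s]⟩]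
      simp
    rw [Finset.sum_congr rfl (fun i _ => by rw [(hvol i).2]), ← Finset.mul_sum, this, mul_one]
  rw [setIntegral_congr_fun hSm hdet, integral_zero] at key
  have : 0 < μ.real (ball (0 : E) ρ) :=
    ENNReal.toReal_pos (measure_ball_pos μ 0 hρ).ne' measure_ball_lt_top.ne
  exact this.ne key

/-! ### Surjectivity of bi-Lipschitz maps -/

/-- The value `0` stands for an arbitrary one: the general case follows by translating `φ`. -/
lemma zero_mem_range_of_biLipschitz {K C : ℝ≥0} {φ : E → E} (hφ : LipschitzWith C φ)
    (hφ' : AntilipschitzWith K φ) : (0 : E) ∈ range φ := by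
  by_contra hnot
  set μ : Measure E := μH[finrank ℝ E] with hμ
  have hcl : IsClosed (range φ) := hφ'.isClosed_range hφ.uniformContinuous
  obtain ⟨δ, hδ, hδball⟩ := Metric.isOpen_iff.1 hcl.isOpen_compl 0 hnot
  have hδφ : ∀ x, δ ≤ ‖φ x‖ := by
    intro x
    by_contra hx
    exact hδball (mem_ball_zero_iff.2 (not_le.1 hx)) ⟨x, rfl⟩
  obtain ⟨G, hG, hGφ⟩ : ∃ G : E → E, LipschitzWith (lipschitzExtensionConstant E * K) G ∧
      ∀ x, G (φ x) = x := by
    have hl : LipschitzOnWith K (Function.invFun φ) (range φ) := by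
      refine LipschitzOnWith.of_dist_le_mul ?_
      rintro _ ⟨x, rfl⟩ _ ⟨y, rfl⟩
      rw [Function.leftInverse_invFun hφ'.injective, Function.leftInverse_invFun hφ'.injective]
      exact hφ'.le_mul_dist x y
    obtain ⟨G, hG, hE⟩ := hl.extend_finite_dimension
    refine ⟨G, hG, fun x => ?_⟩
    rw [← hE ⟨x, rfl⟩, Function.leftInverse_invFun hφ'.injective]
  set R := ‖φ 0‖ + 1 with hR
  have hR0 : 0 < R := by positivity
  obtain ⟨K₁, hK₁⟩ := lipschitz_radialPush (E := E) hR0.le hδ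
  -- `F` is the identity off `V`, and maps `V` into a null set.
  set F : E → E := fun x => G (radialPush R δ (φ x)) with hF
  have hFL := hG.comp (hK₁.comp hφ)
  set V : Set E := {x | ‖φ x‖ < R} with hV
  have hVo : IsOpen V := isOpen_lt hφ.continuous.norm continuous_const
  have hV0 : (0 : E) ∈ V := by simp [hV, hR]
  have hFout : ∀ x, x ∉ V → F x = x := by
    intro x hx
    simp only [hF]
    rw [radialPush_of_le (not_lt.1 hx), hGφ]
  have hFin : ∀ x ∈ V, F x ∈ G '' sphere 0 R := by
    intro x hx
    exact ⟨_, mem_sphere_zero_iff_norm.2 (norm_radialPush hδ (hδφ x) (le_of_lt hx)), rfl⟩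
  have hGc : IsCompact (G '' sphere 0 R) := (isCompact_sphere 0 R).image hG.continuous
  have hGnull : μ (G '' sphere 0 R) = 0 :=
    lipschitz_image_null hG (Measure.addHaar_sphere_of_ne_zero μ 0 hR0.ne')
  have hTo : IsOpen (V \ G '' sphere 0 R) := hVo.sdiff hGc.isClosed
  -- Since the open set `V` is not null, `F` misses some point `p`, together with a ball around it.
  obtain ⟨p, hp⟩ : (V \ G '' sphere 0 R).Nonempty := by
    by_contra hemp
    rw [not_nonempty_iff_eq_empty, sdiff_eq_empty] at hemp
    exact (hVo.measure_pos μ ⟨0, hV0⟩).ne' (measure_mono_null hemp hGnull)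
  obtain ⟨ε, hε, hεball⟩ := Metric.isOpen_iff.1 hTo p hp
  have hεF : ∀ x, ε ≤ ‖F x - p‖ := by
    intro x
    by_contra hx
    have h1 := hεball (mem_ball_iff_norm.2 (not_le.1 hx))
    by_cases hxV : x ∈ V
    · exact h1.2 (hFin x hxV)
    · rw [hFout x hxV] at h1
      exact hxV h1.1
  have hVb : Bornology.IsBounded V := by
    have : V = φ ⁻¹' ball 0 R := by ext; simp [hV]
    rw [this]
    exact hφ'.isBounded_preimage isBounded_ball
  -- With `ρ` this large, `F` maps the ball of radius `ρ` around `p` to itself and is the identity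
  -- outside it; pushing radially away from `p` gives the forbidden retraction.
  obtain ⟨ρ, hρ0, hρ⟩ := (hVb.union hGc.isBounded).subset_ball_lt 0 p
  obtain ⟨K₂, hK₂⟩ := lipschitz_radialPush (E := E) hρ0.le hε
  have hHL : ∃ K₃ : ℝ≥0, LipschitzWith K₃
      (fun x => radialPush ρ ε (F (x + p) - p) - x) := by
    have h1 : LipschitzWith 1 (fun x : E => x + p) := (isometry_add_right p).lipschitz
    have h2 : LipschitzWith 1 (fun x : E => x - p) := by
      simpa [sub_eq_add_neg] using (isometry_add_right (-p)).lipschitz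
    exact ⟨_, (hK₂.comp (h2.comp (hFL.comp h1))).sub LipschitzWith.id⟩
  obtain ⟨K₃, hK₃⟩ := hHL
  refine no_lipschitz_retraction hK₃ hρ0 (fun x hx => ?_) (fun x hx => ?_)
  · have hxV : x + p ∉ V := fun hmem => by
      have := mem_ball_iff_norm.1 (hρ (Or.inl hmem))
      rw [add_sub_cancel_right] at this
      exact absurd this (not_lt.2 hx)
    rw [hFout _ hxV, add_sub_cancel_right, radialPush_of_le hx, sub_self]
  · rw [add_sub_cancel]
    refine norm_radialPush hε (hεF _) ?_
    by_cases hxV : x + p ∈ V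
    · exact (mem_ball_iff_norm.1 (hρ (Or.inr (hFin _ hxV)))).le
    · rwa [hFout _ hxV, add_sub_cancel_right]

end LipschitzDegree

/-- A bi-Lipschitzian map `φ : ℝⁿ → ℝⁿ` with `c₁|x−y| ≤ |φ(x)−φ(y)| ≤ c₂|x−y|`
is bijective (Brouwer's invariance of domain), and its inverse is bi-Lipschitzian with
`c₂⁻¹|u−v| ≤ |φ⁻¹(u)−φ⁻¹(v)| ≤ c₁⁻¹|u−v|`. -/
theorem statement_8 (n : ℕ) (c₁ c₂ : ℝ) (hc₁ : 0 < c₁) (hc₁₂ : c₁ ≤ c₂)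
    (φ : Euc n → Euc n)
    (h : ∀ x y : Euc n, c₁ * ‖x - y‖ ≤ ‖φ x - φ y‖ ∧ ‖φ x - φ y‖ ≤ c₂ * ‖x - y‖) :
    Function.Bijective φ ∧
    ∀ u v : Euc n,
      c₂⁻¹ * ‖u - v‖ ≤ ‖Function.invFun φ u - Function.invFun φ v‖ ∧
      ‖Function.invFun φ u - Function.invFun φ v‖ ≤ c₁⁻¹ * ‖u - v‖ := by
  have hc₂ : 0 < c₂ := hc₁.trans_le hc₁₂
  have hsurj : Function.Surjective φ := by
    intro y
    have hL : LipschitzWith c₂.toNNReal (fun x => φ x - y) :=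
      LipschitzWith.of_dist_le_mul fun a b => by
        rw [Real.coe_toNNReal _ hc₂.le, dist_eq_norm, dist_eq_norm, sub_sub_sub_cancel_right]
        exact (h a b).2
    have hA : AntilipschitzWith c₁⁻¹.toNNReal (fun x => φ x - y) :=
      AntilipschitzWith.of_le_mul_dist fun a b => by
        rw [Real.coe_toNNReal _ (inv_pos.2 hc₁).le, dist_eq_norm, dist_eq_norm,
          sub_sub_sub_cancel_right, le_inv_mul_iff₀ hc₁]
        exact (h a b).1
    obtain ⟨x, hx⟩ := zero_mem_range_of_biLipschitz hL hA
    exact ⟨x, sub_eq_zero.1 hx⟩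
  have hinj : Function.Injective φ := by
    intro x y hxy
    have h1 := (h x y).1
    rw [hxy, sub_self, norm_zero] at h1
    have h2 : ‖x - y‖ = 0 := by nlinarith [norm_nonneg (x - y)]
    exact sub_eq_zero.1 (norm_eq_zero.1 h2)
  refine ⟨⟨hinj, hsurj⟩, fun u v => ?_⟩
  have h1 := h (Function.invFun φ u) (Function.invFun φ v)
  rw [Function.rightInverse_invFun hsurj u, Function.rightInverse_invFun hsurj v] at h1
  rw [inv_mul_le_iff₀ hc₂, le_inv_mul_iff₀ hc₁]
  exact ⟨h1.2, h1.1⟩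
end
end

section
/- Let n∈ℕ and let φ:ℝⁿ→ℝⁿ be injective and continuously differentiable with sup_{x∈ℝⁿ} ‖Dφ(x)‖ < ∞ and |det Dφ(x)| ≥ c for all x∈ℝⁿ and some c>0. Then φ is bijective and bi-Lipschitzian: there exist constants c₁,c₂>0 with c₁·|x−y| ≤ |φ(x)−φ(y)| ≤ c₂·|x−y| for all x,y∈ℝⁿ. Moreover, the inverse φ⁻¹ is continuously differentiable with D(φ⁻¹)(φ(x)) = (Dφ(x))⁻¹ for every x∈ℝⁿ, and inf_{y∈ℝⁿ} |det D(φ⁻¹)(y)| > 0. -/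
/-!
The set of endomorphisms `A` of `ℝⁿ` with `‖A‖ ≤ M` and `|det A| ≥ c` is compact and consists of
invertible maps, so `‖A⁻¹‖` and `|det A|` are bounded on it (`exists_inverse_and_det_bounds`).
By the inverse function theorem the injective map `φ` is open, and its inverse `ψ` is
differentiable on the open set `range φ` with `Dψ(φ x) = (Dφ(x))⁻¹`, hence `‖Dψ‖ ≤ K` there.

Surjectivity (`surjective_of_hasFDerivAt_invFun`): if `range φ` were not the whole space, let `z`
be a point outside of it at minimal distance `R` from `φ 0`. On the ball `B(φ 0, R) ⊆ range φ`,
which is convex, `ψ` is `K`-Lipschitz, so this ball lies in the image under `φ` of the compact ball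
of radius `K R` around `0`. That image is closed, so it contains `z` as well, a contradiction.

The remaining claims follow from the mean value inequality for `φ` and `ψ`, the continuity of
inversion of operators, and `det Dψ(φ x) · det Dφ(x) = 1`.
-/

noncomputable section

open Filter Topology Metric Set

theorem isUnit_of_det_ne_zero {n : ℕ} (A : Euc n →L[ℝ] Euc n) (h : A.det ≠ 0) : IsUnit A := by
  refine ⟨ContinuousLinearEquiv.toUnit (A.toContinuousLinearEquivOfDetNeZero h), ?_⟩
  ext x
  rfl

theorem exists_inverse_and_det_bounds (n : ℕ) (M c : ℝ) (hc : 0 < c) :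
    ∃ K > (0 : ℝ), ∃ B > (0 : ℝ), ∀ A : Euc n →L[ℝ] Euc n, ‖A‖ ≤ M → c ≤ |A.det| →
      ‖Ring.inverse A‖ ≤ K ∧ |A.det| ≤ B := by
  have hdetc : Continuous fun A : Euc n →L[ℝ] Euc n => |A.det| :=
    ContinuousLinearMap.continuous_det.abs
  have hcpt : IsCompact (closedBall (0 : Euc n →L[ℝ] Euc n) M ∩ {A | c ≤ |A.det|}) :=
    (isCompact_closedBall _ _).inter_right (isClosed_le continuous_const hdetc)
  have hinv : ContinuousOn (fun A : Euc n →L[ℝ] Euc n => Ring.inverse A)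
      (closedBall (0 : Euc n →L[ℝ] Euc n) M ∩ {A | c ≤ |A.det|}) := by
    intro A hA
    obtain ⟨u, rfl⟩ := isUnit_of_det_ne_zero A (abs_pos.mp (hc.trans_le hA.2))
    exact (NormedRing.inverse_continuousAt u).continuousWithinAt
  obtain ⟨K, hK⟩ := hcpt.exists_bound_of_continuousOn hinv
  obtain ⟨B, hB⟩ := hcpt.exists_bound_of_continuousOn hdetc.continuousOn
  refine ⟨max K 1, by positivity, max B 1, by positivity, fun A hA hA' => ?_⟩
  have hmem : A ∈ closedBall (0 : Euc n →L[ℝ] Euc n) M ∩ {A | c ≤ |A.det|} :=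
    ⟨by simpa using hA, hA'⟩
  refine ⟨(hK A hmem).trans (le_max_left _ _), le_trans ?_ (le_max_left B 1)⟩
  simpa using hB A hmem

/-- Only points `φ x` of the range are considered, so that the lemma applies before surjectivity
of `φ` is known. -/
theorem hasFDerivAt_invFun {n : ℕ} {φ : Euc n → Euc n} (hinj : Function.Injective φ)
    (hC1 : ContDiff ℝ 1 φ) (hu : ∀ x, IsUnit (fderiv ℝ φ x)) :
    IsOpen (range φ) ∧ ∀ x, ContinuousAt (Function.invFun φ) (φ x) ∧
      HasFDerivAt (Function.invFun φ) (Ring.inverse (fderiv ℝ φ x)) (φ x) := by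
  have hleft : ∀ x, Function.invFun φ (φ x) = x := Function.leftInverse_invFun hinj
  have hnhds : ∀ x, map φ (𝓝 x) = 𝓝 (φ x) := by
    intro x
    obtain ⟨u, hu⟩ := hu x
    have hs : HasStrictFDerivAt φ
        ((ContinuousLinearEquiv.ofUnit u : Euc n ≃L[ℝ] Euc n) : Euc n →L[ℝ] Euc n) x := by
      have := (hC1.contDiffAt (x := x)).hasStrictFDerivAt one_ne_zero
      rw [← hu] at this
      exact this
    exact hs.map_nhds_eq_of_equiv
  have hopen : IsOpen (range φ) :=
    (IsOpenMap.of_nhds_le fun x => (hnhds x).ge).isOpen_range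
  refine ⟨hopen, fun x => ?_⟩
  have hcont : ContinuousAt (Function.invFun φ) (φ x) := by
    have : Tendsto (Function.invFun φ ∘ φ) (𝓝 x) (𝓝 x) := by
      rw [show Function.invFun φ ∘ φ = id from funext hleft]
      exact tendsto_id
    rw [ContinuousAt, ← hnhds x, hleft x]
    exact tendsto_map'_iff.mpr this
  refine ⟨hcont, ?_⟩
  obtain ⟨u, hu⟩ := hu x
  have hd : HasFDerivAt φ
      ((ContinuousLinearEquiv.ofUnit u : Euc n ≃L[ℝ] Euc n) : Euc n →L[ℝ] Euc n)
      (Function.invFun φ (φ x)) := by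
    have := (hC1.differentiable one_ne_zero x).hasFDerivAt
    rw [← hu] at this
    rw [hleft x]
    exact this
  have hev : ∀ᶠ y in 𝓝 (φ x), φ (Function.invFun φ y) = y := by
    filter_upwards [hopen.mem_nhds (mem_range_self x)] with y hy
    exact Function.invFun_eq hy
  have := hd.of_local_left_inverse hcont hev
  rw [← hu, Ring.inverse_unit]
  exact this

theorem surjective_of_hasFDerivAt_invFun {n : ℕ} {φ : Euc n → Euc n}
    (hinj : Function.Injective φ) (hcont : Continuous φ) (hopen : IsOpen (range φ))
    (ψ' : Euc n → Euc n →L[ℝ] Euc n) (K : ℝ) (hK : 0 < K) (hψ' : ∀ x, ‖ψ' x‖ ≤ K)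
    (hd : ∀ x, HasFDerivAt (Function.invFun φ) (ψ' x) (φ x)) :
    Function.Surjective φ := by
  have hleft : ∀ x, Function.invFun φ (φ x) = x := Function.leftInverse_invFun hinj
  by_contra hns
  have hne : (range φ)ᶜ.Nonempty := by
    rw [nonempty_compl]
    exact fun h => hns (range_eq_univ.mp h)
  obtain ⟨z, hz, hzR⟩ := hopen.isClosed_compl.exists_infDist_eq_dist hne (φ 0)
  set R := infDist (φ 0) (range φ)ᶜ with hR
  have hball : ball (φ 0) R ⊆ range φ := ball_infDist_compl_subset
  have hRpos : 0 < R := by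
    rw [hzR]
    refine dist_pos.mpr ?_
    rintro rfl
    exact hz (mem_range_self 0)
  have hsub : ball (φ 0) R ⊆ φ '' closedBall 0 (K * R) := by
    intro y hy
    refine ⟨Function.invFun φ y, ?_, Function.invFun_eq (hball hy)⟩
    have h1 := (convex_ball (φ 0) R).norm_image_sub_le_of_norm_hasFDerivWithin_le
      (f := Function.invFun φ) (f' := fun y => ψ' (Function.invFun φ y)) (C := K)
      (fun w hw => by
        obtain ⟨x, rfl⟩ := hball hw
        rw [hleft]
        exact (hd x).hasFDerivWithinAt)
      (fun w _ => hψ' _) (mem_ball_self hRpos) hy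
    rw [hleft, sub_zero] at h1
    rw [mem_closedBall_zero_iff]
    refine h1.trans ?_
    gcongr
    rw [← dist_eq_norm]
    exact (mem_ball.mp hy).le
  have hclosed : IsClosed (φ '' closedBall 0 (K * R)) :=
    ((isCompact_closedBall _ _).image hcont).isClosed
  have hzmem : z ∈ closure (ball (φ 0) R) := by
    rw [closure_ball _ hRpos.ne', mem_closedBall, dist_comm, hzR]
  obtain ⟨x, -, hx⟩ := closure_minimal hsub hclosed hzmem
  exact hz ⟨x, hx⟩

/-- An injective `C¹` map `φ : ℝⁿ → ℝⁿ` with uniformly bounded derivative and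
`|det Dφ(x)| ≥ c > 0` is bijective and bi-Lipschitzian; its inverse is `C¹` with
`D(φ⁻¹)(φ(x)) = (Dφ(x))⁻¹` (expressed by the two composition identities), and the
Jacobian determinant of the inverse is uniformly bounded away from `0`. -/
theorem statement_9 (n : ℕ) (φ : Euc n → Euc n) (hinj : Function.Injective φ)
    (hC1 : ContDiff ℝ 1 φ) (M : ℝ) (hM : ∀ x, ‖fderiv ℝ φ x‖ ≤ M)
    (c : ℝ) (hc : 0 < c)
    (hdet : ∀ x, c ≤ |LinearMap.det (fderiv ℝ φ x).toLinearMap|) :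
    Function.Bijective φ ∧
    (∃ c₁ > (0:ℝ), ∃ c₂ > (0:ℝ), ∀ x y : Euc n,
      c₁ * ‖x - y‖ ≤ ‖φ x - φ y‖ ∧ ‖φ x - φ y‖ ≤ c₂ * ‖x - y‖) ∧
    ContDiff ℝ 1 (Function.invFun φ) ∧
    (∀ x : Euc n,
      (fderiv ℝ (Function.invFun φ) (φ x)).comp (fderiv ℝ φ x) =
        ContinuousLinearMap.id ℝ (Euc n) ∧
      (fderiv ℝ φ x).comp (fderiv ℝ (Function.invFun φ) (φ x)) =
        ContinuousLinearMap.id ℝ (Euc n)) ∧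
    ∃ ε > (0:ℝ), ∀ y : Euc n,
      ε ≤ |LinearMap.det (fderiv ℝ (Function.invFun φ) y).toLinearMap| := by
  have hdet' : ∀ x, c ≤ |(fderiv ℝ φ x).det| := hdet
  have hu : ∀ x, IsUnit (fderiv ℝ φ x) := fun x =>
    isUnit_of_det_ne_zero _ (abs_pos.mp (hc.trans_le (hdet' x)))
  obtain ⟨K, hK, B, hB, hKB⟩ := exists_inverse_and_det_bounds n M c hc
  obtain ⟨hopen, hinv⟩ := hasFDerivAt_invFun hinj hC1 hu
  have hleft : ∀ x, Function.invFun φ (φ x) = x := Function.leftInverse_invFun hinj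
  have hsurj : Function.Surjective φ :=
    surjective_of_hasFDerivAt_invFun hinj hC1.continuous hopen
      (fun x => Ring.inverse (fderiv ℝ φ x)) K hK (fun x => (hKB _ (hM x) (hdet' x)).1)
      (fun x => (hinv x).2)
  have hright : ∀ y, φ (Function.invFun φ y) = y := fun y => Function.invFun_eq (hsurj y)
  have hψd : ∀ y, HasFDerivAt (Function.invFun φ)
      (Ring.inverse (fderiv ℝ φ (Function.invFun φ y))) y := by
    intro y
    have := (hinv (Function.invFun φ y)).2
    rwa [hright] at this
  have hψc : Continuous (Function.invFun φ) :=
    continuous_iff_continuousAt.mpr fun y => (hψd y).continuousAt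
  have hcomp : ∀ x : Euc n,
      (fderiv ℝ (Function.invFun φ) (φ x)).comp (fderiv ℝ φ x) =
        ContinuousLinearMap.id ℝ (Euc n) ∧
      (fderiv ℝ φ x).comp (fderiv ℝ (Function.invFun φ) (φ x)) =
        ContinuousLinearMap.id ℝ (Euc n) := by
    intro x
    rw [(hinv x).2.fderiv]
    exact ⟨Ring.inverse_mul_cancel _ (hu x), Ring.mul_inverse_cancel _ (hu x)⟩
  refine ⟨⟨hinj, hsurj⟩, ?_, ?_, hcomp, ?_⟩
  · refine ⟨K⁻¹, by positivity, max M 1, by positivity, fun x y => ⟨?_, ?_⟩⟩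
    · have h := convex_univ.norm_image_sub_le_of_norm_hasFDerivWithin_le
        (f := Function.invFun φ) (C := K) (fun w _ => (hψd w).hasFDerivWithinAt)
        (fun w _ => (hKB _ (hM _) (hdet' _)).1) (mem_univ (φ y)) (mem_univ (φ x))
      rw [hleft, hleft] at h
      rwa [inv_mul_le_iff₀ hK]
    · have h := convex_univ.norm_image_sub_le_of_norm_fderiv_le (𝕜 := ℝ) (f := φ)
        (fun w _ => hC1.differentiable one_ne_zero w)
        (fun w _ => (hM w).trans (le_max_left M 1)) (mem_univ y) (mem_univ x)
      exact h
  · rw [contDiff_one_iff_fderiv]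
    refine ⟨fun y => (hψd y).differentiableAt, ?_⟩
    rw [show fderiv ℝ (Function.invFun φ) =
      fun y => Ring.inverse (fderiv ℝ φ (Function.invFun φ y)) from
        funext fun y => (hψd y).fderiv]
    refine continuous_iff_continuousAt.mpr fun y => ?_
    obtain ⟨u, hu⟩ := hu (Function.invFun φ y)
    have h1 : ContinuousAt (Ring.inverse : (Euc n →L[ℝ] Euc n) → _)
        (fderiv ℝ φ (Function.invFun φ y)) := by
      rw [← hu]
      exact NormedRing.inverse_continuousAt u
    have h2 : Continuous fun y => fderiv ℝ φ (Function.invFun φ y) :=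
      (hC1.continuous_fderiv one_ne_zero).comp hψc
    exact ContinuousAt.comp (f := fun y => fderiv ℝ φ (Function.invFun φ y)) h1 h2.continuousAt
  · refine ⟨B⁻¹, by positivity, fun y => ?_⟩
    obtain ⟨x, rfl⟩ := hsurj y
    have h1 : LinearMap.det (fderiv ℝ (Function.invFun φ) (φ x)).toLinearMap *
        LinearMap.det (fderiv ℝ φ x).toLinearMap = 1 := by
      rw [← LinearMap.det_comp, ← ContinuousLinearMap.toLinearMap_comp, (hcomp x).1]
      simp
    have h2 : |LinearMap.det (fderiv ℝ φ x).toLinearMap| ≤ B := (hKB _ (hM x) (hdet' x)).2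
    rw [eq_inv_of_mul_eq_one_left h1, abs_inv]
    exact inv_anti₀ (hc.trans_le (hdet x)) h2
end
end

section
/- Let n∈ℕ, l∈ℕ₀ with l<n, r∈ℕ, 1≤p<∞ and s>r−1+(n−l)/p. Then there exists a constant c>0 such that for every r-times continuously differentiable function f:ℝⁿ→ℂ satisfying (D^β f)(x',0)=0 for all x'∈ℝ^l and all β∈ℕ_l^n with |β|≤r−1, one has (∫_{ℝⁿ} d(x)^{−sp} |f(x)|^p dx)^{1/p} ≤ c · Σ_{α∈ℕ_l^n, |α|=r} (∫_{ℝⁿ} d(x)^{(−s+r)p} |D^α f(x)|^p dx)^{1/p}, where both sides are interpreted in [0,∞] (in particular, if the left-hand side is infinite then so is the right-hand side). -/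
/-!
The inequality of order `r` follows by induction from the one of order `1`, since
`D^β (∂ᵢ f) = D^(β + eᵢ) f` for sufficiently smooth `f` (`mderiv_pderiv'`): each derivative `∂ᵢ f`
perpendicular to the plane satisfies the hypotheses with `r - 1` and `s - 1` in place of `r` and
`s` (`exists_wnorm_le`).

For order `1` (`wnorm_le_sum_pderiv'`), `f` vanishes on the plane, and the fundamental theorem of
calculus along `t ↦ (x', t x'')` gives
`|f(x)| ≤ d(x) ∑ᵢ ∫₀¹ |∂ᵢ f(x', t x'')| dt`. With `G = ∑ᵢ d^(1-s) |∂ᵢ f|` this reads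
`d(x)^(-s) |f(x)| ≤ ∫₀¹ t^(s-1) G(x', t x'') dt`. The dilation by `t` multiplies `L_p` norms by
`t^(-(n-l)/p)`, so Minkowski's integral inequality (`lintegral_dil_average_le`, proved from
Jensen's inequality and Tonelli's theorem) bounds the `L_p` norm by
`∫₀¹ t^(s-1-(n-l)/p) dt · ‖G‖_p`, where the integral is finite because `s > (n-l)/p`.
-/


open MeasureTheory ENNReal

noncomputable section

/-- The partial derivative `∂/∂xᵢ`. -/
noncomputable def pderiv' (n : ℕ) (i : Fin n) (f : Euc n → ℂ) : Euc n → ℂ :=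
  fun x => fderiv ℝ f x (EuclideanSpace.single i 1)

/-- The multi-index derivative `D^β f = ∂₀^{β 0} ∂₁^{β 1} ⋯ ∂_{n-1}^{β (n-1)} f`. -/
noncomputable def mderiv (n : ℕ) (β : Fin n → ℕ) (f : Euc n → ℂ) : Euc n → ℂ :=
  (List.finRange n).foldr (fun i g => (pderiv' n i)^[β i] g) f

/-- The distance `d(x) = |x''|` of `x = (x',x'') ∈ ℝ^l × ℝ^{n-l}` to the plane `ℝ^l`. -/
noncomputable def distToPlane (n l : ℕ) (x : Euc n) : ℝ :=
  Real.sqrt (∑ i : Fin n, if l ≤ (i : ℕ) then (x i) ^ 2 else 0)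

/-! ### Partial derivatives of smooth functions commute -/

lemma contDiff_pderiv' {n : ℕ} (i : Fin n) {f : Euc n → ℂ} {m : ℕ}
    (hf : ContDiff ℝ (m + 1 : ℕ) f) : ContDiff ℝ (m : ℕ) (pderiv' n i f) := by
  have h : ContDiff ℝ (m : ℕ) (fderiv ℝ f) := hf.fderiv_right (by norm_cast)
  exact h.clm_apply contDiff_const

lemma contDiff_iterate_pderiv' {n : ℕ} (i : Fin n) (k : ℕ) : ∀ {f : Euc n → ℂ} {m : ℕ},
    ContDiff ℝ (m + k : ℕ) f → ContDiff ℝ (m : ℕ) ((pderiv' n i)^[k] f) := by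
  induction k with
  | zero => intro f m hf; simpa using hf
  | succ k ih =>
    intro f m hf
    rw [Function.iterate_succ_apply]
    exact ih (contDiff_pderiv' i (by simpa [add_assoc] using hf))

/-- The composition of partial derivatives along a list of coordinates; `mderiv` is the case of
the list of all coordinates. -/
def listDeriv (n : ℕ) (L : List (Fin n)) (β : Fin n → ℕ) (f : Euc n → ℂ) : Euc n → ℂ :=
  L.foldr (fun i g => (pderiv' n i)^[β i] g) f

lemma contDiff_listDeriv {n : ℕ} (β : Fin n → ℕ) (L : List (Fin n)) :
    ∀ {f : Euc n → ℂ} {m : ℕ}, ContDiff ℝ (m + (L.map β).sum : ℕ) f →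
      ContDiff ℝ (m : ℕ) (listDeriv n L β f) := by
  induction L with
  | nil => intro f m hf; simpa [listDeriv] using hf
  | cons j L ih =>
    intro f m hf
    exact contDiff_iterate_pderiv' j (β j) (ih (by simpa [add_assoc] using hf))

lemma pderiv'_comm {n : ℕ} (i j : Fin n) {f : Euc n → ℂ} (hf : ContDiff ℝ 2 f) :
    pderiv' n i (pderiv' n j f) = pderiv' n j (pderiv' n i f) := by
  ext x
  have hd : DifferentiableAt ℝ (fderiv ℝ f) x :=
    ((hf.fderiv_right (m := 1) (by norm_num)).differentiable (by norm_num)) x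
  have hs : IsSymmSndFDerivAt ℝ f x := hf.contDiffAt.isSymmSndFDerivAt (by simp)
  have key : ∀ a b : Fin n, pderiv' n a (pderiv' n b f) x =
      fderiv ℝ (fderiv ℝ f) x (EuclideanSpace.single a 1) (EuclideanSpace.single b 1) := by
    intro a b
    unfold pderiv'
    rw [fderiv_clm_apply hd (differentiableAt_const _)]
    simp
  rw [key, key]
  exact hs _ _

lemma pderiv'_iterate_comm {n : ℕ} (i j : Fin n) (k : ℕ) : ∀ {f : Euc n → ℂ},
    ContDiff ℝ (k + 1 : ℕ) f →
    (pderiv' n j)^[k] (pderiv' n i f) = pderiv' n i ((pderiv' n j)^[k] f) := by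
  induction k with
  | zero => intro f _; rfl
  | succ k ih =>
    intro f hf
    rw [Function.iterate_succ_apply, Function.iterate_succ_apply,
      pderiv'_comm j i (hf.of_le (by norm_cast; omega)), ih (contDiff_pderiv' j hf)]

lemma listDeriv_pderiv'_comm {n : ℕ} (i : Fin n) (β : Fin n → ℕ) (L : List (Fin n)) :
    ∀ {f : Euc n → ℂ}, ContDiff ℝ ((L.map β).sum + 1 : ℕ) f →
    listDeriv n L β (pderiv' n i f) = pderiv' n i (listDeriv n L β f) := by
  induction L with
  | nil => intro f _; rfl
  | cons j L ih =>
    intro f hf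
    simp only [List.map_cons, List.sum_cons] at hf
    have h1 := ih (f := f) (hf.of_le (by norm_cast; omega))
    have h2 : ContDiff ℝ (β j + 1 : ℕ) (listDeriv n L β f) :=
      contDiff_listDeriv β L (by convert hf using 2; ring)
    change (pderiv' n j)^[β j] (listDeriv n L β (pderiv' n i f)) =
      pderiv' n i ((pderiv' n j)^[β j] (listDeriv n L β f))
    rw [h1, pderiv'_iterate_comm i j (β j) h2]

lemma listDeriv_congr {n : ℕ} {β γ : Fin n → ℕ} {L : List (Fin n)} (f : Euc n → ℂ)
    (h : ∀ j ∈ L, β j = γ j) : listDeriv n L β f = listDeriv n L γ f := by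
  induction L with
  | nil => rfl
  | cons j L ih =>
    change (pderiv' n j)^[β j] (listDeriv n L β f) = (pderiv' n j)^[γ j] (listDeriv n L γ f)
    rw [ih fun k hk => h k (List.mem_cons_of_mem _ hk), h j List.mem_cons_self]

lemma listDeriv_pderiv' {n : ℕ} (i : Fin n) (β : Fin n → ℕ) (L : List (Fin n)) (hL : L.Nodup)
    (hi : i ∈ L) {f : Euc n → ℂ} (hf : ContDiff ℝ ((L.map β).sum + 1 : ℕ) f) :
    listDeriv n L β (pderiv' n i f) = listDeriv n L (β + Pi.single i 1) f := by
  induction L with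
  | nil => simp at hi
  | cons j L ih =>
    simp only [List.map_cons, List.sum_cons] at hf
    have hf' : ContDiff ℝ ((L.map β).sum + 1 : ℕ) f := hf.of_le (by norm_cast; omega)
    change (pderiv' n j)^[β j] (listDeriv n L β (pderiv' n i f)) =
      (pderiv' n j)^[(β + Pi.single i 1 : Fin n → ℕ) j] (listDeriv n L (β + Pi.single i 1) f)
    rw [List.nodup_cons] at hL
    by_cases hij : i = j
    · subst hij
      have h1 : listDeriv n L (β + Pi.single i 1) f = listDeriv n L β f :=
        listDeriv_congr f fun k hk => by
          have : k ≠ i := fun h => hL.1 (h ▸ hk)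
          simp [this]
      rw [h1, listDeriv_pderiv'_comm i β L hf']
      simp [Function.iterate_succ_apply]
    · have hi' : i ∈ L := by
        rcases List.mem_cons.1 hi with h | h
        · exact absurd h hij
        · exact h
      rw [ih hL.2 hi' hf']
      simp [Ne.symm hij]

lemma mderiv_pderiv' {n : ℕ} (i : Fin n) (β : Fin n → ℕ) {f : Euc n → ℂ}
    (hf : ContDiff ℝ ((∑ j, β j) + 1 : ℕ) f) :
    mderiv n β (pderiv' n i f) = mderiv n (β + Pi.single i 1) f := by
  refine listDeriv_pderiv' i β (List.finRange n) (List.nodup_finRange n) (List.mem_finRange i) ?_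
  rwa [← List.ofFn_eq_map, List.sum_ofFn]

/-! ### Dilations perpendicular to the plane -/

/-- The coordinates perpendicular to the plane. -/
def perpIdx (n l : ℕ) : Finset (Fin n) := Finset.univ.filter fun i => l ≤ (i : ℕ)

lemma mem_perpIdx {n l : ℕ} {i : Fin n} : i ∈ perpIdx n l ↔ l ≤ (i : ℕ) := by
  simp [perpIdx]

/-- The dilation `(x', x'') ↦ (x', t x'')` perpendicular to the plane. -/
def dil (n l : ℕ) (t : ℝ) : Euc n →ₗ[ℝ] Euc n :=
  Matrix.toLin (EuclideanSpace.basisFun (Fin n) ℝ).toBasis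
    (EuclideanSpace.basisFun (Fin n) ℝ).toBasis
    (Matrix.diagonal fun i => if l ≤ (i : ℕ) then t else 1)

lemma dil_apply {n l : ℕ} (t : ℝ) (x : Euc n) (i : Fin n) :
    dil n l t x i = (if l ≤ (i : ℕ) then t else 1) * x i := by
  have h := congrFun (Matrix.repr_toLin (EuclideanSpace.basisFun (Fin n) ℝ).toBasis
    (EuclideanSpace.basisFun (Fin n) ℝ).toBasis
    (Matrix.diagonal fun i : Fin n => if l ≤ (i : ℕ) then t else 1) x) i
  simpa [dil, Matrix.mulVec_diagonal] using h

lemma dil_det {n l : ℕ} (hl : l < n) (t : ℝ) : LinearMap.det (dil n l t) = t ^ (n - l) := by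
  rw [dil, LinearMap.det_toLin, Matrix.det_diagonal, Finset.prod_ite, Finset.prod_const,
    Finset.prod_const_one, mul_one]
  congr 1
  have h := Fin.card_Ici (⟨l, hl⟩ : Fin n)
  rw [← h]
  congr 1
  ext i
  simp [Fin.le_def]

-- Unfolding `dil` to a matrix sum makes unification expensive in the measurability arguments.
attribute [irreducible] dil

lemma lintegral_dil {n l : ℕ} (hl : l < n) {t : ℝ} (ht : 0 < t) {G : Euc n → ℝ≥0∞}
    (hG : Measurable G) :
    ∫⁻ x, G (dil n l t x) = ENNReal.ofReal (t ^ (-((n : ℝ) - l))) * ∫⁻ x, G x := by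
  have hdet : LinearMap.det (dil n l t) ≠ 0 := by rw [dil_det hl]; positivity
  have hmeas : Measurable (dil n l t) :=
    (LinearMap.continuous_of_finiteDimensional (dil n l t)).measurable
  rw [← lintegral_map hG hmeas, Measure.map_linearMap_addHaar_eq_smul_addHaar _ hdet,
    lintegral_smul_measure, smul_eq_mul, dil_det hl, abs_of_pos (by positivity),
    Real.rpow_neg ht.le, ← Nat.cast_sub hl.le, Real.rpow_natCast]

lemma continuous_dil (n l : ℕ) : Continuous fun z : Euc n × ℝ => dil n l z.2 z.1 := by
  refine (PiLp.continuous_toLp 2 _).comp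
    (f := fun z : Euc n × ℝ => fun i => dil n l z.2 z.1 i) (continuous_pi fun i => ?_)
  simp only [dil_apply]
  split_ifs <;> fun_prop

lemma distToPlane_dil {n l : ℕ} {t : ℝ} (ht : 0 ≤ t) (x : Euc n) :
    distToPlane n l (dil n l t x) = t * distToPlane n l x := by
  unfold distToPlane
  rw [← Real.sqrt_sq ht, ← Real.sqrt_mul (sq_nonneg t), Real.sqrt_sq ht, Finset.mul_sum]
  congr 1
  refine Finset.sum_congr rfl fun i _ => ?_
  rw [dil_apply]
  split_ifs <;> ring

lemma continuous_distToPlane (n l : ℕ) : Continuous (distToPlane n l) := by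
  unfold distToPlane
  refine Real.continuous_sqrt.comp (continuous_finsetSum _ fun i _ => ?_)
  split_ifs <;> fun_prop

lemma abs_le_distToPlane {n l : ℕ} (x : Euc n) {i : Fin n} (hi : l ≤ (i : ℕ)) :
    |x i| ≤ distToPlane n l x := by
  refine Real.abs_le_sqrt ?_
  have := Finset.single_le_sum (f := fun i : Fin n => if l ≤ (i : ℕ) then (x i) ^ 2 else 0)
    (fun i _ => by dsimp only; split_ifs <;> positivity) (Finset.mem_univ i)
  simpa [hi] using this

/-! ### Averages of dilates in `L_p` -/

/-- Jensen's inequality for the measure with density `w`, unnormalised. -/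
lemma rpow_lintegral_mul_le {α : Type*} [MeasurableSpace α] {μ : Measure α} {p : ℝ} (hp : 1 ≤ p)
    {w g : α → ℝ≥0∞} (hw : Measurable w) (hg : Measurable g) :
    (∫⁻ t, w t * g t ∂μ) ^ p ≤ (∫⁻ t, w t ∂μ) ^ (p - 1) * ∫⁻ t, w t * g t ^ p ∂μ := by
  have hp0 : 0 < p := by linarith
  have h := eLpNorm'_le_eLpNorm'_mul_rpow_measure_univ (μ := μ.withDensity w) (f := g)
    one_pos hp hg.aestronglyMeasurable
  simp only [eLpNorm', enorm_eq_self, ENNReal.rpow_one, div_one] at h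
  rw [lintegral_withDensity_eq_lintegral_mul _ hw hg,
    lintegral_withDensity_eq_lintegral_mul _ hw (hg.pow_const p), withDensity_apply _ .univ,
    Measure.restrict_univ] at h
  have h2 := ENNReal.rpow_le_rpow h hp0.le
  rw [ENNReal.mul_rpow_of_nonneg _ _ hp0.le, ← ENNReal.rpow_mul, ← ENNReal.rpow_mul,
    one_div_mul_cancel hp0.ne', ENNReal.rpow_one, mul_comm (lintegral _ _),
    show (1 - 1 / p) * p = p - 1 by field_simp] at h2
  exact h2

/-- Boundedness on `L_p` of the average of the dilates of `G` with density `t^(s-1)`, the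
Minkowski integral inequality. The weight `t^(σ-1)` with `σ = s - (n-l)/p` in Jensen's
inequality makes the dilations contribute the same density. -/
lemma lintegral_dil_average_le {n l : ℕ} (hl : l < n) {p s : ℝ} (hp : 1 ≤ p)
    {G : Euc n → ℝ≥0∞} (hG : Measurable G) :
    ∫⁻ x, (∫⁻ t in Set.Ioc (0:ℝ) 1, ENNReal.ofReal (t ^ (s - 1)) * G (dil n l t x)) ^ p ≤
      (∫⁻ t in Set.Ioc (0:ℝ) 1, ENNReal.ofReal (t ^ (s - ((n : ℝ) - l) / p - 1))) ^ p *
        ∫⁻ x, G x ^ p := by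
  have hp0 : 0 < p := by linarith
  set σ : ℝ := s - ((n : ℝ) - l) / p with hσ
  set w : ℝ → ℝ≥0∞ := fun t => ENNReal.ofReal (t ^ (σ - 1)) with hwdef
  have hw : Measurable w := by fun_prop
  set K := ∫⁻ t in Set.Ioc (0:ℝ) 1, w t with hK
  have hGd : Measurable fun z : Euc n × ℝ => G (dil n l z.2 z.1) :=
    hG.comp (continuous_dil n l).measurable
  have hGx : ∀ x, Measurable fun t : ℝ => G (dil n l t x) := fun x =>
    hGd.comp (measurable_const.prodMk measurable_id)
  have hnl : s * p - σ * p = (n : ℝ) - l := by rw [hσ]; field_simp; ring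
  calc ∫⁻ x, (∫⁻ t in Set.Ioc (0:ℝ) 1, ENNReal.ofReal (t ^ (s - 1)) * G (dil n l t x)) ^ p
      ≤ ∫⁻ x, K ^ (p - 1) * ∫⁻ t in Set.Ioc (0:ℝ) 1,
          w t * (ENNReal.ofReal (t ^ (s - σ)) * G (dil n l t x)) ^ p := by
        refine lintegral_mono fun x => ?_
        refine le_trans (le_of_eq ?_) (rpow_lintegral_mul_le hp hw
          (g := fun t => ENNReal.ofReal (t ^ (s - σ)) * G (dil n l t x)) ?_)
        · congr 1
          refine setLIntegral_congr_fun measurableSet_Ioc fun t ht => ?_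
          simp only [hwdef]
          rw [← mul_assoc, ← ENNReal.ofReal_mul (Real.rpow_nonneg ht.1.le _),
            ← Real.rpow_add ht.1]
          ring_nf
        · exact Measurable.mul (by fun_prop) (hGx x)
    _ = K ^ (p - 1) * ∫⁻ t in Set.Ioc (0:ℝ) 1, ∫⁻ x,
          w t * (ENNReal.ofReal (t ^ (s - σ)) * G (dil n l t x)) ^ p := by
        have hm : Measurable fun z : Euc n × ℝ =>
            w z.2 * (ENNReal.ofReal (z.2 ^ (s - σ)) * G (dil n l z.2 z.1)) ^ p :=
          (hw.comp measurable_snd).mul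
            ((Measurable.mul (by fun_prop) hGd).pow_const p)
        rw [lintegral_const_mul _ hm.lintegral_prod_right', lintegral_lintegral_swap hm.aemeasurable]
    _ = K ^ (p - 1) * ∫⁻ t in Set.Ioc (0:ℝ) 1, w t * ∫⁻ x, G x ^ p := by
        congr 1
        refine setLIntegral_congr_fun measurableSet_Ioc fun t ht => ?_
        have hGt : Measurable fun x => G (dil n l t x) :=
          hGd.comp (measurable_id.prodMk measurable_const)
        simp_rw [ENNReal.mul_rpow_of_nonneg _ _ hp0.le]
        rw [lintegral_const_mul _ ((hGt.pow_const p).const_mul _),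
          lintegral_const_mul _ (hGt.pow_const p),
          lintegral_dil hl ht.1 (G := fun x => G x ^ p) (hG.pow_const p), ← mul_assoc (_ ^ p),
          ENNReal.ofReal_rpow_of_nonneg (Real.rpow_nonneg ht.1.le _) hp0.le,
          ← ENNReal.ofReal_mul (by have := ht.1; positivity), ← Real.rpow_mul ht.1.le,
          ← Real.rpow_add ht.1, show (s - σ) * p + -((n : ℝ) - l) = 0 by rw [← hnl]; ring]
        simp
    _ = K ^ p * ∫⁻ x, G x ^ p := by
        rw [lintegral_mul_const _ hw, ← mul_assoc, ← hK]
        congr 1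
        conv_lhs => rw [← ENNReal.rpow_one K, ← ENNReal.rpow_mul, one_mul]
        rw [← ENNReal.rpow_add_of_nonneg _ _ (by linarith) zero_le_one]
        congr 1; ring

lemma lintegral_rpow_Ioc_ne_top {σ : ℝ} (hσ : 0 < σ) :
    ∫⁻ t in Set.Ioc (0:ℝ) 1, ENNReal.ofReal (t ^ (σ - 1)) ≠ ⊤ := by
  have h := intervalIntegral.intervalIntegrable_rpow' (a := 0) (b := 1) (r := σ - 1) (by linarith)
  rw [intervalIntegrable_iff_integrableOn_Ioc_of_le zero_le_one] at h
  exact h.lintegral_lt_top.ne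

lemma rpow_lintegral_sum_le {α ι : Type*} [MeasurableSpace α] {μ : Measure α} {p : ℝ}
    (hp : 1 ≤ p) (S : Finset ι) (G : ι → α → ℝ≥0∞) (hG : ∀ i, Measurable (G i)) :
    (∫⁻ x, (∑ i ∈ S, G i x) ^ p ∂μ) ^ (1 / p) ≤ ∑ i ∈ S, (∫⁻ x, G i x ^ p ∂μ) ^ (1 / p) := by
  classical
  have hp0 : 0 < p := by linarith
  induction S using Finset.induction_on with
  | empty => simp [hp0]
  | insert a S ha ih =>
    simp only [Finset.sum_insert ha]
    refine le_trans (ENNReal.lintegral_Lp_add_le (f := G a) (g := fun x => ∑ i ∈ S, G i x)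
      (hG a).aemeasurable ?_ hp) (by gcongr)
    exact (Finset.measurable_fun_sum S fun i _ => hG i).aemeasurable

/-! ### The inequality of first order -/

/-- Pointwise estimate from the fundamental theorem of calculus along the segment from
`(x', 0)` to `(x', x'')`. -/
lemma enorm_le_lintegral_pderiv' {n l : ℕ} {f : Euc n → ℂ} (hf : ContDiff ℝ 1 f)
    (h0 : ∀ x : Euc n, (∀ i : Fin n, l ≤ (i : ℕ) → x i = 0) → f x = 0) (x : Euc n) :
    ‖f x‖ₑ ≤ ∫⁻ t in Set.Ioc (0:ℝ) 1, ENNReal.ofReal (distToPlane n l x) *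
      ∑ i ∈ perpIdx n l, ‖pderiv' n i f (dil n l t x)‖ₑ := by
  set v : Euc n := ∑ i ∈ perpIdx n l, x i • EuclideanSpace.single i (1:ℝ) with hv
  have hvi : ∀ i : Fin n, v i = if l ≤ (i : ℕ) then x i else 0 := by
    intro i
    simp [hv, Finset.sum_apply, Pi.single_apply, mem_perpIdx]
  have hline : ∀ t : ℝ, dil n l t x = dil n l 0 x + t • v := by
    intro t
    ext i
    simp only [PiLp.add_apply, PiLp.smul_apply, dil_apply, hvi, smul_eq_mul]
    split_ifs <;> ring
  have hder : ∀ t : ℝ, HasDerivAt (fun t : ℝ => f (dil n l t x))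
      (fderiv ℝ f (dil n l t x) v) t := by
    intro t
    have h1 : HasDerivAt (fun t : ℝ => dil n l t x) v t := by
      rw [show (fun t : ℝ => dil n l t x) = fun t => dil n l 0 x + t • v from funext hline]
      simpa using ((hasDerivAt_id t).smul_const v).const_add (dil n l 0 x)
    exact ((hf.differentiable (by norm_num)) _).hasFDerivAt.comp_hasDerivAt t h1
  have hcl : Continuous fun t : ℝ => dil n l t x :=
    (continuous_dil n l).comp (Continuous.prodMk continuous_const continuous_id)
  have hc : Continuous fun t : ℝ => fderiv ℝ f (dil n l t x) v :=
    ((hf.continuous_fderiv (by norm_num)).comp hcl).clm_apply continuous_const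
  have hFTC := intervalIntegral.integral_eq_sub_of_hasDerivAt (a := 0) (b := 1)
    (fun t _ => hder t) (hc.intervalIntegrable _ _)
  have hx1 : dil n l 1 x = x := by ext i; simp [dil_apply]
  have hx0 : f (dil n l 0 x) = 0 := h0 _ fun i hi => by simp [dil_apply, hi]
  rw [hx1, hx0, sub_zero, intervalIntegral.integral_of_le zero_le_one] at hFTC
  rw [← hFTC]
  refine (enorm_integral_le_lintegral_enorm _).trans (lintegral_mono fun t => ?_)
  rw [hv, map_sum, Finset.mul_sum]
  refine (enorm_sum_le _ _).trans (Finset.sum_le_sum fun i hi => ?_)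
  rw [map_smul, enorm_smul]
  refine mul_le_mul_left ?_ _
  rw [Real.enorm_eq_ofReal_abs]
  exact ENNReal.ofReal_le_ofReal (abs_le_distToPlane x (mem_perpIdx.1 hi))

/-- The weighted norm `‖d^{-s} f‖_{L_p}` with values in `[0, ∞]`. -/
def wnorm (n l : ℕ) (p s : ℝ) (f : Euc n → ℂ) : ℝ≥0∞ :=
  (∫⁻ x : Euc n, ENNReal.ofReal (distToPlane n l x ^ (-(s * p)) * ‖f x‖ ^ p)) ^ (1 / p)

lemma wnorm_eq {n l : ℕ} {p : ℝ} (hp : 0 ≤ p) (s : ℝ) (f : Euc n → ℂ) :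
    wnorm n l p s f =
      (∫⁻ x : Euc n, (ENNReal.ofReal (distToPlane n l x ^ (-s)) * ‖f x‖ₑ) ^ p) ^ (1 / p) := by
  unfold wnorm
  congr 1
  refine lintegral_congr fun x => ?_
  have hd : 0 ≤ distToPlane n l x := Real.sqrt_nonneg _
  rw [← ofReal_norm, ← ENNReal.ofReal_mul (Real.rpow_nonneg hd _),
    ENNReal.ofReal_rpow_of_nonneg (by positivity) hp,
    Real.mul_rpow (Real.rpow_nonneg hd _) (norm_nonneg _), ← Real.rpow_mul hd, neg_mul]

/-- The case of first order derivatives. -/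
lemma wnorm_le_sum_pderiv' {n l : ℕ} (hl : l < n) {p s : ℝ} (hp : 1 ≤ p)
    {f : Euc n → ℂ} (hf : ContDiff ℝ 1 f)
    (h0 : ∀ x : Euc n, (∀ i : Fin n, l ≤ (i : ℕ) → x i = 0) → f x = 0) :
    wnorm n l p s f ≤
      (∫⁻ t in Set.Ioc (0:ℝ) 1, ENNReal.ofReal (t ^ (s - ((n : ℝ) - l) / p - 1))) *
        ∑ i ∈ perpIdx n l, wnorm n l p (s - 1) (pderiv' n i f) := by
  have hp0 : 0 < p := by linarith
  set K := ∫⁻ t in Set.Ioc (0:ℝ) 1, ENNReal.ofReal (t ^ (s - ((n : ℝ) - l) / p - 1)) with hK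
  set G : Fin n → Euc n → ℝ≥0∞ := fun i y =>
    ENNReal.ofReal (distToPlane n l y ^ (-(s - 1))) * ‖pderiv' n i f y‖ₑ with hGdef
  have hdm : Measurable (distToPlane n l) := (continuous_distToPlane n l).measurable
  have hGm : ∀ i, Measurable (G i) := by
    intro i
    have h1 : Continuous (pderiv' n i f) :=
      (hf.continuous_fderiv (by norm_num)).clm_apply continuous_const
    exact (hdm.pow_const _).ennreal_ofReal.mul h1.measurable.enorm
  set Gs : Euc n → ℝ≥0∞ := fun y => ∑ i ∈ perpIdx n l, G i y with hGs
  have hGsm : Measurable Gs := Finset.measurable_fun_sum _ fun i _ => hGm i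
  have hpt : ∀ x, ENNReal.ofReal (distToPlane n l x ^ (-s)) * ‖f x‖ₑ ≤
      ∫⁻ t in Set.Ioc (0:ℝ) 1, ENNReal.ofReal (t ^ (s - 1)) * Gs (dil n l t x) := by
    intro x
    rcases (show 0 ≤ distToPlane n l x from Real.sqrt_nonneg _).eq_or_lt with hd | hd
    · have : f x = 0 := h0 x fun i hi => by
        have := abs_le_distToPlane x hi
        rw [← hd] at this
        exact abs_nonpos_iff.1 this
      simp [this]
    · refine (mul_le_mul_right (enorm_le_lintegral_pderiv' hf h0 x) _).trans ?_
      rw [← lintegral_const_mul' _ _ ENNReal.ofReal_ne_top]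
      refine le_of_eq (setLIntegral_congr_fun measurableSet_Ioc fun t ht => ?_)
      simp only [hGs, hGdef, distToPlane_dil ht.1.le]
      rw [← mul_assoc, Finset.mul_sum, Finset.mul_sum]
      refine Finset.sum_congr rfl fun i _ => ?_
      rw [← mul_assoc]
      congr 1
      have ht0 := ht.1
      rw [← ENNReal.ofReal_mul (by positivity), ← ENNReal.ofReal_mul (by positivity),
        Real.mul_rpow ht0.le hd.le, ← mul_assoc, ← Real.rpow_add ht0]
      congr 1
      rw [add_neg_cancel, Real.rpow_zero, one_mul, neg_sub, sub_eq_neg_add, Real.rpow_add hd,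
        Real.rpow_one]
  calc wnorm n l p s f
      ≤ (K ^ p * ∫⁻ x, Gs x ^ p) ^ (1 / p) := by
        rw [wnorm_eq hp0.le]
        refine ENNReal.rpow_le_rpow ?_ (by positivity)
        exact (lintegral_mono fun x => ENNReal.rpow_le_rpow (hpt x) hp0.le).trans
          (lintegral_dil_average_le hl hp hGsm)
    _ = K * (∫⁻ x, Gs x ^ p) ^ (1 / p) := by
        rw [ENNReal.mul_rpow_of_nonneg _ _ (by positivity), ← ENNReal.rpow_mul,
          mul_one_div_cancel hp0.ne', ENNReal.rpow_one]
    _ ≤ K * ∑ i ∈ perpIdx n l, (∫⁻ x, G i x ^ p) ^ (1 / p) := by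
        gcongr
        exact rpow_lintegral_sum_le hp _ G hGm
    _ = _ := by
        simp_rw [wnorm_eq hp0.le, hGdef]

/-! ### The inequality of order `r` -/

/-- The inequality of order `r`, by induction on `r`: the first order inequality bounds `f` by its
perpendicular first derivatives, to which the inequality of order `r - 1` with exponent `s - 1`
applies. Order `0` is trivial and needs no condition on `s`. -/
lemma exists_wnorm_le {n l : ℕ} (hl : l < n) {p : ℝ} (hp : 1 ≤ p) (r : ℕ) :
    ∀ s : ℝ, (0 < r → (r : ℝ) - 1 + ((n : ℝ) - l) / p < s) →
    ∃ C : ℝ≥0∞, C ≠ ⊤ ∧ ∀ f : Euc n → ℂ, ContDiff ℝ (r : ℕ) f →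
      (∀ β : Fin n → ℕ, (∀ i : Fin n, (i : ℕ) < l → β i = 0) → (∑ i, β i) < r →
        ∀ x : Euc n, (∀ i : Fin n, l ≤ (i : ℕ) → x i = 0) → mderiv n β f x = 0) →
      wnorm n l p s f ≤ C * ∑ β ∈ (Finset.Nat.antidiagonalTuple n r).filter
          (fun β => ∀ i : Fin n, (i : ℕ) < l → β i = 0), wnorm n l p (s - r) (mderiv n β f) := by
  have hmz : ∀ f : Euc n → ℂ, mderiv n 0 f = f := by
    intro f
    change listDeriv n (List.finRange n) 0 f = f
    induction List.finRange n with
    | nil => rfl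
    | cons j L ih => exact ih
  induction r with
  | zero =>
    intro s _
    refine ⟨1, one_ne_top, fun f _ _ => ?_⟩
    have hmem : (0 : Fin n → ℕ) ∈ (Finset.Nat.antidiagonalTuple n 0).filter
        (fun β => ∀ i : Fin n, (i : ℕ) < l → β i = 0) := by
      simp [Finset.Nat.mem_antidiagonalTuple]
    refine le_trans (le_of_eq ?_) ((Finset.single_le_sum
      (f := fun β => wnorm n l p (s - (0 : ℕ)) (mderiv n β f)) (fun _ _ => zero_le) hmem).trans_eq
      (one_mul _).symm)
    simp [hmz]
  | succ r ih =>
    intro s hs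
    have hs1 := hs (Nat.succ_pos r)
    push_cast at hs1
    obtain ⟨C, hC, hCf⟩ := ih (s - 1) (fun _ => by linarith)
    have hσ : 0 < s - ((n : ℝ) - l) / p := by
      have : (0 : ℝ) ≤ r := Nat.cast_nonneg r
      linarith
    set K := ∫⁻ t in Set.Ioc (0:ℝ) 1, ENNReal.ofReal (t ^ (s - ((n : ℝ) - l) / p - 1)) with hK
    have hKtop : K ≠ ⊤ := lintegral_rpow_Ioc_ne_top hσ
    set A := (Finset.Nat.antidiagonalTuple n r).filter
      (fun β => ∀ i : Fin n, (i : ℕ) < l → β i = 0) with hA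
    refine ⟨K * ((perpIdx n l).card * (C * A.card)), ?_, fun f hf hv => ?_⟩
    · finiteness
    have hf1 : ContDiff ℝ 1 f := hf.of_le (by norm_cast; omega)
    set S := ∑ β ∈ (Finset.Nat.antidiagonalTuple n (r + 1)).filter
      (fun β => ∀ i : Fin n, (i : ℕ) < l → β i = 0),
      wnorm n l p (s - (r + 1 : ℕ)) (mderiv n β f) with hS
    have hperp : ∀ i ∈ perpIdx n l, ∀ β : Fin n → ℕ, (∀ j : Fin n, (j : ℕ) < l → β j = 0) →
        ∀ j : Fin n, (j : ℕ) < l → (β + Pi.single i 1 : Fin n → ℕ) j = 0 := by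
      intro i hi β hβ j hj
      have hji : j ≠ i := by
        rintro rfl
        exact absurd (mem_perpIdx.1 hi) (not_le.2 hj)
      simp [hβ j hj, hji]
    have hsum : ∀ (i : Fin n) (β : Fin n → ℕ),
        ∑ j, (β + Pi.single i 1 : Fin n → ℕ) j = (∑ j, β j) + 1 := by
      intro i β
      simp [Finset.sum_add_distrib]
    have hterm : ∀ i ∈ perpIdx n l,
        wnorm n l p (s - 1) (pderiv' n i f) ≤ C * A.card * S := by
      intro i hi
      refine (hCf (pderiv' n i f) (contDiff_pderiv' i hf) ?_).trans ?_
      · intro β hβ hβr x hx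
        rw [mderiv_pderiv' i β (hf.of_le (by norm_cast; omega))]
        exact hv _ (hperp i hi β hβ) (by rw [hsum]; omega) x hx
      · rw [mul_assoc, ← nsmul_eq_mul]
        refine mul_le_mul_right (Finset.sum_le_card_nsmul _ _ _ fun β hβ => ?_) _
        rw [hA, Finset.mem_filter, Finset.Nat.mem_antidiagonalTuple] at hβ
        rw [mderiv_pderiv' i β (hf.of_le (by rw [hβ.1])),
          show s - 1 - (r : ℝ) = s - (r + 1 : ℕ) by push_cast; ring]
        refine Finset.single_le_sum
          (f := fun γ => wnorm n l p (s - (r + 1 : ℕ)) (mderiv n γ f)) (fun _ _ => zero_le) ?_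
        rw [Finset.mem_filter, Finset.Nat.mem_antidiagonalTuple, hsum, hβ.1]
        exact ⟨rfl, hperp i hi β hβ.2⟩
    refine (wnorm_le_sum_pderiv' hl hp hf1 ?_).trans ?_
    · intro x hx
      simpa [hmz] using hv 0 (fun _ _ => rfl) (by simp) x hx
    · rw [mul_assoc, mul_assoc, ← nsmul_eq_mul]
      exact mul_le_mul_right (Finset.sum_le_card_nsmul _ _ _ hterm) _

/-- Hardy inequality at the `l`-dimensional plane: if `f ∈ C^r(ℝⁿ)` and all derivatives
`D^β f` with `β ∈ ℕ_l^n`, `|β| ≤ r−1`, vanish on `ℝ^l`, then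
`‖d^{-s} f‖_{L_p} ≤ c Σ_{|α|=r, α ∈ ℕ_l^n} ‖d^{-s+r} D^α f‖_{L_p}` (both sides in `[0,∞]`). -/
theorem statement_10 (n l r : ℕ) (hl : l < n) (hr : 0 < r) (p s : ℝ) (hp : 1 ≤ p)
    (hs : (r : ℝ) - 1 + ((n : ℝ) - l) / p < s) :
    ∃ c > (0:ℝ), ∀ f : Euc n → ℂ, ContDiff ℝ (r : ℕ∞) f →
      (∀ β : Fin n → ℕ, (∀ i : Fin n, (i : ℕ) < l → β i = 0) → (∑ i, β i) ≤ r - 1 →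
        ∀ x : Euc n, (∀ i : Fin n, l ≤ (i : ℕ) → x i = 0) → mderiv n β f x = 0) →
      (∫⁻ x : Euc n, ENNReal.ofReal (distToPlane n l x ^ (-(s * p)) * ‖f x‖ ^ p)) ^ (1 / p)
        ≤ ENNReal.ofReal c *
          ∑ β ∈ (Finset.Nat.antidiagonalTuple n r).filter
              (fun β => ∀ i : Fin n, (i : ℕ) < l → β i = 0),
            (∫⁻ x : Euc n,
                ENNReal.ofReal (distToPlane n l x ^ ((-s + r) * p) * ‖mderiv n β f x‖ ^ p))
              ^ (1 / p) := by
  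
  obtain ⟨C, hC, h⟩ := exists_wnorm_le hl hp r s fun _ => hs
  -- `C` may vanish, so the real constant is `C + 1`.
  refine ⟨C.toReal + 1, by positivity, fun f hf hv => ?_⟩
  have h1 := h f (by exact_mod_cast hf) fun β hβ hβr => hv β hβ (by omega)
  simp only [wnorm] at h1
  refine h1.trans ?_
  have hc : C ≤ ENNReal.ofReal (C.toReal + 1) := by
    rw [ENNReal.le_ofReal_iff_toReal_le hC (by positivity)]
    linarith
  refine (mul_le_mul_left hc _).trans_eq ?_
  simp only [show -s + (r : ℝ) = -(s - r) by ring, neg_mul]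
end
end

section
/- Let n∈ℕ, s∈ℝ, 0<p≤∞, K>0, L>0 and ρ≥max(K,L). There exists a constant c>0 such that for every ν∈ℕ₀, every m∈ℤⁿ, every (s,p)_{K,L}-atom a located at Q_{ν,m} with constants d>1 and C>0, and every φ∈𝒞^ρ(ℝⁿ), the product φ·a is an (s,p)_{K,L}-atom located at Q_{ν,m} with constants d and c·C·‖φ|𝒞^ρ(ℝⁿ)‖. -/
/-!
The Hölder spaces `𝒞ˢ(ℝⁿ)`, `s > 0`, have three properties: they are multiplication algebras
(`HolderBound.mul`), they decrease in `s` (`HolderBound.mono`), and the dilations `f ↦ f (r · )`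
with `0 < r ≤ 1` do not increase the norm (`HolderBound.comp_smul`). Multiplying an atom by `φ`
clearly preserves the support condition. For the smoothness condition, `φ (2^{-ν} · )` is bounded
in `𝒞ᴷ` by the dilation and monotonicity properties, and the algebra property applies to its product
with `a (2^{-ν} · )`. For the moment condition, `∫ ψ (φ a) = ∫ (ψ φ) a`, where `ψ φ ∈ 𝒞ᴸ` by
monotonicity and the algebra property, so that the moment condition of `a` applies.

The three properties are proved for the real-valued predicate `HolderBound`, which is equivalent
to a bound on `holderNorm` up to a factor depending on `s` only. Monotonicity rests on an
interpolation: for `|x - y| ≥ 1` the increment of a derivative is at most twice its supremum, and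
for `|x - y| ≤ 1` it is controlled by the mean value inequality or by the Hölder condition.
The algebra property follows by applying the Leibniz bound to the decomposition
`f_τ g_τ - f g = (f_τ - f) g_τ + f (g_τ - g)`, where the subscript denotes translation by `τ`.
-/

open MeasureTheory ENNReal
open scoped Classical ENNReal NNReal

noncomputable section

/-! ### Hölder bounds: increments, monotonicity, dilations -/

/-- A real number `N` bounds the derivatives of `f` up to order `M` uniformly, and the `θ`-Hölder
quotients of the derivative of order `M`. The required differentiability is included. -/
structure HolderBound (n : ℕ) (M : ℕ) (θ N : ℝ) (f : Euc n → ℂ) : Prop where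
  smooth : ContDiff ℝ (M : ℕ∞) f
  sup : ∀ k ≤ M, ∀ x, ‖iteratedFDeriv ℝ k f x‖ ≤ N
  quot : ∀ x y, ‖iteratedFDeriv ℝ M f x - iteratedFDeriv ℝ M f y‖ ≤ N * ‖x - y‖ ^ θ

namespace HolderBound

variable {n M : ℕ} {θ N : ℝ} {f : Euc n → ℂ}

lemma nonneg (h : HolderBound n M θ N f) : 0 ≤ N :=
  (norm_nonneg _).trans (h.sup 0 (Nat.zero_le _) 0)

lemma contDiff_nat (h : HolderBound n M θ N f) {k : ℕ} (hk : k ≤ M) : ContDiff ℝ k f :=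
  h.smooth.of_le (by exact_mod_cast hk)

/-- Every derivative of order `k ≤ M` is Hölder continuous with any exponent `η ∈ [0, 1]`, subject
to `η ≤ θ` for the top order `k = M`. -/
lemma increment (h : HolderBound n M θ N f) {k : ℕ} (hk : k ≤ M) {η : ℝ} (hη : 0 ≤ η)
    (hη1 : η ≤ 1) (hkη : k = M → η ≤ θ) (x y : Euc n) :
    ‖iteratedFDeriv ℝ k f x - iteratedFDeriv ℝ k f y‖ ≤ 2 * N * ‖x - y‖ ^ η := by
  have hN := h.nonneg
  rcases le_total 1 ‖x - y‖ with h1 | h1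
  · calc _ ≤ ‖iteratedFDeriv ℝ k f x‖ + ‖iteratedFDeriv ℝ k f y‖ := norm_sub_le _ _
      _ ≤ N + N := add_le_add (h.sup k hk x) (h.sup k hk y)
      _ = 2 * N * 1 := by ring
      _ ≤ _ := by
        gcongr
        exact Real.one_le_rpow h1 hη
  rcases eq_or_ne x y with rfl | hxy
  · simp only [sub_self, norm_zero]
    positivity
  have h0 : 0 < ‖x - y‖ := norm_pos_iff.2 (sub_ne_zero.2 hxy)
  have hpos : 0 ≤ ‖x - y‖ ^ η := by positivity
  suffices ‖iteratedFDeriv ℝ k f x - iteratedFDeriv ℝ k f y‖ ≤ N * ‖x - y‖ ^ η by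
    nlinarith [mul_nonneg hN hpos]
  rcases hk.eq_or_lt with rfl | hlt
  · refine (h.quot x y).trans ?_
    gcongr ?_ * ?_
    exact Real.rpow_le_rpow_of_exponent_ge h0 h1 (hkη rfl)
  · have hd : Differentiable ℝ (iteratedFDeriv ℝ k f) :=
      h.smooth.differentiable_iteratedFDeriv (by exact_mod_cast hlt)
    have := convex_univ.norm_image_sub_le_of_norm_fderiv_le (𝕜 := ℝ)
      (f := iteratedFDeriv ℝ k f) (C := N) (fun z _ => hd z)
      (fun z _ => by
        rw [norm_fderiv_iteratedFDeriv]
        exact h.sup (k + 1) hlt z) (Set.mem_univ y) (Set.mem_univ x)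
    refine this.trans ?_
    gcongr
    simpa using Real.rpow_le_rpow_of_exponent_ge h0 h1 hη1

lemma mono (h : HolderBound n M θ N f) {k : ℕ} (hk : k ≤ M) {η : ℝ} (hη : 0 ≤ η)
    (hη1 : η ≤ 1) (hkη : k = M → η ≤ θ) : HolderBound n k η (2 * N) f where
  smooth := h.smooth.of_le (by exact_mod_cast hk)
  sup j hj x := by linarith [h.sup j (hj.trans hk) x, h.nonneg]
  quot x y := h.increment hk hη hη1 hkη x y

lemma comp_smul (h : HolderBound n M θ N f) (hθ : 0 ≤ θ) {r : ℝ} (hr : 0 < r) (hr1 : r ≤ 1) :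
    HolderBound n M θ N (fun x => f (r • x)) := by
  have key : ∀ k ≤ M, iteratedFDeriv ℝ k (fun x => f (r • x)) =
      fun x => r ^ k • iteratedFDeriv ℝ k f (r • x) := fun k hk =>
    iteratedFDeriv_comp_const_smul r (h.contDiff_nat hk)
  have hrk : ∀ k, ‖r ^ k‖ ≤ 1 := fun k => by
    rw [norm_pow, Real.norm_of_nonneg hr.le]
    exact pow_le_one₀ hr.le hr1
  have hN := h.nonneg
  refine ⟨h.smooth.comp (contDiff_const_smul r), fun k hk x => ?_, fun x y => ?_⟩
  · rw [key k hk, norm_smul]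
    exact (mul_le_of_le_one_left (norm_nonneg _) (hrk k)).trans (h.sup k hk _)
  · rw [key M le_rfl]
    dsimp only
    rw [← smul_sub, norm_smul]
    refine (mul_le_of_le_one_left (norm_nonneg _) (hrk M)).trans ((h.quot _ _).trans ?_)
    rw [← smul_sub, norm_smul, Real.norm_of_nonneg hr.le]
    gcongr
    exact mul_le_of_le_one_left (norm_nonneg _) hr1

end HolderBound

/-! ### Products -/

/-- The Leibniz rule with uniform bounds on the factors. -/
lemma norm_iteratedFDeriv_mul_le_two_pow {n k : ℕ} {f g : Euc n → ℂ} (hf : ContDiff ℝ k f)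
    (hg : ContDiff ℝ k g) (x : Euc n) {A B : ℝ}
    (hA : ∀ i ≤ k, ‖iteratedFDeriv ℝ i f x‖ ≤ A) (hB : ∀ i ≤ k, ‖iteratedFDeriv ℝ i g x‖ ≤ B) :
    ‖iteratedFDeriv ℝ k (fun y => f y * g y) x‖ ≤ 2 ^ k * (A * B) := by
  refine (norm_iteratedFDeriv_mul_le hf hg x le_rfl).trans ?_
  have hA0 : 0 ≤ A := (norm_nonneg _).trans (hA 0 (Nat.zero_le _))
  calc _ ≤ ∑ i ∈ Finset.range (k + 1), (k.choose i : ℝ) * (A * B) := by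
        refine Finset.sum_le_sum fun i hi => ?_
        rw [mul_assoc]
        gcongr
        · exact hA i (Nat.lt_succ_iff.1 (Finset.mem_range.1 hi))
        · exact hB _ (Nat.sub_le _ _)
    _ = 2 ^ k * (A * B) := by
        rw [← Finset.sum_mul]
        congr 1
        exact_mod_cast Nat.sum_range_choose k

lemma HolderBound.mul {n M : ℕ} {θ A B : ℝ} {f g : Euc n → ℂ} (hθ : 0 ≤ θ) (hθ1 : θ ≤ 1)
    (hf : HolderBound n M θ A f) (hg : HolderBound n M θ B g) :
    HolderBound n M θ (4 * 2 ^ M * (A * B)) (fun x => f x * g x) := by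
  have hA := hf.nonneg
  have hB := hg.nonneg
  refine ⟨hf.smooth.mul hg.smooth, fun k hk x => ?_, fun x y => ?_⟩
  · refine (norm_iteratedFDeriv_mul_le_two_pow (hf.contDiff_nat hk) (hg.contDiff_nat hk) x
      (fun i hi => hf.sup i (hi.trans hk) x) (fun i hi => hg.sup i (hi.trans hk) x)).trans ?_
    have h2 : (2 : ℝ) ^ k ≤ 4 * 2 ^ M := by
      have := pow_le_pow_right₀ (one_le_two (α := ℝ)) hk
      have : (0 : ℝ) < 2 ^ M := by positivity
      linarith
    gcongr
  · -- `F`, `G` are the translates by `τ = x - y`; all derivatives are taken at `y`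
    set F : Euc n → ℂ := fun z => f (z + (x - y)) with hF
    set G : Euc n → ℂ := fun z => g (z + (x - y)) with hG
    have hFx : ∀ i, iteratedFDeriv ℝ i F y = iteratedFDeriv ℝ i f x := fun i => by
      rw [hF, iteratedFDeriv_comp_add_right]
      simp
    have hGx : ∀ i, iteratedFDeriv ℝ i G y = iteratedFDeriv ℝ i g x := fun i => by
      rw [hG, iteratedFDeriv_comp_add_right]
      simp
    have cf : ∀ i ≤ M, ContDiff ℝ i f := fun i hi => hf.contDiff_nat hi
    have cg : ∀ i ≤ M, ContDiff ℝ i g := fun i hi => hg.contDiff_nat hi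
    have cF : ∀ i ≤ M, ContDiff ℝ i F := fun i hi =>
      (cf i hi).comp (contDiff_id.add contDiff_const)
    have cG : ∀ i ≤ M, ContDiff ℝ i G := fun i hi =>
      (cg i hi).comp (contDiff_id.add contDiff_const)
    have cFf := (cF M le_rfl).sub (cf M le_rfl)
    have cGg := (cG M le_rfl).sub (cg M le_rfl)
    have e1 : iteratedFDeriv ℝ M (fun z => f z * g z) x =
        iteratedFDeriv ℝ M (fun z => F z * G z) y := by
      have := iteratedFDeriv_comp_add_right (𝕜 := ℝ) (f := fun z => f z * g z) M (x - y) y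
      rw [add_sub_cancel] at this
      exact this.symm
    have e2 : iteratedFDeriv ℝ M (fun z => F z * G z) y - iteratedFDeriv ℝ M (fun z => f z * g z) y
        = iteratedFDeriv ℝ M (fun z => (F z - f z) * G z) y
          + iteratedFDeriv ℝ M (fun z => f z * (G z - g z)) y := by
      rw [← fun_iteratedFDeriv_sub_apply
          ((cF M le_rfl).mul (cG M le_rfl)).contDiffAt ((cf M le_rfl).mul (cg M le_rfl)).contDiffAt,
        ← fun_iteratedFDeriv_add_apply
          (cFf.mul (cG M le_rfl)).contDiffAt ((cf M le_rfl).mul cGg).contDiffAt]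
      congr 1
      funext z
      ring
    have dF : ∀ i ≤ M, ‖iteratedFDeriv ℝ i (fun z => F z - f z) y‖ ≤ 2 * A * ‖x - y‖ ^ θ := by
      intro i hi
      rw [fun_iteratedFDeriv_sub_apply (cF i hi).contDiffAt (cf i hi).contDiffAt, hFx]
      exact hf.increment hi hθ hθ1 (fun _ => le_rfl) x y
    have dG : ∀ i ≤ M, ‖iteratedFDeriv ℝ i (fun z => G z - g z) y‖ ≤ 2 * B * ‖x - y‖ ^ θ := by
      intro i hi
      rw [fun_iteratedFDeriv_sub_apply (cG i hi).contDiffAt (cg i hi).contDiffAt, hGx]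
      exact hg.increment hi hθ hθ1 (fun _ => le_rfl) x y
    rw [e1, e2]
    refine (norm_add_le _ _).trans ((add_le_add
      (norm_iteratedFDeriv_mul_le_two_pow cFf (cG M le_rfl) y dF
        (fun i hi => by rw [hGx]; exact hg.sup i hi x))
      (norm_iteratedFDeriv_mul_le_two_pow (cf M le_rfl) cGg y
        (fun i hi => hf.sup i hi y) dG)).trans (le_of_eq ?_))
    ring

/-! ### Comparison with the Hölder norm -/

section Bridge

variable {n : ℕ} {s : ℝ} {f : Euc n → ℂ}

lemma natCast_ceil_sub_one (hs : 0 < s) : ((⌈s⌉₊ - 1 : ℕ) : ℝ) = (⌈s⌉₊ : ℝ) - 1 := by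
  have : 1 ≤ ⌈s⌉₊ := Nat.one_le_iff_ne_zero.2 (Nat.ceil_pos.2 hs).ne'
  push_cast [Nat.cast_sub this]
  ring

lemma holderExponent_pos (hs : 0 < s) : 0 < s - ((⌈s⌉₊ : ℝ) - 1) := by
  linarith [Nat.ceil_lt_add_one hs.le]

lemma holderExponent_le_one : s - ((⌈s⌉₊ : ℝ) - 1) ≤ 1 := by
  linarith [Nat.le_ceil s]

lemma HolderBound.of_holderNorm_le (hs : 0 < s) (hf : holderSmooth n s f) {N : ℝ} (hN : 0 ≤ N)
    (h : holderNorm n s f ≤ ENNReal.ofReal N) :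
    HolderBound n (⌈s⌉₊ - 1) (s - ((⌈s⌉₊ : ℝ) - 1)) N f := by
  have hc : 0 < ⌈s⌉₊ := Nat.ceil_pos.2 hs
  rw [holderNorm, if_neg hs.ne'] at h
  refine ⟨hf.2 hs.ne', fun k hk x => ?_, fun x y => ?_⟩
  · have h1 := (Finset.single_le_sum
      (f := fun k => ⨆ x : Euc n, (‖iteratedFDeriv ℝ k f x‖₊ : ℝ≥0∞))
      (fun _ _ => zero_le) (Finset.mem_range.2 (show k < ⌈s⌉₊ by omega))).trans
      (le_self_add.trans h)
    have h2 := (le_iSup (fun x : Euc n => (‖iteratedFDeriv ℝ k f x‖₊ : ℝ≥0∞)) x).trans h1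
    rw [← ENNReal.ofReal_coe_nnreal, coe_nnnorm] at h2
    exact (ENNReal.ofReal_le_ofReal_iff hN).1 h2
  · rcases eq_or_ne x y with rfl | hxy
    · simp only [sub_self, norm_zero]
      positivity
    have h1 := (le_iSup (fun q : Euc n × Euc n => if q.1 = q.2 then (0 : ℝ≥0∞)
        else (‖iteratedFDeriv ℝ (⌈s⌉₊ - 1) f q.1 - iteratedFDeriv ℝ (⌈s⌉₊ - 1) f q.2‖₊ : ℝ≥0∞) /
          ENNReal.ofReal (‖q.1 - q.2‖ ^ (s - ((⌈s⌉₊ : ℝ) - 1)))) (x, y)).trans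
        (le_add_self.trans h)
    have h0 : 0 < ‖x - y‖ ^ (s - ((⌈s⌉₊ : ℝ) - 1)) :=
      Real.rpow_pos_of_pos (norm_pos_iff.2 (sub_ne_zero.2 hxy)) _
    simp only [hxy, if_false] at h1
    rw [ENNReal.div_le_iff (ENNReal.ofReal_pos.2 h0).ne' ENNReal.ofReal_ne_top,
      ← ENNReal.ofReal_mul hN, ← ENNReal.ofReal_coe_nnreal, coe_nnnorm] at h1
    exact (ENNReal.ofReal_le_ofReal_iff (by positivity)).1 h1

lemma HolderBound.of_mem (hs : 0 < s) (hf : MemHolderSpace n s f) :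
    HolderBound n (⌈s⌉₊ - 1) (s - ((⌈s⌉₊ : ℝ) - 1)) (holderNorm n s f).toReal f :=
  .of_holderNorm_le hs hf.1 ENNReal.toReal_nonneg (ENNReal.ofReal_toReal hf.2.ne).ge

lemma HolderBound.holderSmooth (hs : 0 < s) {N : ℝ}
    (h : HolderBound n (⌈s⌉₊ - 1) (s - ((⌈s⌉₊ : ℝ) - 1)) N f) : holderSmooth n s f :=
  ⟨fun h0 => absurd h0 hs.ne', fun _ => h.smooth⟩

/-- The converse of `HolderBound.of_holderNorm_le`; the factor counts the `⌈s⌉₊` suprema and the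
Hölder seminorm that are added up in `holderNorm`. -/
lemma HolderBound.holderNorm_le (hs : 0 < s) {N : ℝ}
    (h : HolderBound n (⌈s⌉₊ - 1) (s - ((⌈s⌉₊ : ℝ) - 1)) N f) :
    holderNorm n s f ≤ ENNReal.ofReal ((⌈s⌉₊ + 1) * N) := by
  have hN := h.nonneg
  rw [holderNorm, if_neg hs.ne', add_mul, one_mul, ENNReal.ofReal_add (by positivity) hN]
  refine add_le_add ?_ (iSup_le fun q => ?_)
  · rw [ENNReal.ofReal_mul (by positivity), ENNReal.ofReal_natCast]
    refine (Finset.sum_le_card_nsmul _ _ (ENNReal.ofReal N) fun k hk => iSup_le fun x => ?_).trans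
      (by simp)
    rw [← ENNReal.ofReal_coe_nnreal, coe_nnnorm]
    have := Finset.mem_range.1 hk
    exact ENNReal.ofReal_le_ofReal (h.sup k (by omega) x)
  · split_ifs with hq
    · exact zero_le
    have h0 : 0 < ‖q.1 - q.2‖ ^ (s - ((⌈s⌉₊ : ℝ) - 1)) :=
      Real.rpow_pos_of_pos (norm_pos_iff.2 (sub_ne_zero.2 hq)) _
    rw [ENNReal.div_le_iff (ENNReal.ofReal_pos.2 h0).ne' ENNReal.ofReal_ne_top,
      ← ENNReal.ofReal_mul hN, ← ENNReal.ofReal_coe_nnreal, coe_nnnorm]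
    exact ENNReal.ofReal_le_ofReal (h.quot _ _)

/-- The embedding of `𝒞ˢ` into `𝒞ᵗ` for `0 < t ≤ s`. -/
lemma HolderBound.of_le {t N : ℝ} (ht : 0 < t) (hts : t ≤ s)
    (h : HolderBound n (⌈s⌉₊ - 1) (s - ((⌈s⌉₊ : ℝ) - 1)) N f) :
    HolderBound n (⌈t⌉₊ - 1) (t - ((⌈t⌉₊ : ℝ) - 1)) (2 * N) f := by
  refine h.mono (Nat.sub_le_sub_right (Nat.ceil_mono hts) 1) (holderExponent_pos ht).le
    holderExponent_le_one fun he => ?_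
  rw [← natCast_ceil_sub_one ht, ← natCast_ceil_sub_one (ht.trans_le hts), he]
  linarith

end Bridge

/-! ### Atoms -/

/-- The product estimate in `𝒞ᵗ`, with one factor in the smaller space `𝒞ˢ`. -/
lemma HolderBound.mul_of_le {n : ℕ} {s t A B : ℝ} {f g : Euc n → ℂ} (ht : 0 < t) (hts : t ≤ s)
    (hf : HolderBound n (⌈s⌉₊ - 1) (s - ((⌈s⌉₊ : ℝ) - 1)) A f)
    (hg : HolderBound n (⌈t⌉₊ - 1) (t - ((⌈t⌉₊ : ℝ) - 1)) B g) :
    HolderBound n (⌈t⌉₊ - 1) (t - ((⌈t⌉₊ : ℝ) - 1)) (4 * 2 ^ (⌈t⌉₊ - 1) * (2 * A * B))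
      (fun x => f x * g x) :=
  .mul (holderExponent_pos ht).le holderExponent_le_one (hf.of_le ht hts) hg

/-- Multiplication of atoms by Hölder functions: there is `c > 0` (independent of `ν, m, a, φ`)
such that for every `(s,p)_{K,L}`-atom `a` located at `Q_{ν,m}` with constants `d, C` and
every `φ ∈ 𝒞^ρ(ℝⁿ)` with `ρ ≥ max(K,L)`, the product `φ·a` is an `(s,p)_{K,L}`-atom located
at `Q_{ν,m}` with constants `d` and `c·C·‖φ|𝒞^ρ‖`. -/
theorem statement_11 (n : ℕ) (s : ℝ) (p : ℝ≥0∞) (hp : 0 < p) (K L ρ : ℝ)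
    (hK : 0 < K) (hL : 0 < L) (hρ : max K L ≤ ρ) :
    ∃ c > (0:ℝ), ∀ (ν : ℕ) (m : Fin n → ℤ) (d C : ℝ), 1 < d → 0 < C →
      ∀ a : Euc n → ℂ, IsSpAtom n s p K L d C ν m a →
      ∀ φ : Euc n → ℂ, MemHolderSpace n ρ φ →
        IsSpAtom n s p K L d (c * C * (holderNorm n ρ φ).toReal) ν m
          (fun x => φ x * a x) := by
  have hKρ : K ≤ ρ := (le_max_left _ _).trans hρ
  have hLρ : L ≤ ρ := (le_max_right _ _).trans hρ
  have hρ0 : 0 < ρ := hK.trans_le hKρ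
  -- the constants of the product estimates in `𝒞ᴷ` and `𝒞ᴸ`
  set cK : ℝ := ((⌈K⌉₊ : ℝ) + 1) * (4 * 2 ^ (⌈K⌉₊ - 1) * 2) with hcK
  set cL : ℝ := ((⌈L⌉₊ : ℝ) + 1) * (4 * 2 ^ (⌈L⌉₊ - 1) * 2) with hcL
  have hcK0 : 0 < cK := by positivity
  have hcL0 : 0 < cL := by positivity
  refine ⟨cK + cL, by positivity, fun ν m d C hd hC a ha φ hφ => ?_⟩
  obtain ⟨hsupp, hsm, hnorm, hmom⟩ := ha
  set N : ℝ := (holderNorm n ρ φ).toReal with hN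
  have hN0 : 0 ≤ N := ENNReal.toReal_nonneg
  have hφb := HolderBound.of_mem hρ0 hφ
  have hr : (0 : ℝ) < 2 ^ (-(ν : ℤ)) := by positivity
  have hr1 : (2 : ℝ) ^ (-(ν : ℤ)) ≤ 1 := zpow_le_one_of_nonpos₀ one_le_two (by simp)
  have hab := HolderBound.of_holderNorm_le hK hsm (by positivity) hnorm
  have hprod := (hφb.comp_smul (holderExponent_pos hρ0).le hr hr1).mul_of_le hK hKρ hab
  refine ⟨fun x hx => hsupp (right_ne_zero_of_mul hx), hprod.holderSmooth hK,
    (hprod.holderNorm_le hK).trans (ENNReal.ofReal_le_ofReal ?_), fun ψ hψ => ?_⟩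
  · set P : ℝ := (2 : ℝ) ^ (-(ν : ℝ) * (s - n * (p⁻¹).toReal)) with hP
    have hP0 : 0 < P := by positivity
    calc _ = cK * C * N * P := by rw [hcK]; ring
      _ ≤ (cK + cL) * C * N * P := by gcongr; linarith
  · have hψb := hφb.mul_of_le hL hLρ (HolderBound.of_mem hL hψ)
    have hle := hψb.holderNorm_le hL
    have hb := hmom (fun x => φ x * ψ x) ⟨hψb.holderSmooth hL, hle.trans_lt ENNReal.ofReal_lt_top⟩
    have hle' := ENNReal.toReal_le_of_le_ofReal
      (mul_nonneg (by positivity) hψb.nonneg) hle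
    have he : ∀ x, ψ x * (φ x * a x) = φ x * ψ x * a x := fun x => by ring
    simp_rw [he]
    set P : ℝ := (2 : ℝ) ^ (-(ν : ℝ) * (s + L + n * (1 - (p⁻¹).toReal))) with hP
    have hP0 : 0 < P := by positivity
    set R : ℝ := (holderNorm n L ψ).toReal with hR
    have hR0 : 0 ≤ R := ENNReal.toReal_nonneg
    refine hb.trans ((mul_le_mul_of_nonneg_left hle' (by positivity)).trans ?_)
    calc _ = cL * C * N * P * R := by rw [hcL]; ring
      _ ≤ (cK + cL) * C * N * P * R := by gcongr; linarith
end
end
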